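/- For all constants K, K', K'' > 0 and β ≥ 0 there exists a constant C_β > 0 (depending only on β, K, K', K'') such that the following holds. Let n, d ∈ ℕ with n ≥ 2, d ≤ n² and d ≥ (log n)^8, let W satisfy Assumptions 1–4 with constants K, K', β, and assume in addition that η has nonnegative entries, every row sum and every column sum of η is equal to 1 (η doubly stochastic), and s_2(η) ≤ K''/√d. Let W_1,…,W_d be independent copies of W and set M_Φ = (1/d) ∑_{s=1}^d W_s ⊗ conj(W_s) ∈ M_{n²}(ℂ). Then with probability at least 1 − C_β/n, M_Φ has an eigenvalue μ (a root of its characteristic polynomial) with |μ| ≥ 1 − C_β/√d; equivalently, the spectral radius of M_Φ is at least 1 − C_β/√d. -/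

import Mathlib

open MeasureTheory ProbabilityTheory Matrix
open scoped Kronecker ENNReal

/-- The (Borel) measurable space structure on matrices, obtained entrywise. -/
noncomputable instance matrixMeasurableSpace {m n α : Type*} [MeasurableSpace α] :
    MeasurableSpace (Matrix m n α) :=
  inferInstanceAs (MeasurableSpace (m → n → α))

/-- The ℓ²→ℓ² operator norm of a square matrix over `ℝ` or `ℂ`. -/
noncomputable def Matrix.opNorm2 {𝕜 : Type*} [RCLike 𝕜] {n : Type*} [Fintype n] [DecidableEq n]
    (A : Matrix n n 𝕜) : ℝ :=
  ‖LinearMap.toContinuousLinearMap (Matrix.toEuclideanLin A)‖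

/-- `Matrix.sval A k` is the `(k+1)`-st largest singular value of `A`, characterized via
best approximation in operator norm by matrices of rank at most `k`
(the Eckart–Young–Mirsky theorem); in particular `Matrix.sval A 0` is the largest singular
value `s_1(A)` and `Matrix.sval A 1` is the second largest singular value `s_2(A)`. -/
noncomputable def Matrix.sval {𝕜 : Type*} [RCLike 𝕜] {n : Type*} [Fintype n] [DecidableEq n]
    (A : Matrix n n 𝕜) (k : ℕ) : ℝ :=
  ⨅ B : {B : Matrix n n 𝕜 // B.rank ≤ k}, Matrix.opNorm2 (A - B.1)

/-- Entrywise expectation of a random matrix. -/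
noncomputable def matExp {Ω : Type*} [MeasurableSpace Ω] (μ : Measure Ω)
    {m n : Type*} (W : Ω → Matrix m n ℂ) : Matrix m n ℂ :=
  Matrix.of fun i j => ∫ ω, W ω i j ∂μ

/-- Assumptions 1–4 of the paper on an `n × n` random matrix `W` with variance profile `η`,
with constants `K` (Assumption 3), `K'` (Assumption 4) and parameter `β ≥ 0`:
the entries are independent, centered, have variances `η i j`, the variance matrix `η` is
doubly sub-stochastic, the entries satisfy the moment growth condition
`(E|W_{ij}|^{2p})^{1/p} ≤ K p^β η_{ij}`, and `max η_{ij} ≤ K'/(log n)^{α_β}` where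
`α_β = max (β/2) 2`. (Membership in every `L^p` is included so that all moments exist.) -/
structure PaperAssumptions {Ω : Type*} [MeasurableSpace Ω] (μ : Measure Ω)
    (n : ℕ) (K K' β : ℝ) (η : Matrix (Fin n) (Fin n) ℝ)
    (W : Ω → Matrix (Fin n) (Fin n) ℂ) : Prop where
  entries_indep : iIndepFun
      (fun (p : Fin n × Fin n) ω => W ω p.1 p.2) μ
  entries_memLp : ∀ i j (p : ℕ), MemLp (fun ω => W ω i j) p μ
  entries_centered : ∀ i j, ∫ ω, W ω i j ∂μ = 0
  entries_variance : ∀ i j, ∫ ω, ‖W ω i j‖ ^ 2 ∂μ = η i j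
  row_sums : ∀ i, ∑ j, η i j ≤ 1
  col_sums : ∀ j, ∑ i, η i j ≤ 1
  moment_growth : ∀ p : ℕ, 1 ≤ p → ∀ i j,
      (∫ ω, ‖W ω i j‖ ^ (2 * p) ∂μ) ^ ((1 : ℝ) / p) ≤ K * (p : ℝ) ^ β * η i j
  max_variance : ∀ i j, η i j ≤ K' / Real.log n ^ max (β / 2) 2

section
/-- existence of a median -/
lemma leb_median {n : ℕ} (hn : 0 < n) (x : Fin n → ℝ) : ∃ a : Fin n,
    (n:ℝ) ≤ 2 * ((Finset.univ.filter fun b => x b ≤ x a).card : ℝ) ∧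
    (n:ℝ) ≤ 2 * ((Finset.univ.filter fun b => x a ≤ x b).card : ℝ) := by
  classical
  haveI : Nonempty (Fin n) := ⟨⟨0, hn⟩⟩
  set S : Finset (Fin n) := Finset.univ.filter fun a =>
    n ≤ 2 * (Finset.univ.filter fun b => x b ≤ x a).card with hS
  obtain ⟨m, -, hm⟩ := Finset.exists_max_image Finset.univ x Finset.univ_nonempty
  have hSne : S.Nonempty := by
    refine ⟨m, ?_⟩
    have : (Finset.univ.filter fun b => x b ≤ x m) = Finset.univ := by
      ext b; simp [hm b (Finset.mem_univ b)]
    simp only [hS, Finset.mem_filter, Finset.mem_univ, true_and, this, Finset.card_univ,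
      Fintype.card_fin]
    omega
  obtain ⟨a, haS, ha⟩ := Finset.exists_min_image S x hSne
  refine ⟨a, ?_, ?_⟩
  · have := (Finset.mem_filter.1 haS).2
    exact_mod_cast this
  · have hsplit : (Finset.univ.filter fun b => x b < x a).card
        + (Finset.univ.filter fun b => x a ≤ x b).card = n := by
      have := Finset.card_filter_add_card_filter_not (s := (Finset.univ : Finset (Fin n)))
        (fun b => x b < x a)
      simp only [not_lt, Finset.card_univ, Fintype.card_fin] at this
      exact this
    have hlt : 2 * (Finset.univ.filter fun b => x b < x a).card ≤ n := by
      by_contra hcon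
      push Not at hcon
      set T := Finset.univ.filter fun b => x b < x a with hT
      have hTne : T.Nonempty := by
        rw [← Finset.card_pos]; omega
      obtain ⟨b, hbT, hb⟩ := Finset.exists_max_image T x hTne
      have hbS : b ∈ S := by
        simp only [hS, Finset.mem_filter, Finset.mem_univ, true_and]
        have : T ⊆ Finset.univ.filter fun c => x c ≤ x b := by
          intro c hc
          simp [hb c hc]
        have := Finset.card_le_card this
        omega
      have h1 := ha b hbS
      have h2 := (Finset.mem_filter.1 hbT).2
      linarith
    have : n ≤ 2 * (Finset.univ.filter fun b => x a ≤ x b).card := by omega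
    exact_mod_cast this

/-- clipping to `[1/20, 20]` -/
noncomputable def lebClip (x : ℝ) : ℝ := max (1/20) (min 20 x)

lemma lebClip_lo (x : ℝ) : 1/20 ≤ lebClip x := le_max_left _ _
lemma lebClip_hi (x : ℝ) : lebClip x ≤ 20 := by
  unfold lebClip; exact max_le (by norm_num) (min_le_left _ _)
lemma lebClip_pos (x : ℝ) : 0 < lebClip x := lt_of_lt_of_le (by norm_num) (lebClip_lo x)

lemma leb_clip_ratio {s t : ℝ} (hs : 0 < s) (ht : 0 < t) :
    lebClip t / lebClip s - (if 20 < s then 1 else 0) - (if t < 1/20 then 1 else 0) ≤ t / s := by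
  have hs' := lebClip_pos s
  have ht' := lebClip_pos t
  have hts : 0 < t / s := div_pos ht hs
  by_cases h : s ≤ t
  · have key : lebClip t / lebClip s ≤ t / s := by
      rw [div_le_div_iff₀ hs' hs]
      unfold lebClip
      rcases max_cases (1/20) (min 20 t) with ⟨h1, h1'⟩ | ⟨h1, h1'⟩ <;>
      rcases max_cases (1/20) (min 20 s) with ⟨h2, h2'⟩ | ⟨h2, h2'⟩ <;>
      rcases min_cases 20 t with ⟨h3, h3'⟩ | ⟨h3, h3'⟩ <;>
      rcases min_cases 20 s with ⟨h4, h4'⟩ | ⟨h4, h4'⟩ <;>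
      rw [h1, h2] <;> simp only [h3, h4] at * <;> nlinarith
    split_ifs <;> linarith
  · push Not at h
    have hmono : lebClip t ≤ lebClip s := by
      unfold lebClip
      exact max_le_max le_rfl (min_le_min le_rfl h.le)
    have h1 : lebClip t / lebClip s ≤ 1 := (div_le_one hs').2 hmono
    by_cases h20 : 20 < s
    · simp only [h20, if_true]; split_ifs <;> linarith
    · by_cases h05 : t < 1/20
      · simp only [h05, if_true]; split_ifs <;> linarith
      · have e1 : lebClip s = s := by
          unfold lebClip
          rw [min_eq_right (by linarith), max_eq_right (by linarith)]
        have e2 : lebClip t = t := by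
          unfold lebClip
          rw [min_eq_right (by linarith), max_eq_right (by linarith)]
        rw [e1, e2, if_neg h20, if_neg h05]; simp

lemma leb_h1 {a b : ℝ} (ha : 0 < a) (ha' : a ≤ 20) (hb : 0 < b) (hb' : b ≤ 20) : a * b ≤ 400 := by
  nlinarith
lemma leb_h2 {c g w v p m r : ℝ} (h3 : (c - g) * (w * v - p - m) ≤ (c - g) * r)
    (h5 : g * (w * v) ≤ g * 400) (h6 : 0 ≤ g * p) (h7 : 0 ≤ g * m) :
    w * c * v - 400 * g - p * c * 1 - 1 * c * m ≤ (c - g) * r := by nlinarith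
lemma leb_h3 {w v : ℝ} (h : w * v = 1) (hv : v ≤ 20) (hw : 0 < w) : 1/20 ≤ w := by nlinarith
lemma leb_h4 {a b : ℝ} (ha : 1/20 ≤ a) (hb : 1/20 ≤ b) : 1/400 ≤ a * b := by nlinarith
lemma leb_h5 {z a : ℝ} (h : 1/400 ≤ a) : z^2 ≤ 800 * (z^2 * a / 2) := by nlinarith [sq_nonneg z]
lemma leb_h6 {w v : ℝ} (h : w * v = 1) (hv : v ≤ 1) (hw : 0 < w) : 1 ≤ w := by nlinarith
lemma leb_h7 {a T e : ℝ} (ha : 0 ≤ a) (ha' : a ≤ 20) (h : a * -e ≤ a * T) (he : 0 ≤ e) :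
    -(20 * e) ≤ a * T := by nlinarith
lemma leb_h8 {n P Q : ℝ} (h : 9/2 * n * P ≤ n^2 * Q) : n * (9/2 * P) ≤ n * (n * Q) := by nlinarith
lemma leb_h9 {n Q S T : ℝ} (h1 : T = 2 * n * S) (h2 : T ≤ 800 * (n^2 * Q)) :
    2 * n * S ≤ 2 * n * (400 * n * Q) := by rw [← h1]; nlinarith

set_option maxHeartbeats 1000000 in
lemma leb_D_aux {n : ℕ} (hn : 0 < n) (y : Fin n → ℝ) (hy : ∀ a, 0 < y a)
    (hlo : (n:ℝ) ≤ 2 * ((Finset.univ.filter fun b => y b ≤ 1).card : ℝ))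
    (hhi : (n:ℝ) ≤ 2 * ((Finset.univ.filter fun b => 1 ≤ y b).card : ℝ))
    (c g : Fin n → Fin n → ℝ)
    (ε γ δ : ℝ) (hε : 0 < ε) (hε' : 400 * ε ≤ 1/8) (hγ' : γ ≤ 1/8)
    (hg0 : ∀ a b, 0 ≤ g a b) (hgc : ∀ a b, g a b ≤ c a b)
    (hδ : ∑ a, ∑ b, g a b ≤ δ * n)
    (hγ : n * (1 - γ) ≤ ∑ a, ∑ b, c a b)
    (hgap : ∀ s : ℝ, 0 < s → ∀ u z : Fin n → ℝ,
      |∑ a, ∑ b, u a * c a b * z b - (∑ a, u a) * (∑ b, z b) / n|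
        ≤ ε / 2 * (s * ∑ a, u a ^ 2 + (∑ b, z b ^ 2) / s)) :
    n * (1 - γ - 640001 * ε ^ 2 - 400 * δ) ≤ ∑ a, ∑ b, (c a b - g a b) * (y b / y a) := by
  classical
  have hn' : (0:ℝ) < n := by exact_mod_cast hn
  set v : Fin n → ℝ := fun a => lebClip (y a) with hv
  set w : Fin n → ℝ := fun a => (lebClip (y a))⁻¹ with hw
  have hvpos : ∀ a, 0 < v a := fun a => lebClip_pos _
  have hvlo : ∀ a, 1/20 ≤ v a := fun a => lebClip_lo _
  have hvhi : ∀ a, v a ≤ 20 := fun a => lebClip_hi _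
  have hwpos : ∀ a, 0 < w a := fun a => inv_pos.2 (lebClip_pos _)
  have hwhi : ∀ a, w a ≤ 20 := fun a => by
    have := inv_anti₀ (by norm_num) (hvlo a)
    simpa using this
  have hwv : ∀ a, w a * v a = 1 := fun a => inv_mul_cancel₀ (hvpos a).ne'
  set ip : Fin n → ℝ := fun a => if 20 < y a then 1 else 0 with hip
  set im : Fin n → ℝ := fun a => if y a < 1/20 then 1 else 0 with him
  have hip2 : ∀ a, ip a ^ 2 = ip a := fun a => by simp only [hip]; split_ifs <;> simp
  have him2 : ∀ a, im a ^ 2 = im a := fun a => by simp only [him]; split_ifs <;> simp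
  have hip0 : ∀ a, 0 ≤ ip a := fun a => by simp only [hip]; split_ifs <;> simp
  have him0 : ∀ a, 0 ≤ im a := fun a => by simp only [him]; split_ifs <;> simp
  set P : ℝ := ∑ a, ip a with hP
  set M : ℝ := ∑ a, im a with hM
  have hP0 : 0 ≤ P := Finset.sum_nonneg fun a _ => hip0 a
  have hM0 : 0 ≤ M := Finset.sum_nonneg fun a _ => him0 a
  -- row and column masses
  have hrow : ∑ a, ∑ b, ip a * c a b * 1 ≤ 3/2 * P + ε^2 * n / 2 := by
    have h := (abs_le.1 (hgap (1/ε) (by positivity) ip (fun _ => 1))).2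
    simp only [hip2, Finset.sum_const, Finset.card_univ, Fintype.card_fin, nsmul_eq_mul, one_pow,
      mul_one] at h
    rw [← hP] at h
    have e1 : P * (n:ℝ) / n = P := by field_simp
    have e2 : ε / 2 * (1 / ε * P + n / (1/ε)) = P / 2 + ε^2 * n / 2 := by field_simp
    rw [e1, e2] at h
    simp only [mul_one]
    linarith
  have hcol : ∑ a, ∑ b, 1 * c a b * im b ≤ 3/2 * M + ε^2 * n / 2 := by
    have h := (abs_le.1 (hgap ε hε (fun _ => 1) im)).2
    simp only [him2, Finset.sum_const, Finset.card_univ, Fintype.card_fin, nsmul_eq_mul, one_pow,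
      mul_one] at h
    rw [← hM] at h
    have e1 : (n:ℝ) * M / n = M := by field_simp
    have e2 : ε / 2 * (ε * n + M / ε) = M / 2 + ε^2 * n / 2 := by field_simp; ring
    rw [e1, e2] at h
    linarith
  -- pointwise
  have hpt : ∀ a b, w a * c a b * v b - 400 * g a b - ip a * c a b * 1 - 1 * c a b * im b
      ≤ (c a b - g a b) * (y b / y a) := by
    intro a b
    have h1 := leb_clip_ratio (hy a) (hy b)
    have h2 : lebClip (y b) / lebClip (y a) = w a * v b := by
      simp only [hw, hv]; rw [div_eq_mul_inv, mul_comm]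
    rw [h2] at h1
    have h3 : (c a b - g a b) * (w a * v b - ip a - im b) ≤ (c a b - g a b) * (y b / y a) :=
      mul_le_mul_of_nonneg_left h1 (by linarith [hgc a b])
    have h4 : w a * v b ≤ 400 := leb_h1 (hwpos a) (hwhi a) (hvpos b) (hvhi b)
    have h5 : g a b * (w a * v b) ≤ g a b * 400 := mul_le_mul_of_nonneg_left h4 (hg0 a b)
    exact leb_h2 h3 h5 (mul_nonneg (hg0 a b) (hip0 a)) (mul_nonneg (hg0 a b) (him0 b))
  have hsum1 : ∑ a, ∑ b, w a * c a b * v b - 400 * ∑ a, ∑ b, g a b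
      - ∑ a, ∑ b, ip a * c a b * 1 - ∑ a, ∑ b, 1 * c a b * im b
      ≤ ∑ a, ∑ b, (c a b - g a b) * (y b / y a) := by
    have := Finset.sum_le_sum fun a (_ : a ∈ Finset.univ) =>
      Finset.sum_le_sum fun b (_ : b ∈ Finset.univ) => hpt a b
    refine le_trans (le_of_eq ?_) this
    simp only [Finset.sum_sub_distrib, Finset.mul_sum]
  -- means
  set vb : ℝ := (∑ a, v a) / n with hvb
  set wb : ℝ := (∑ a, w a) / n with hwb
  have hvs : ∑ a, v a = n * vb := by rw [hvb]; field_simp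
  have hws : ∑ a, w a = n * wb := by rw [hwb]; field_simp
  have hvb0 : 0 ≤ vb := div_nonneg (Finset.sum_nonneg fun a _ => (hvpos a).le) hn'.le
  have hwb0 : 0 ≤ wb := div_nonneg (Finset.sum_nonneg fun a _ => (hwpos a).le) hn'.le
  have hvb20 : vb ≤ 20 := by
    rw [hvb, div_le_iff₀ hn']
    refine (Finset.sum_le_sum fun a _ => hvhi a).trans ?_
    simp [mul_comm]
  have hwb20 : wb ≤ 20 := by
    rw [hwb, div_le_iff₀ hn']
    refine (Finset.sum_le_sum fun a _ => hwhi a).trans ?_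
    simp [mul_comm]
  set Q : ℝ := wb * vb - 1 with hQ
  -- Q as a double sum
  have hQsum : ∑ a, ∑ b, ((w a * v b + w b * v a) / 2 - 1) = n^2 * Q := by
    have e : ∀ a, ∑ b, ((w a * v b + w b * v a) / 2 - 1)
        = (w a * (n * vb) + (n * wb) * v a) / 2 - n := by
      intro a
      rw [Finset.sum_sub_distrib, ← Finset.sum_div, Finset.sum_add_distrib, ← Finset.mul_sum,
        ← Finset.sum_mul, hvs, hws]
      simp
    rw [Finset.sum_congr rfl fun a _ => e a, Finset.sum_sub_distrib, ← Finset.sum_div,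
      Finset.sum_add_distrib, ← Finset.mul_sum, ← Finset.sum_mul, hvs, hws]
    simp only [Finset.sum_const, Finset.card_univ, Fintype.card_fin, nsmul_eq_mul]
    rw [hQ]; ring
  have hh : ∀ a b, (w a * v b + w b * v a) / 2 - 1 = (v a - v b)^2 * (w a * w b) / 2 := by
    intro a b
    have h1 := hwv a
    have h2 := hwv b
    have : (v a - v b)^2 * (w a * w b) = v a * (w a * v a) * w b + v b * (w b * v b) * w a
       - 2 * (w a * v a) * (w b * v b) := by ring
    rw [this, h1, h2]; ring
  have hh' : ∀ a b, (w a * v b + w b * v a) / 2 - 1 = (w a - w b)^2 * (v a * v b) / 2 := by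
    intro a b
    have h1 := hwv a
    have h2 := hwv b
    have : (w a - w b)^2 * (v a * v b) = w a * (w a * v a) * v b + w b * (w b * v b) * v a
       - 2 * (w a * v a) * (w b * v b) := by ring
    rw [this, h1, h2]; ring
  have hcenter : ∀ (f : Fin n → ℝ) (fb : ℝ), ∑ a, f a = n * fb →
      ∑ a, ∑ b, (f a - f b)^2 = 2 * n * ∑ a, (f a - fb)^2 := by
    intro f fb hf
    have e : ∀ a, ∑ b, (f a - f b)^2 = n * (f a)^2 - 2 * f a * (n * fb) + ∑ b, (f b)^2 := by
      intro a
      have : ∀ b, (f a - f b)^2 = (f a)^2 - 2 * f a * f b + (f b)^2 := fun b => by ring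
      rw [Finset.sum_congr rfl fun b _ => this b, Finset.sum_add_distrib, Finset.sum_sub_distrib,
        ← Finset.mul_sum, hf]
      simp
    have e2 : ∀ a, (f a - fb)^2 = (f a)^2 - 2 * fb * f a + fb^2 := fun a => by ring
    rw [Finset.sum_congr rfl fun a _ => e a, Finset.sum_congr rfl fun a _ => e2 a]
    simp only [Finset.sum_add_distrib, Finset.sum_sub_distrib, ← Finset.mul_sum, hf,
      ← Finset.sum_mul, Finset.sum_const, Finset.card_univ, Fintype.card_fin, nsmul_eq_mul]
    ring
  have hv0 : ∑ a, (v a - vb)^2 ≤ 400 * n * Q := by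
    have h1 := hcenter v vb hvs
    have h2 : ∑ a, ∑ b, (v a - v b)^2 ≤ 800 * (n^2 * Q) := by
      rw [← hQsum, Finset.mul_sum]
      refine Finset.sum_le_sum fun a _ => ?_
      rw [Finset.mul_sum]
      refine Finset.sum_le_sum fun b _ => ?_
      rw [hh a b]
      have hwl : ∀ a, 1/20 ≤ w a := fun a => leb_h3 (hwv a) (hvhi a) (hwpos a)
      have : 1/400 ≤ w a * w b := leb_h4 (hwl a) (hwl b)
      exact leb_h5 this
    have : 2 * n * ∑ a, (v a - vb)^2 ≤ 2 * n * (400 * n * Q) := leb_h9 h1 h2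
    exact le_of_mul_le_mul_left this (by positivity)
  have hw0 : ∑ a, (w a - wb)^2 ≤ 400 * n * Q := by
    have h1 := hcenter w wb hws
    have h2 : ∑ a, ∑ b, (w a - w b)^2 ≤ 800 * (n^2 * Q) := by
      rw [← hQsum, Finset.mul_sum]
      refine Finset.sum_le_sum fun a _ => ?_
      rw [Finset.mul_sum]
      refine Finset.sum_le_sum fun b _ => ?_
      rw [hh' a b]
      have : 1/400 ≤ v a * v b := leb_h4 (hvlo a) (hvlo b)
      exact leb_h5 this
    have : 2 * n * ∑ a, (w a - wb)^2 ≤ 2 * n * (400 * n * Q) := leb_h9 h1 h2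
    exact le_of_mul_le_mul_left this (by positivity)
  -- lower bound of Q by number of outliers
  have hQS : 9/2 * (P + M) ≤ n * Q := by
    have hterm0 : ∀ a b, 0 ≤ (w a * v b + w b * v a) / 2 - 1 := fun a b => by
      rw [hh a b]; have := mul_pos (hwpos a) (hwpos b); positivity
    have hper : ∀ a, 9/2 * n * (ip a + im a) ≤ ∑ b, ((w a * v b + w b * v a) / 2 - 1) := by
      intro a
      by_cases h1 : 20 < y a
      · have e1 : ip a = 1 := by simp [hip, h1]
        have e2 : im a = 0 := by simp only [him]; rw [if_neg]; linarith
        have hva : v a = 20 := by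
          simp only [hv]; unfold lebClip
          rw [min_eq_left h1.le, max_eq_right (by norm_num)]
        have : ∑ b ∈ (Finset.univ.filter fun b => y b ≤ 1), (9:ℝ) ≤
            ∑ b, ((w a * v b + w b * v a) / 2 - 1) := by
          refine le_trans (Finset.sum_le_sum (g := fun b => (w a * v b + w b * v a) / 2 - 1)
            fun b hb => ?_) (Finset.sum_le_univ_sum_of_nonneg fun b => hterm0 a b)
          have hb' := (Finset.mem_filter.1 hb).2
          have hvb1 : v b ≤ 1 := by
            simp only [hv]; unfold lebClip
            exact max_le (by norm_num) ((min_le_right _ _).trans hb')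
          have h3 : 1 ≤ w b := leb_h6 (hwv b) hvb1 (hwpos b)
          rw [hva]
          linarith [mul_pos (hwpos a) (hvpos b)]
        rw [Finset.sum_const, nsmul_eq_mul] at this
        rw [e1, e2]; linarith
      · have e1 : ip a = 0 := by simp only [hip]; rw [if_neg h1]
        by_cases h2 : y a < 1/20
        · have e2 : im a = 1 := by simp only [him]; rw [if_pos h2]
          have hva : v a = 1/20 := by
            simp only [hv]; unfold lebClip
            rw [min_eq_right (by linarith), max_eq_left (by linarith)]
          have hwa : w a = 20 := by
            have := hwv a; rw [hva] at this; linarith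
          have : ∑ b ∈ (Finset.univ.filter fun b => 1 ≤ y b), (9:ℝ) ≤
              ∑ b, ((w a * v b + w b * v a) / 2 - 1) := by
            refine le_trans (Finset.sum_le_sum (g := fun b => (w a * v b + w b * v a) / 2 - 1)
              fun b hb => ?_) (Finset.sum_le_univ_sum_of_nonneg fun b => hterm0 a b)
            have hb' := (Finset.mem_filter.1 hb).2
            have hvb1 : 1 ≤ v b := by
              simp only [hv]; unfold lebClip
              exact le_max_of_le_right (le_min (by norm_num) hb')
            rw [hwa]
            linarith [mul_pos (hwpos b) (hvpos a)]
          rw [Finset.sum_const, nsmul_eq_mul] at this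
          rw [e1, e2]; linarith
        · have e2 : im a = 0 := by simp only [him]; rw [if_neg h2]
          rw [e1, e2]; simp only [add_zero, mul_zero]
          exact Finset.sum_nonneg fun b _ => hterm0 a b
    have := Finset.sum_le_sum fun a (_ : a ∈ Finset.univ) => hper a
    rw [hQsum, ← Finset.mul_sum, Finset.sum_add_distrib, ← hP, ← hM] at this
    have h' : n * (9/2 * (P + M)) ≤ n * (n * Q) := leb_h8 this
    exact le_of_mul_le_mul_left h' hn'
  have hQ0 : 0 ≤ n * Q := by linarith
  have hQ0' : 0 ≤ Q := nonneg_of_mul_nonneg_right hQ0 hn'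
  -- the main expansion
  have hexp : ∑ a, ∑ b, w a * c a b * v b = wb * vb * ∑ a, ∑ b, c a b
      + wb * (∑ a, ∑ b, 1 * c a b * (v b - vb)) + vb * (∑ a, ∑ b, (w a - wb) * c a b * 1)
      + ∑ a, ∑ b, (w a - wb) * c a b * (v b - vb) := by
    simp only [Finset.mul_sum, ← Finset.sum_add_distrib]
    refine Finset.sum_congr rfl fun a _ => Finset.sum_congr rfl fun b _ => ?_
    ring
  have hz1 : ∑ b, (v b - vb) = 0 := by
    rw [Finset.sum_sub_distrib, hvs]; simp
  have hz2 : ∑ b, (w b - wb) = 0 := by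
    rw [Finset.sum_sub_distrib, hws]; simp
  have b1 : -(16000 * ε^2 * n + n * Q / 160) ≤ ∑ a, ∑ b, 1 * c a b * (v b - vb) := by
    have h := (abs_le.1 (hgap (32000 * ε) (by positivity) (fun _ => 1) (fun b => v b - vb))).1
    rw [hz1] at h
    simp only [Finset.sum_const, Finset.card_univ, Fintype.card_fin, nsmul_eq_mul, one_pow,
      mul_one, mul_zero, zero_div, sub_zero] at h
    refine le_trans ?_ h
    rw [neg_le_neg_iff]
    have e : ε / 2 * (32000 * ε * n + (∑ b, (v b - vb)^2) / (32000 * ε))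
      = 16000 * ε^2 * n + (∑ b, (v b - vb)^2) / 64000 := by field_simp; ring
    rw [e]; linarith
  have b2 : -(16000 * ε^2 * n + n * Q / 160) ≤ ∑ a, ∑ b, (w a - wb) * c a b * 1 := by
    have h := (abs_le.1 (hgap (1 / (32000 * ε)) (by positivity) (fun b => w b - wb)
      (fun _ => 1))).1
    rw [hz2] at h
    simp only [Finset.sum_const, Finset.card_univ, Fintype.card_fin, nsmul_eq_mul, one_pow,
      mul_one, zero_mul, zero_div, sub_zero] at h
    simp only [mul_one]
    refine le_trans ?_ h
    rw [neg_le_neg_iff]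
    have e : ε / 2 * (1 / (32000 * ε) * (∑ b, (w b - wb)^2) + n / (1 / (32000 * ε)))
      = 16000 * ε^2 * n + (∑ b, (w b - wb)^2) / 64000 := by field_simp; ring
    rw [e]; linarith
  have b3 : -(n * Q / 8) ≤ ∑ a, ∑ b, (w a - wb) * c a b * (v b - vb) := by
    have h := (abs_le.1 (hgap 1 (by positivity) (fun b => w b - wb)
      (fun b => v b - vb))).1
    rw [hz2] at h
    simp only [zero_mul, zero_div, sub_zero, one_mul, div_one] at h
    refine le_trans ?_ h
    rw [neg_le_neg_iff]
    have h1 : ε / 2 * (∑ b, (w b - wb)^2 + ∑ b, (v b - vb)^2) ≤ ε / 2 * (800 * n * Q) :=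
      mul_le_mul_of_nonneg_left (by linarith) (by positivity)
    have h2 : 400 * ε * (n * Q) ≤ 1/8 * (n * Q) := mul_le_mul_of_nonneg_right hε' hQ0
    linarith
  have t1 : wb * vb * (n * (1 - γ)) ≤ wb * vb * ∑ a, ∑ b, c a b :=
    mul_le_mul_of_nonneg_left hγ (mul_nonneg hwb0 hvb0)
  have hloss : 0 ≤ 16000 * ε^2 * n + n * Q / 160 := by positivity
  have t2 : -(20 * (16000 * ε^2 * n + n * Q / 160)) ≤ wb * (∑ a, ∑ b, 1 * c a b * (v b - vb)) := by
    exact leb_h7 hwb0 hwb20 (mul_le_mul_of_nonneg_left b1 hwb0) hloss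
  have t3 : -(20 * (16000 * ε^2 * n + n * Q / 160)) ≤ vb * (∑ a, ∑ b, (w a - wb) * c a b * 1) := by
    exact leb_h7 hvb0 hvb20 (mul_le_mul_of_nonneg_left b2 hvb0) hloss
  have e5 : wb * vb = 1 + Q := by rw [hQ]; ring
  rw [e5] at t1
  have t4 : γ * (n * Q) ≤ 1/8 * (n * Q) := mul_le_mul_of_nonneg_right hγ' hQ0
  rw [hexp, e5] at hsum1
  linarith

lemma leb_D {n : ℕ} (hn : 0 < n) (x : Fin n → ℝ) (hx : ∀ a, 0 < x a)
    (c g : Fin n → Fin n → ℝ)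
    (ε γ δ : ℝ) (hε : 0 < ε) (hε' : 400 * ε ≤ 1/8) (hγ' : γ ≤ 1/8)
    (hg0 : ∀ a b, 0 ≤ g a b) (hgc : ∀ a b, g a b ≤ c a b)
    (hδ : ∑ a, ∑ b, g a b ≤ δ * n)
    (hγ : n * (1 - γ) ≤ ∑ a, ∑ b, c a b)
    (hgap : ∀ s : ℝ, 0 < s → ∀ u z : Fin n → ℝ,
      |∑ a, ∑ b, u a * c a b * z b - (∑ a, u a) * (∑ b, z b) / n|
        ≤ ε / 2 * (s * ∑ a, u a ^ 2 + (∑ b, z b ^ 2) / s)) :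
    n * (1 - γ - 640001 * ε ^ 2 - 400 * δ) ≤ ∑ a, ∑ b, (c a b - g a b) * (x b / x a) := by
  obtain ⟨m, h1, h2⟩ := leb_median hn x
  have := leb_D_aux hn (fun a => x a / x m) (fun a => div_pos (hx a) (hx m))
    (by simpa [div_le_one (hx m)] using h1) (by simpa [one_le_div (hx m)] using h2)
    c g ε γ δ hε hε' hγ' hg0 hgc hδ hγ hgap
  refine this.trans (le_of_eq ?_)
  refine Finset.sum_congr rfl fun a _ => Finset.sum_congr rfl fun b _ => ?_
  have := hx m
  have := hx a
  field_simp
end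

section
open scoped ComplexOrder
lemma leb_spec {N : Type*} [Fintype N] [DecidableEq N] {A : Matrix N N ℂ} (hA : A.IsHermitian) :
    ∃ (U : Matrix N N ℂ) (a : N → ℝ), U * Uᴴ = 1 ∧ Uᴴ * U = 1 ∧
      A = U * diagonal (fun i => (a i : ℂ)) * Uᴴ := by
  refine ⟨(hA.eigenvectorUnitary : Matrix N N ℂ), hA.eigenvalues, ?_, ?_, ?_⟩
  · exact Unitary.coe_mul_star_self _
  · exact Unitary.coe_star_mul_self _
  · have := hA.spectral_theorem
    rw [Unitary.conjStarAlgAut_apply] at this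
    exact this

lemma leb_spec_pow {N : Type*} [Fintype N] [DecidableEq N] {U : Matrix N N ℂ} {a : N → ℝ}
    (h1 : U * Uᴴ = 1) (h2 : Uᴴ * U = 1) (k : ℕ) :
    (U * diagonal (fun i => (a i : ℂ)) * Uᴴ) ^ k
      = U * diagonal (fun i => ((a i ^ k : ℝ) : ℂ)) * Uᴴ := by
  induction k with
  | zero => simp [h1]
  | succ k ih =>
    rw [pow_succ, ih]
    calc _ = U * diagonal (fun i => ((a i ^ k : ℝ) : ℂ)) * (Uᴴ * U)
          * diagonal (fun i => (a i : ℂ)) * Uᴴ := by simp only [Matrix.mul_assoc]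
      _ = _ := by
        rw [h2, Matrix.mul_one, Matrix.mul_assoc U, diagonal_mul_diagonal]
        simp [pow_succ]

lemma leb_trace_pow_pow {N : Type*} [Fintype N] [DecidableEq N] {A B : Matrix N N ℂ}
    (hA : A.IsHermitian) (hB : B.IsHermitian) :
    ∃ (a b : N → ℝ) (q : N → N → ℝ), (∀ s t, 0 ≤ q s t) ∧
      ∀ i j : ℕ, (A ^ i * B ^ j).trace.re = ∑ s, ∑ t, q s t * (a s ^ i * b t ^ j) := by
  obtain ⟨U, a, hU1, hU2, rfl⟩ := leb_spec hA
  obtain ⟨V, b, hV1, hV2, rfl⟩ := leb_spec hB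
  refine ⟨a, b, fun s t => ‖(Uᴴ * V) s t‖ ^ 2, fun s t => by positivity, fun i j => ?_⟩
  rw [leb_spec_pow hU1 hU2, leb_spec_pow hV1 hV2]
  set D := diagonal (fun s => ((a s ^ i : ℝ) : ℂ))
  set D' := diagonal (fun s => ((b s ^ j : ℝ) : ℂ))
  have : (U * D * Uᴴ * (V * D' * Vᴴ)).trace = (D * (Uᴴ * V) * (D' * (Uᴴ * V)ᴴ)).trace := by
    rw [conjTranspose_mul, conjTranspose_conjTranspose]
    calc _ = (U * (D * Uᴴ * (V * D' * Vᴴ))).trace := by simp only [Matrix.mul_assoc]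
      _ = ((D * Uᴴ * (V * D' * Vᴴ)) * U).trace := Matrix.trace_mul_comm _ _
      _ = _ := by simp only [Matrix.mul_assoc]
  rw [this, Matrix.trace, Complex.re_sum]
  refine Finset.sum_congr rfl fun s _ => ?_
  rw [Matrix.diag_apply, Matrix.mul_apply, Complex.re_sum]
  refine Finset.sum_congr rfl fun t _ => ?_
  simp only [D, D', diagonal_mul, conjTranspose_apply]
  have e : (((a s ^ i : ℝ) : ℂ) * (Uᴴ * V) s t * (((b t ^ j : ℝ) : ℂ) * star ((Uᴴ * V) s t)))
    = ((‖(Uᴴ * V) s t‖ ^ 2 * (a s ^ i * b t ^ j) : ℝ) : ℂ) := by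
    have h := Complex.mul_conj ((Uᴴ * V) s t)
    rw [Complex.normSq_eq_norm_sq] at h
    push_cast at h ⊢
    rw [← h, starRingEnd_apply]; ring
  rw [e, Complex.ofReal_re]

lemma leb_scalar (α β : ℝ) (m : ℕ) :
    (α - β) * (α ^ (2*m+1) - β ^ (2*m+1)) ≤
      ((2*m+1 : ℕ) : ℝ) / 2 * ((α - β)^2 * (α ^ (2*m) + β ^ (2*m))) := by
  have hg := (Commute.all α β).mul_geom_sum₂ (2*m+1)
  have hS : ∑ i ∈ Finset.range (2*m+1), α ^ i * β ^ (2*m+1 - 1 - i)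
      ≤ ((2*m+1 : ℕ) : ℝ) / 2 * (α ^ (2*m) + β ^ (2*m)) := by
    have hrefl := Finset.sum_range_reflect (fun i => α ^ i * β ^ (2*m+1 - 1 - i)) (2*m+1)
    have h2 : 2 * ∑ i ∈ Finset.range (2*m+1), α ^ i * β ^ (2*m+1 - 1 - i)
        ≤ ∑ i ∈ Finset.range (2*m+1), (α ^ (2*m) + β ^ (2*m)) := by
      have : 2 * ∑ i ∈ Finset.range (2*m+1), α ^ i * β ^ (2*m+1 - 1 - i)
        = ∑ i ∈ Finset.range (2*m+1), (α ^ i * β ^ (2*m+1 - 1 - i)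
          + α ^ (2*m+1-1-i) * β ^ (2*m+1 - 1 - (2*m+1-1-i))) := by
        rw [Finset.sum_add_distrib, hrefl]; ring
      rw [this]
      refine Finset.sum_le_sum fun i hi => ?_
      have hi' := Finset.mem_range.1 hi
      obtain ⟨j, hj⟩ : ∃ j, 2*m = i + j := ⟨2*m - i, by omega⟩
      have e1 : 2*m+1-1-i = j := by omega
      have e2 : 2*m+1-1-j = i := by omega
      rw [e1, e2]
      have ea : α ^ (2*m) = |α| ^ i * |α| ^ j := by
        rw [← pow_add, ← hj, pow_mul, pow_mul, sq_abs]
      have eb : β ^ (2*m) = |β| ^ i * |β| ^ j := by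
        rw [← pow_add, ← hj, pow_mul, pow_mul, sq_abs]
      have h1 : α ^ i * β ^ j ≤ |α| ^ i * |β| ^ j := by
        rw [← abs_pow, ← abs_pow, ← abs_mul]; exact le_abs_self _
      have h2 : α ^ j * β ^ i ≤ |α| ^ j * |β| ^ i := by
        rw [← abs_pow, ← abs_pow, ← abs_mul]; exact le_abs_self _
      have h3 : 0 ≤ (|α| ^ i - |β| ^ i) * (|α| ^ j - |β| ^ j) := by
        rcases le_total |α| |β| with h | h
        · exact mul_nonneg_of_nonpos_of_nonpos
            (sub_nonpos.2 (pow_le_pow_left₀ (abs_nonneg _) h _))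
            (sub_nonpos.2 (pow_le_pow_left₀ (abs_nonneg _) h _))
        · exact mul_nonneg
            (sub_nonneg.2 (pow_le_pow_left₀ (abs_nonneg _) h _))
            (sub_nonneg.2 (pow_le_pow_left₀ (abs_nonneg _) h _))
      rw [ea, eb]; nlinarith
    rw [Finset.sum_const, Finset.card_range, nsmul_eq_mul] at h2
    linarith
  rw [← hg]
  nlinarith [sq_nonneg (α - β)]

lemma leb_trace_ineq {N : Type*} [Fintype N] [DecidableEq N] {A B : Matrix N N ℂ}
    (hA : A.IsHermitian) (hB : B.IsHermitian) (m : ℕ) :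
    ((A - B) * (A ^ (2*m+1) - B ^ (2*m+1))).trace.re ≤
      ((2*m+1 : ℕ) : ℝ) / 2 * ((A - B) * (A - B) * (A ^ (2*m) + B ^ (2*m))).trace.re := by
  obtain ⟨a, b, q, hq, h⟩ := leb_trace_pow_pow hA hB
  have hL : ((A - B) * (A ^ (2*m+1) - B ^ (2*m+1))).trace.re
      = ∑ s, ∑ t, q s t * ((a s - b t) * (a s ^ (2*m+1) - b t ^ (2*m+1))) := by
    have e : ((A - B) * (A ^ (2*m+1) - B ^ (2*m+1))).trace
      = (A ^ (2*m+2) * B ^ 0).trace - (A ^ 1 * B ^ (2*m+1)).trace - (A ^ (2*m+1) * B ^ 1).trace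
        + (A ^ 0 * B ^ (2*m+2)).trace := by
      simp only [sub_mul, mul_sub, pow_zero, one_mul, mul_one, trace_sub, pow_one]
      rw [Matrix.trace_mul_comm B (A ^ _), ← pow_succ', ← pow_succ']; ring
    rw [e]; simp only [Complex.add_re, Complex.sub_re, h]
    simp only [← Finset.sum_add_distrib, ← Finset.sum_sub_distrib]
    refine Finset.sum_congr rfl fun s _ => Finset.sum_congr rfl fun t _ => ?_
    ring
  have hR : ((A - B) * (A - B) * (A ^ (2*m) + B ^ (2*m))).trace.re
      = ∑ s, ∑ t, q s t * ((a s - b t)^2 * (a s ^ (2*m) + b t ^ (2*m))) := by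
    have e : ((A - B) * (A - B) * (A ^ (2*m) + B ^ (2*m))).trace
      = (A ^ (2*m+2) * B ^ 0).trace + (A ^ 2 * B ^ (2*m)).trace
        - 2 * (A ^ (2*m+1) * B ^ 1).trace - 2 * (A ^ 1 * B ^ (2*m+1)).trace
        + (A ^ (2*m) * B ^ 2).trace + (A ^ 0 * B ^ (2*m+2)).trace := by
      have t1 : (A * B * A ^ (2*m)).trace = (A ^ (2*m+1) * B ^ 1).trace := by
        rw [Matrix.mul_assoc, Matrix.trace_mul_comm, Matrix.mul_assoc, Matrix.trace_mul_comm,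
          ← pow_succ, pow_one]
      have t2 : (B * A * A ^ (2*m)).trace = (A ^ (2*m+1) * B ^ 1).trace := by
        rw [Matrix.mul_assoc, Matrix.trace_mul_comm, ← pow_succ', pow_one]
      have t3 : (A * B * B ^ (2*m)).trace = (A ^ 1 * B ^ (2*m+1)).trace := by
        rw [Matrix.mul_assoc, ← pow_succ', pow_one]
      have t4 : (B * A * B ^ (2*m)).trace = (A ^ 1 * B ^ (2*m+1)).trace := by
        rw [Matrix.mul_assoc, Matrix.trace_mul_comm, Matrix.mul_assoc, ← pow_succ, pow_one]
      have t5 : (B * B * A ^ (2*m)).trace = (A ^ (2*m) * B ^ 2).trace := by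
        rw [Matrix.trace_mul_comm, pow_two]
      have t6 : (A * A * A ^ (2*m)).trace = (A ^ (2*m+2) * B ^ 0).trace := by
        rw [← pow_two, ← pow_add, add_comm, pow_zero, mul_one]
      have t7 : (B * B * B ^ (2*m)).trace = (A ^ 0 * B ^ (2*m+2)).trace := by
        rw [← pow_two, ← pow_add, add_comm, pow_zero, one_mul]
      simp only [sub_mul, mul_sub, mul_add, trace_sub, trace_add, t1, t2, t3, t4, t5, t6, t7]
      rw [pow_two A]; ring
    rw [e]
    have e2 : ∀ z : ℂ, (2 * z).re = 2 * z.re := fun z => by simp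
    simp only [Complex.add_re, Complex.sub_re, e2, h]
    simp only [Finset.mul_sum, ← Finset.sum_add_distrib, ← Finset.sum_sub_distrib]
    refine Finset.sum_congr rfl fun s _ => Finset.sum_congr rfl fun t _ => ?_
    ring
  rw [hL, hR, Finset.mul_sum]
  refine Finset.sum_le_sum fun s _ => ?_
  rw [Finset.mul_sum]
  refine Finset.sum_le_sum fun t _ => ?_
  have := mul_le_mul_of_nonneg_left (leb_scalar (a s) (b t) m) (hq s t)
  linarith

/-- from a trace of an even power to an operator bound -/
lemma leb_psd_of_trace {N : Type*} [Fintype N] [DecidableEq N] {X : Matrix N N ℂ}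
    (hX : X.IsHermitian) {p : ℕ} (hp : 1 ≤ p) {τ : ℝ} (hτ : 0 ≤ τ)
    (h : (X ^ (2*p)).trace.re ≤ τ ^ p) : ((τ : ℂ) • (1 : Matrix N N ℂ) - X * X).PosSemidef := by
  obtain ⟨U, a, h1, h2, rfl⟩ := leb_spec hX
  have hsum : ∑ s, a s ^ (2*p) ≤ τ ^ p := by
    rw [leb_spec_pow h1 h2, Matrix.trace_mul_comm, ← Matrix.mul_assoc, h2, Matrix.one_mul,
      trace_diagonal, Complex.re_sum] at h
    simpa only [Complex.ofReal_re] using h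
  have ha : ∀ s, a s ^ 2 ≤ τ := by
    intro s
    have : (a s ^ 2) ^ p ≤ τ ^ p := by
      rw [← pow_mul]
      refine le_trans ?_ hsum
      exact Finset.single_le_sum (f := fun s => a s ^ (2*p))
        (fun t _ => by rw [pow_mul]; positivity) (Finset.mem_univ s)
    exact le_of_pow_le_pow_left₀ (by omega) hτ this
  have e : (τ : ℂ) • (1 : Matrix N N ℂ) - U * diagonal (fun i => (a i : ℂ)) * Uᴴ
      * (U * diagonal (fun i => (a i : ℂ)) * Uᴴ)
      = U * diagonal (fun i => ((τ - a i ^ 2 : ℝ) : ℂ)) * Uᴴ := by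
    rw [← pow_two, leb_spec_pow h1 h2]
    have : (τ : ℂ) • (1 : Matrix N N ℂ) = U * diagonal (fun _ => (τ : ℂ)) * Uᴴ := by
      have : diagonal (fun _ : N => (τ : ℂ)) = (τ:ℂ) • (1 : Matrix N N ℂ) := by
        ext i j; simp [diagonal_apply, Matrix.one_apply]
      rw [this]; simp [h1]
    rw [this, ← Matrix.sub_mul, ← Matrix.mul_sub, diagonal_sub]
    simp
  rw [e]
  refine PosSemidef.mul_mul_conjTranspose_same (PosSemidef.diagonal ?_) U
  intro i
  have := ha i
  simp only [Pi.zero_apply]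
  exact_mod_cast sub_nonneg.2 this
end

section
open scoped ComplexOrder
/-- bounded measurable functions -/
def LebBM {Θ : Type*} [MeasurableSpace Θ] (f : Θ → ℂ) : Prop :=
  Measurable f ∧ ∃ C : ℝ, ∀ e, ‖f e‖ ≤ C

/-- bounded measurable matrix valued functions -/
def LebBMM {Θ N : Type*} [MeasurableSpace Θ] (F : Θ → Matrix N N ℂ) : Prop :=
  ∀ i j, LebBM fun e => F e i j

section
variable {Θ Θ' N I : Type*} [MeasurableSpace Θ] [MeasurableSpace Θ']

lemma LebBM.const (c : ℂ) : LebBM (fun _ : Θ => c) := ⟨measurable_const, ‖c‖, fun _ => le_rfl⟩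

lemma LebBM.add {f g : Θ → ℂ} (hf : LebBM f) (hg : LebBM g) : LebBM fun e => f e + g e := by
  obtain ⟨h1, C, hC⟩ := hf
  obtain ⟨h2, D, hD⟩ := hg
  exact ⟨h1.add h2, C + D, fun e => (norm_add_le _ _).trans (add_le_add (hC e) (hD e))⟩

lemma LebBM.mul {f g : Θ → ℂ} (hf : LebBM f) (hg : LebBM g) : LebBM fun e => f e * g e := by
  obtain ⟨h1, C, hC⟩ := hf
  obtain ⟨h2, D, hD⟩ := hg
  refine ⟨h1.mul h2, C * D, fun e => ?_⟩
  rw [norm_mul]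
  exact mul_le_mul (hC e) (hD e) (norm_nonneg _) ((norm_nonneg _).trans (hC e))

lemma LebBM.neg {f : Θ → ℂ} (hf : LebBM f) : LebBM fun e => - f e := by
  obtain ⟨h1, C, hC⟩ := hf
  exact ⟨h1.neg, C, fun e => by rw [norm_neg]; exact hC e⟩

lemma LebBM.sub {f g : Θ → ℂ} (hf : LebBM f) (hg : LebBM g) : LebBM fun e => f e - g e := by
  simpa [sub_eq_add_neg] using hf.add hg.neg

lemma LebBM.star {f : Θ → ℂ} (hf : LebBM f) : LebBM fun e => star (f e) := by
  obtain ⟨h1, C, hC⟩ := hf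
  exact ⟨(continuous_star.measurable).comp h1, C, fun e => by rw [norm_star]; exact hC e⟩

lemma LebBM.sum {f : I → Θ → ℂ} (s : Finset I) (hf : ∀ i, LebBM (f i)) :
    LebBM fun e => ∑ i ∈ s, f i e := by
  classical
  induction s using Finset.induction_on with
  | empty => simpa using LebBM.const 0
  | insert a s ha ih =>
    simp only [Finset.sum_insert ha]
    exact (hf a).add ih

lemma LebBM.comp {f : Θ → ℂ} (hf : LebBM f) {g : Θ' → Θ} (hg : Measurable g) :
    LebBM fun e => f (g e) := by
  obtain ⟨h1, C, hC⟩ := hf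
  exact ⟨h1.comp hg, C, fun e => hC _⟩

lemma LebBM.integrable {f : Θ → ℂ} (hf : LebBM f) (μ : Measure Θ) [IsFiniteMeasure μ] :
    Integrable f μ := by
  obtain ⟨h1, C, hC⟩ := hf
  exact Integrable.of_bound h1.aestronglyMeasurable C (Filter.Eventually.of_forall hC)

lemma LebBMM.const (c : Matrix N N ℂ) : LebBMM (fun _ : Θ => c) := fun i j => LebBM.const _

lemma LebBMM.add {F G : Θ → Matrix N N ℂ} (hF : LebBMM F) (hG : LebBMM G) :
    LebBMM fun e => F e + G e := fun i j => (hF i j).add (hG i j)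

lemma LebBMM.sub {F G : Θ → Matrix N N ℂ} (hF : LebBMM F) (hG : LebBMM G) :
    LebBMM fun e => F e - G e := fun i j => (hF i j).sub (hG i j)

lemma LebBMM.mul [Fintype N] {F G : Θ → Matrix N N ℂ} (hF : LebBMM F) (hG : LebBMM G) :
    LebBMM fun e => F e * G e := fun i j => by
  simp only [Matrix.mul_apply]
  exact LebBM.sum _ fun k => (hF i k).mul (hG k j)

lemma LebBMM.pow [Fintype N] [DecidableEq N] {F : Θ → Matrix N N ℂ} (hF : LebBMM F) (k : ℕ) :
    LebBMM fun e => F e ^ k := by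
  induction k with
  | zero => simpa using LebBMM.const 1
  | succ k ih => simp only [pow_succ]; exact ih.mul hF

lemma LebBMM.sum {F : I → Θ → Matrix N N ℂ} (s : Finset I) (hF : ∀ i, LebBMM (F i)) :
    LebBMM fun e => ∑ i ∈ s, F i e := fun a b => by
  simp only [Matrix.sum_apply]
  exact LebBM.sum _ fun i => hF i a b

lemma LebBMM.comp {F : Θ → Matrix N N ℂ} (hF : LebBMM F) {g : Θ' → Θ} (hg : Measurable g) :
    LebBMM fun e => F (g e) := fun i j => (hF i j).comp hg

lemma LebBMM.trace [Fintype N] {F : Θ → Matrix N N ℂ} (hF : LebBMM F) :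
    LebBM fun e => (F e).trace := by
  simp only [Matrix.trace, Matrix.diag_apply]
  exact LebBM.sum _ fun i => hF i i

lemma LebBMM.tr_integrable [Fintype N] {F : Θ → Matrix N N ℂ} (hF : LebBMM F) (μ : Measure Θ)
    [IsFiniteMeasure μ] : Integrable (fun e => (F e).trace.re) μ :=
  (hF.trace.integrable μ).re

end

/-- swapping the `i`-th pair -/
def lebSw {I E : Type*} [DecidableEq I] (i : I) (e : I → E × E) : I → E × E :=
  fun j => (if j = i then Prod.swap else id) (e j)

lemma lebSw_mp {I E : Type*} [Fintype I] [DecidableEq I] [MeasurableSpace E]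
    (ν : I → Measure E) [∀ i, IsProbabilityMeasure (ν i)] (i : I) :
    MeasurePreserving (lebSw i) (Measure.pi fun j => (ν j).prod (ν j))
      (Measure.pi fun j => (ν j).prod (ν j)) := by
  refine measurePreserving_pi (f := fun j => if j = i then Prod.swap else id) _ _ fun j => ?_
  by_cases h : j = i
  · simp only [h, if_true]; exact Measure.measurePreserving_swap
  · simp only [h, if_false]; exact MeasurePreserving.id _

section
variable {I E N : Type*} [Fintype I] [DecidableEq I] [MeasurableSpace E] [Fintype N]
  [DecidableEq N]

lemma leb_K_zero (ν : I → Measure E) [∀ i, IsProbabilityMeasure (ν i)]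
    (F : I → E → Matrix N N ℂ) (hF : ∀ i, LebBMM (F i))
    (hmean : ∀ i a b, ∫ e, F i e a b ∂(ν i) = 0) (k : ℕ) (i : I) :
    ∫ e, (F i (e i).2 * (∑ j, F j (e j).1) ^ k).trace.re
      ∂(Measure.pi fun j => (ν j).prod (ν j)) = 0 := by
  have hX : LebBMM fun e : I → E => (∑ j, F j (e j)) ^ k :=
    (LebBMM.sum _ fun j => (hF j).comp (measurable_pi_apply j)).pow k
  have hFi : LebBMM fun e : I → E => F i (e i) := (hF i).comp (measurable_pi_apply i)
  have hmp := measurePreserving_arrowProdEquivProdArrow E E I ν ν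
  have h1 := hmp.integral_comp (MeasurableEquiv.arrowProdEquivProdArrow E E I).measurableEmbedding
    (fun q : (I → E) × (I → E) => (F i (q.2 i) * (∑ j, F j (q.1 j)) ^ k).trace.re)
  have h2 : ∫ q : (I → E) × (I → E), (F i (q.2 i) * (∑ j, F j (q.1 j)) ^ k).trace.re
      ∂((Measure.pi ν).prod (Measure.pi ν)) = 0 := by
    have hint : ∀ a b, Integrable (fun q : (I → E) × (I → E) =>
        (((∑ j, F j (q.1 j)) ^ k) b a * F i (q.2 i) a b)) ((Measure.pi ν).prod (Measure.pi ν)) :=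
      fun a b => (((hX b a).comp measurable_fst).mul ((hFi a b).comp measurable_snd)).integrable _
    have h3 : ∫ q : (I → E) × (I → E), (F i (q.2 i) * (∑ j, F j (q.1 j)) ^ k).trace
      ∂((Measure.pi ν).prod (Measure.pi ν)) = 0 := by
      simp only [Matrix.trace, Matrix.diag_apply, Matrix.mul_apply]
      simp only [mul_comm (F i _ _ _)]
      rw [integral_finsetSum _ fun a _ => integrable_finsetSum _ fun b _ => hint a b]
      refine Finset.sum_eq_zero fun a _ => ?_
      rw [integral_finsetSum _ fun b _ => hint a b]
      refine Finset.sum_eq_zero fun b _ => ?_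
      rw [integral_prod_mul (fun e : I → E => ((∑ j, F j (e j)) ^ k) b a)
        (fun e : I → E => F i (e i) a b)]
      have h4 : ∫ e : I → E, F i (e i) a b ∂(Measure.pi ν) = ∫ x, F i x a b ∂(ν i) := by
        have hev := measurePreserving_eval ν i
        rw [← hev.map_eq, integral_map hev.measurable.aemeasurable
          (hF i a b).1.aestronglyMeasurable]
      rw [h4, hmean, mul_zero]
    have hI : Integrable (fun q : (I → E) × (I → E) =>
        (F i (q.2 i) * (∑ j, F j (q.1 j)) ^ k).trace) ((Measure.pi ν).prod (Measure.pi ν)) :=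
      LebBM.integrable (LebBMM.trace ((hFi.comp measurable_snd).mul (hX.comp measurable_fst))) _
    have h5 := integral_re hI
    rw [h3] at h5
    simpa using h5
  rw [h2] at h1
  exact h1

lemma leb_K_step (ν : I → Measure E) [∀ i, IsProbabilityMeasure (ν i)]
    (F : I → E → Matrix N N ℂ) (hF : ∀ i, LebBMM (F i)) (hH : ∀ i e, (F i e).IsHermitian)
    (hmean : ∀ i a b, ∫ e, F i e a b ∂(ν i) = 0) (v : ℝ)
    (hv : ∀ e : I → E × E, ((v : ℂ) • (1 : Matrix N N ℂ) -
      ∑ i, (F i (e i).1 - F i (e i).2) * (F i (e i).1 - F i (e i).2)).PosSemidef) (m : ℕ) :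
    ∫ e, ((∑ j, F j (e j).1) ^ (2*m+2)).trace.re ∂(Measure.pi fun j => (ν j).prod (ν j))
     ≤ ((2*m+1 : ℕ) : ℝ) / 2 * v *
      ∫ e, ((∑ j, F j (e j).1) ^ (2*m)).trace.re ∂(Measure.pi fun j => (ν j).prod (ν j)) := by
  set π := Measure.pi fun j => (ν j).prod (ν j) with hπ
  set X : (I → E × E) → Matrix N N ℂ := fun e => ∑ j, F j (e j).1 with hXdef
  set Δ : I → (I → E × E) → Matrix N N ℂ := fun i e => F i (e i).1 - F i (e i).2 with hΔdef
  have hF1 : ∀ i, LebBMM fun e : I → E × E => F i (e i).1 := fun i =>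
    (hF i).comp (measurable_fst.comp (measurable_pi_apply i))
  have hF2 : ∀ i, LebBMM fun e : I → E × E => F i (e i).2 := fun i =>
    (hF i).comp (measurable_snd.comp (measurable_pi_apply i))
  have hX : LebBMM X := LebBMM.sum _ hF1
  have hΔ : ∀ i, LebBMM (Δ i) := fun i => (hF1 i).sub (hF2 i)
  have hXH : ∀ e, (X e).IsHermitian := fun e => by
    simp only [hXdef, Matrix.IsHermitian, conjTranspose_sum]
    exact Finset.sum_congr rfl fun i _ => hH _ _
  have hXs : ∀ i e, X e - X (lebSw i e) = Δ i e := by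
    intro i e
    simp only [hXdef, ← Finset.sum_sub_distrib, hΔdef]
    rw [Finset.sum_eq_single i]
    · simp [lebSw]
    · intro j _ hj; simp [lebSw, hj]
    · simp
  have hΔs : ∀ i e, Δ i (lebSw i e) = - Δ i e := by
    intro i e; simp [hΔdef, lebSw]
  have hsw : ∀ i (f : (I → E × E) → ℝ), Measurable f → ∫ e, f (lebSw i e) ∂π = ∫ e, f e ∂π := by
    intro i f hf
    have hm := lebSw_mp ν i
    rw [← hπ] at hm
    conv_rhs => rw [← hm.map_eq]
    rw [integral_map hm.measurable.aemeasurable hf.aestronglyMeasurable]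
  have hswm : ∀ i : I, Measurable (lebSw i : (I → E × E) → _) := fun i => (lebSw_mp ν i).measurable
  have hT : ∀ i, ∫ e, (F i (e i).1 * X e ^ (2*m+1)).trace.re ∂π
      ≤ ((2*m+1 : ℕ) : ℝ) / 2 * ∫ e, (Δ i e * Δ i e * X e ^ (2*m)).trace.re ∂π := by
    intro i
    set k := 2*m+1
    have i1 := ((hF1 i).mul (hX.pow k)).tr_integrable π
    have i2 := ((hF2 i).mul (hX.pow k)).tr_integrable π
    have hXsw : LebBMM fun e => X (lebSw i e) := hX.comp (hswm i)
    have i3 := ((hΔ i).mul (hX.pow k)).tr_integrable π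
    have i4 := ((hΔ i).mul (hXsw.pow k)).tr_integrable π
    have hz : ∫ e, (F i (e i).2 * X e ^ k).trace.re ∂π = 0 := leb_K_zero ν F hF hmean k i
    have a1 : ∫ e, (F i (e i).1 * X e ^ k).trace.re ∂π = ∫ e, (Δ i e * X e ^ k).trace.re ∂π := by
      have : ∀ e, (Δ i e * X e ^ k).trace.re
          = (F i (e i).1 * X e ^ k).trace.re - (F i (e i).2 * X e ^ k).trace.re := by
        intro e; simp only [hΔdef, sub_mul, trace_sub, Complex.sub_re]
      simp only [this]
      rw [integral_sub i1 i2, hz, sub_zero]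
    have a2 : ∫ e, (Δ i e * X e ^ k).trace.re ∂π
        = - ∫ e, (Δ i e * X (lebSw i e) ^ k).trace.re ∂π := by
      rw [← hsw i (fun e => (Δ i e * X e ^ k).trace.re)
        (Complex.measurable_re.comp ((hΔ i).mul (hX.pow k)).trace.1), ← integral_neg]
      refine integral_congr_ae (Filter.Eventually.of_forall fun e => ?_)
      simp [hΔs]
    have a3 : ∫ e, (Δ i e * (X e ^ k - X (lebSw i e) ^ k)).trace.re ∂π
        = 2 * ∫ e, (Δ i e * X e ^ k).trace.re ∂π := by
      simp only [mul_sub, trace_sub, Complex.sub_re]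
      rw [integral_sub i3 i4]; linarith
    have hswk := hXsw.pow (2*m)
    have i5 := (((hΔ i).mul (hΔ i)).mul (hX.pow (2*m))).tr_integrable π
    have i6 := (((hΔ i).mul (hΔ i)).mul hswk).tr_integrable π
    have a4 : ∫ e, (Δ i e * (X e ^ k - X (lebSw i e) ^ k)).trace.re ∂π ≤
        ∫ e, (((2*m+1 : ℕ) : ℝ) / 2 * (Δ i e * Δ i e *
          (X e ^ (2*m) + X (lebSw i e) ^ (2*m))).trace.re) ∂π := by
      refine integral_mono (((hΔ i).mul ((hX.pow k).sub (hXsw.pow k))).tr_integrable π)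
        ((((((hΔ i).mul (hΔ i)).mul ((hX.pow (2*m)).add hswk))).tr_integrable π).const_mul _)
        fun e => ?_
      have := leb_trace_ineq (hXH e) (hXH (lebSw i e)) m
      simp only [hXs i e] at this
      exact this
    have a5 : ∫ e, (Δ i e * Δ i e * X (lebSw i e) ^ (2*m)).trace.re ∂π
        = ∫ e, (Δ i e * Δ i e * X e ^ (2*m)).trace.re ∂π := by
      rw [← hsw i (fun e => (Δ i e * Δ i e * X e ^ (2*m)).trace.re)
        (Complex.measurable_re.comp (((hΔ i).mul (hΔ i)).mul (hX.pow (2*m))).trace.1)]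
      refine integral_congr_ae (Filter.Eventually.of_forall fun e => ?_)
      simp [hΔs]
    have a6 : ∫ e, (((2*m+1 : ℕ) : ℝ) / 2 * (Δ i e * Δ i e *
          (X e ^ (2*m) + X (lebSw i e) ^ (2*m))).trace.re) ∂π
        = ((2*m+1 : ℕ) : ℝ) / 2 * (2 * ∫ e, (Δ i e * Δ i e * X e ^ (2*m)).trace.re ∂π) := by
      rw [integral_const_mul]
      simp only [mul_add, trace_add, Complex.add_re]
      rw [integral_add i5 i6, a5]; ring
    rw [a1]
    rw [a3, a6] at a4
    linarith
  have hL : ∫ e, (X e ^ (2*m+2)).trace.re ∂π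
      = ∑ i, ∫ e, (F i (e i).1 * X e ^ (2*m+1)).trace.re ∂π := by
    rw [← integral_finsetSum _ fun i _ => ((hF1 i).mul (hX.pow _)).tr_integrable π]
    refine integral_congr_ae (Filter.Eventually.of_forall fun e => ?_)
    simp only
    rw [← Complex.re_sum, ← trace_sum, ← Finset.sum_mul]
    rw [show 2*m+2 = (2*m+1)+1 by ring, pow_succ' (X e)]
  have hR : ∑ i, ∫ e, (Δ i e * Δ i e * X e ^ (2*m)).trace.re ∂π
      ≤ v * ∫ e, (X e ^ (2*m)).trace.re ∂π := by
    rw [← integral_finsetSum _ fun i _ => (((hΔ i).mul (hΔ i)).mul (hX.pow _)).tr_integrable π,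
      ← integral_const_mul]
    refine integral_mono (integrable_finsetSum _ fun i _ =>
      (((hΔ i).mul (hΔ i)).mul (hX.pow _)).tr_integrable π)
      (((hX.pow _).tr_integrable π).const_mul _) fun e => ?_
    simp only
    rw [← Complex.re_sum, ← trace_sum, ← Finset.sum_mul]
    have h1 := (hv e).conjTranspose_mul_mul_same (X e ^ m)
    have h2 := h1.trace_nonneg
    have h3 : (X e ^ m)ᴴ = X e ^ m := (hXH e).pow m
    rw [h3, Matrix.trace_mul_comm, ← Matrix.mul_assoc, ← pow_add, ← two_mul,
      Matrix.trace_mul_comm, sub_mul, trace_sub] at h2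
    have h4 := (Complex.le_def.1 h2).1
    simp only [smul_mul_assoc, one_mul, trace_smul, Complex.sub_re, smul_eq_mul,
      Complex.re_ofReal_mul, Complex.zero_re] at h4
    simp only [hΔdef]
    linarith
  rw [hL]
  refine (Finset.sum_le_sum fun i _ => hT i).trans ?_
  rw [← Finset.mul_sum, mul_assoc]
  exact mul_le_mul_of_nonneg_left hR (by positivity)

lemma leb_K_moment (ν : I → Measure E) [∀ i, IsProbabilityMeasure (ν i)]
    (F : I → E → Matrix N N ℂ) (hF : ∀ i, LebBMM (F i)) (hH : ∀ i e, (F i e).IsHermitian)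
    (hmean : ∀ i a b, ∫ e, F i e a b ∂(ν i) = 0) (v : ℝ) (hv0 : 0 ≤ v)
    (hv : ∀ e : I → E × E, ((v : ℂ) • (1 : Matrix N N ℂ) -
      ∑ i, (F i (e i).1 - F i (e i).2) * (F i (e i).1 - F i (e i).2)).PosSemidef)
    (p m : ℕ) (hm : m ≤ p) :
    ∫ e, ((∑ j, F j (e j).1) ^ (2*m)).trace.re ∂(Measure.pi fun j => (ν j).prod (ν j))
     ≤ Fintype.card N * (p * v) ^ m := by
  induction m with
  | zero => simp
  | succ m ih =>
    have ih' := ih (by omega)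
    have h := leb_K_step ν F hF hH hmean v hv m
    rw [show 2 * (m+1) = 2*m+2 by ring]
    refine h.trans ?_
    refine (mul_le_mul_of_nonneg_left ih' (by positivity)).trans ?_
    have h1 : ((2*m+1 : ℕ) : ℝ) / 2 * v ≤ p * v := by
      refine mul_le_mul_of_nonneg_right ?_ hv0
      have : (m:ℝ) + 1 ≤ p := by exact_mod_cast hm
      push_cast; linarith
    refine (mul_le_mul_of_nonneg_right h1 (by positivity)).trans (le_of_eq ?_)
    ring

/-- matrix Khintchine tail bound -/
lemma leb_K {Ω : Type*} [MeasurableSpace Ω] (μ : Measure Ω) [IsProbabilityMeasure μ]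
    (ξ : I → Ω → E) (hξm : ∀ i, AEMeasurable (ξ i) μ) (hξ : iIndepFun ξ μ)
    (F : I → E → Matrix N N ℂ) (hF : ∀ i, LebBMM (F i)) (hH : ∀ i e, (F i e).IsHermitian)
    (hmean : ∀ i a b, ∫ ω, F i (ξ i ω) a b ∂μ = 0) (v : ℝ) (hv0 : 0 < v)
    (hv : ∀ e : I → E × E, ((v : ℂ) • (1 : Matrix N N ℂ) -
      ∑ i, (F i (e i).1 - F i (e i).2) * (F i (e i).1 - F i (e i).2)).PosSemidef)
    (p : ℕ) (hp : 1 ≤ p) :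
    μ {ω | (Real.exp 12 * (p * v)) ^ p < ((∑ j, F j (ξ j ω)) ^ (2*p)).trace.re}
      ≤ ENNReal.ofReal (Fintype.card N * Real.exp (-(12 * p))) := by
  have hprob : ∀ i, IsProbabilityMeasure (μ.map (ξ i)) := fun i =>
    Measure.isProbabilityMeasure_map (hξm i)
  set ν : I → Measure E := fun i => μ.map (ξ i) with hν
  have hmean' : ∀ i a b, ∫ e, F i e a b ∂(ν i) = 0 := by
    intro i a b
    rw [hν, integral_map (hξm i) (hF i a b).1.aestronglyMeasurable]
    exact hmean i a b
  have h1 := leb_K_moment ν F hF hH hmean' v hv0.le hv p p le_rfl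
  have hX : LebBMM fun e : I → E => (∑ j, F j (e j)) ^ (2*p) :=
    (LebBMM.sum _ fun j => (hF j).comp (measurable_pi_apply j)).pow _
  have hlaw : μ.map (fun ω i => ξ i ω) = Measure.pi ν :=
    (iIndepFun_iff_map_fun_eq_pi_map hξm).1 hξ
  have hjm : AEMeasurable (fun ω i => ξ i ω) μ := aemeasurable_pi_lambda _ hξm
  have hfst : MeasurePreserving (fun (e : I → E × E) i => (e i).1)
      (Measure.pi fun j => (ν j).prod (ν j)) (Measure.pi ν) :=
    measurePreserving_pi (f := fun _ => Prod.fst) _ _ fun j => measurePreserving_fst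
  have h2 : ∫ ω, ((∑ j, F j (ξ j ω)) ^ (2*p)).trace.re ∂μ
      ≤ Fintype.card N * (p * v) ^ p := by
    refine le_trans (le_of_eq ?_) h1
    have e1 := integral_map (μ := μ) hjm (f := fun e : I → E => ((∑ j, F j (e j)) ^ (2*p)).trace.re)
      (Complex.measurable_re.comp hX.trace.1).aestronglyMeasurable
    have e2 := integral_map (μ := Measure.pi fun j => (ν j).prod (ν j))
      hfst.measurable.aemeasurable (f := fun e : I → E => ((∑ j, F j (e j)) ^ (2*p)).trace.re)
      (Complex.measurable_re.comp hX.trace.1).aestronglyMeasurable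
    rw [hlaw] at e1
    rw [hfst.map_eq] at e2
    rw [← e1, e2]
  have hnn : ∀ ω, 0 ≤ ((∑ j, F j (ξ j ω)) ^ (2*p)).trace.re := by
    intro ω
    have hXH : (∑ j, F j (ξ j ω)).IsHermitian := by
      simp only [Matrix.IsHermitian, conjTranspose_sum]
      exact Finset.sum_congr rfl fun i _ => hH _ _
    have h3 : ((∑ j, F j (ξ j ω)) ^ p)ᴴ = (∑ j, F j (ξ j ω)) ^ p := hXH.pow p
    have := (posSemidef_conjTranspose_mul_self ((∑ j, F j (ξ j ω)) ^ p)).trace_nonneg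
    rw [h3, ← pow_add, ← two_mul] at this
    exact (Complex.le_def.1 this).1
  have hint : Integrable (fun ω => ((∑ j, F j (ξ j ω)) ^ (2*p)).trace.re) μ := by
    have : Integrable (fun e : I → E => ((∑ j, F j (e j)) ^ (2*p)).trace.re)
      (μ.map (fun ω i => ξ i ω)) := by
      rw [hlaw]; exact hX.tr_integrable _
    exact this.comp_aemeasurable hjm
  have hpos : 0 < (Real.exp 12 * (p * v)) ^ p := by
    have : (0:ℝ) < p := by exact_mod_cast hp
    positivity
  have hM := mul_meas_ge_le_integral_of_nonneg (Filter.Eventually.of_forall hnn) hint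
    ((Real.exp 12 * (p * v)) ^ p)
  have hsub : μ.real {ω | (Real.exp 12 * (p * v)) ^ p < ((∑ j, F j (ξ j ω)) ^ (2*p)).trace.re}
      ≤ μ.real {ω | (Real.exp 12 * (p * v)) ^ p ≤ ((∑ j, F j (ξ j ω)) ^ (2*p)).trace.re} :=
    measureReal_mono fun ω (hω : _ < _) => Set.mem_ofPred_eq ▸ hω.le
  have hfin : μ.real {ω | (Real.exp 12 * (p * v)) ^ p < ((∑ j, F j (ξ j ω)) ^ (2*p)).trace.re}
      ≤ Fintype.card N * Real.exp (-(12 * p)) := by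
    have h5 : (Real.exp 12 * (p * v)) ^ p * μ.real {ω | (Real.exp 12 * (p * v)) ^ p ≤
        ((∑ j, F j (ξ j ω)) ^ (2*p)).trace.re} ≤
        (Real.exp 12 * (p * v)) ^ p * (Fintype.card N * Real.exp (-(12 * p))) := by
      refine (hM.trans h2).trans (le_of_eq ?_)
      have : Real.exp 12 ^ p * Real.exp (-(12 * p)) = 1 := by
        rw [← Real.exp_nat_mul, ← Real.exp_add]; ring_nf; exact Real.exp_zero
      rw [mul_pow (Real.exp 12)]
      linear_combination (-(Fintype.card N * (p * v) ^ p) : ℝ) * this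
    exact hsub.trans (le_of_mul_le_mul_left h5 hpos)
  rw [← ENNReal.ofReal_toReal (measure_ne_top μ _)]
  exact ENNReal.ofReal_le_ofReal hfin

end
end

section
open scoped ComplexOrder
/-- the completely positive map -/
noncomputable def lebPhi {n d : ℕ} (w : Fin d → Matrix (Fin n) (Fin n) ℂ)
    (X : Matrix (Fin n) (Fin n) ℂ) : Matrix (Fin n) (Fin n) ℂ :=
  (d : ℂ)⁻¹ • ∑ s, w s * X * (w s)ᴴ

/-- its matrix -/
noncomputable def lebM {n d : ℕ} (w : Fin d → Matrix (Fin n) (Fin n) ℂ) :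
    Matrix (Fin n × Fin n) (Fin n × Fin n) ℂ :=
  (d : ℂ)⁻¹ • ∑ s, (w s ⊗ₖ (w s).map (starRingEnd ℂ))

lemma lebPhi_vec {n d : ℕ} (w : Fin d → Matrix (Fin n) (Fin n) ℂ)
    (X : Matrix (Fin n) (Fin n) ℂ) :
    lebM w *ᵥ (fun p => X p.1 p.2) = fun p => lebPhi w X p.1 p.2 := by
  funext p
  simp only [lebM, lebPhi, smul_mulVec, Pi.smul_apply, Matrix.smul_apply, Matrix.sum_mulVec,
    Finset.sum_apply, Matrix.sum_apply]
  congr 1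
  refine Finset.sum_congr rfl fun s _ => ?_
  simp only [mulVec, dotProduct, Fintype.sum_prod_type, kroneckerMap_apply, map_apply, mul_apply,
    conjTranspose_apply, Finset.sum_mul, starRingEnd_apply]
  rw [Finset.sum_comm]
  refine Finset.sum_congr rfl fun i _ => Finset.sum_congr rfl fun j _ => ?_
  ring

lemma lebPhi_psd {n d : ℕ} (w : Fin d → Matrix (Fin n) (Fin n) ℂ)
    {X : Matrix (Fin n) (Fin n) ℂ} (hX : X.PosSemidef) : (lebPhi w X).PosSemidef := by
  unfold lebPhi
  refine PosSemidef.smul (posSemidef_sum _ fun s _ => hX.mul_mul_conjTranspose_same _) ?_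
  have : (0:ℝ) ≤ (d:ℝ)⁻¹ := by positivity
  have e : (d:ℂ)⁻¹ = (((d:ℝ)⁻¹ : ℝ) : ℂ) := by push_cast; rfl
  rw [e]
  exact Complex.zero_le_real.2 this

lemma lebPhi_add {n d : ℕ} (w : Fin d → Matrix (Fin n) (Fin n) ℂ)
    (X Y : Matrix (Fin n) (Fin n) ℂ) : lebPhi w (X + Y) = lebPhi w X + lebPhi w Y := by
  simp only [lebPhi, Matrix.mul_add, Matrix.add_mul, Finset.sum_add_distrib, smul_add]

lemma lebPhi_smul {n d : ℕ} (w : Fin d → Matrix (Fin n) (Fin n) ℂ) (c : ℂ)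
    (X : Matrix (Fin n) (Fin n) ℂ) : lebPhi w (c • X) = c • lebPhi w X := by
  simp only [lebPhi, Matrix.mul_smul, Matrix.smul_mul, ← Finset.smul_sum, smul_comm c]

lemma lebPhi_iter_vec {n d : ℕ} (w : Fin d → Matrix (Fin n) (Fin n) ℂ)
    (X : Matrix (Fin n) (Fin n) ℂ) (k : ℕ) :
    (lebM w ^ k) *ᵥ (fun p => X p.1 p.2) = fun p => ((lebPhi w)^[k] X) p.1 p.2 := by
  induction k with
  | zero => simp
  | succ k ih =>
    rw [pow_succ', ← mulVec_mulVec, ih, lebPhi_vec, Function.iterate_succ_apply']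

section
attribute [local instance] Matrix.linftyOpNormedRing Matrix.linftyOpNormedAlgebra
  Matrix.linftyOpNormedAddCommGroup Matrix.linftyOpNormedSpace

/-- Gelfand: entries of powers are small -/
lemma leb_gelfand {N : Type*} [Fintype N] [DecidableEq N] [Nonempty N] (M : Matrix N N ℂ)
    {r : ℝ} (hr : 0 < r)
    (h : ∀ z ∈ M.charpoly.roots, ‖z‖ < r) {c : ℝ} (hc : 0 < c) :
    ∃ k : ℕ, 1 ≤ k ∧ ∀ i, ∑ j, ‖(M ^ k) i j‖ ≤ c * r ^ k := by
  have hsr : spectralRadius ℂ M < ENNReal.ofReal r := by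
    have hne : (spectrum ℂ M).Nonempty := spectrum.nonempty M
    obtain ⟨z, hz, hzr⟩ := spectrum.exists_nnnorm_eq_spectralRadius_of_nonempty hne
    rw [← hzr]
    have hz' : z ∈ M.charpoly.roots := by
      rw [Polynomial.mem_roots (Matrix.charpoly_monic M).ne_zero]
      exact Matrix.mem_spectrum_iff_isRoot_charpoly.1 hz
    have := h z hz'
    rw [ENNReal.ofReal, ENNReal.coe_lt_coe, ← NNReal.coe_lt_coe, Real.coe_toNNReal _ hr.le]
    exact this
  obtain ⟨q, hq1, hq2⟩ := ENNReal.lt_iff_exists_nnreal_btwn.1 hsr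
  have hqr : (q:ℝ) < r := by
    rw [ENNReal.ofReal, ENNReal.coe_lt_coe, ← NNReal.coe_lt_coe, Real.coe_toNNReal _ hr.le] at hq2
    exact hq2
  have ht := spectrum.pow_nnnorm_pow_one_div_tendsto_nhds_spectralRadius M
  have ev1 := ht.eventually (gt_mem_nhds hq1)
  have hlim : Filter.Tendsto (fun k : ℕ => ((q:ℝ)/r)^k) Filter.atTop (nhds 0) :=
    tendsto_pow_atTop_nhds_zero_of_lt_one (by positivity) ((div_lt_one hr).2 hqr)
  have ev2 := hlim.eventually (gt_mem_nhds hc)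
  obtain ⟨k, ⟨hk1, hk2⟩, hk3⟩ := ((ev1.and ev2).and (Filter.eventually_ge_atTop 1)).exists
  refine ⟨k, hk3, fun i => ?_⟩
  have hk0 : (0:ℝ) < k := by exact_mod_cast hk3
  have h1 : ‖M ^ k‖ ≤ (q:ℝ) ^ k := by
    have h2 : ((‖M ^ k‖₊ : ℝ≥0∞) ^ (1 / (k:ℝ))) ^ (k:ℝ) ≤ ((q : ℝ≥0∞)) ^ (k:ℝ) :=
      ENNReal.rpow_le_rpow hk1.le hk0.le
    rw [← ENNReal.rpow_mul, one_div, inv_mul_cancel₀ hk0.ne', ENNReal.rpow_one,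
      ENNReal.rpow_natCast, ← ENNReal.coe_pow, ENNReal.coe_le_coe, ← NNReal.coe_le_coe] at h2
    simpa using h2
  have h3 : ∑ j, ‖(M ^ k) i j‖ ≤ ‖M ^ k‖ := by
    rw [Matrix.linfty_opNorm_def]
    have := Finset.le_sup (f := fun i => ∑ j, ‖(M ^ k) i j‖₊) (Finset.mem_univ i)
    have h4 := NNReal.coe_le_coe.2 this
    simpa using h4
  have h5 : (q:ℝ)^k ≤ c * r^k := by
    rw [div_pow, div_lt_iff₀ (by positivity)] at hk2
    exact hk2.le
  linarith
end

lemma leb_psd_of_entries {n : ℕ} {Z : Matrix (Fin n) (Fin n) ℂ} (hZ : Z.IsHermitian) {t : ℝ}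
    (h : ∀ i j, ‖Z i j‖ ≤ t / n) : ((t:ℂ) • (1 : Matrix (Fin n) (Fin n) ℂ) - Z).PosSemidef := by
  have hH : ((t:ℂ) • (1 : Matrix (Fin n) (Fin n) ℂ) - Z).IsHermitian := by
    refine IsHermitian.sub ?_ hZ
    simp [Matrix.IsHermitian, conjTranspose_smul]
  refine PosSemidef.of_dotProduct_mulVec_nonneg hH fun v => ?_
  have himz : (star v ⬝ᵥ ((t:ℂ) • (1 : Matrix (Fin n) (Fin n) ℂ) - Z) *ᵥ v).im = 0 :=
    hH.im_star_dotProduct_mulVec_self v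
  rw [Complex.le_def]
  refine ⟨?_, by rw [himz]; rfl⟩
  rw [sub_mulVec, smul_mulVec, one_mulVec, dotProduct_sub, dotProduct_smul]
  have e1 : (star v ⬝ᵥ v) = ((∑ i, ‖v i‖ ^ 2 : ℝ) : ℂ) := by
    simp only [dotProduct, Pi.star_apply]
    push_cast
    refine Finset.sum_congr rfl fun i _ => ?_
    have := Complex.conj_mul' (v i)
    simpa using this
  have e2 : ‖star v ⬝ᵥ Z *ᵥ v‖ ≤ t * ∑ i, ‖v i‖ ^ 2 := by
    have : star v ⬝ᵥ Z *ᵥ v = ∑ i, ∑ j, star (v i) * (Z i j * v j) := by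
      simp only [dotProduct, mulVec, Finset.mul_sum, Pi.star_apply]
    rw [this]
    rcases Nat.eq_zero_or_pos n with h0 | h0
    · subst h0; simp
    have hn : (0:ℝ) < n := by exact_mod_cast h0
    have ht : 0 ≤ t / n := (norm_nonneg _).trans (h ⟨0, h0⟩ ⟨0, h0⟩)
    calc _ ≤ ∑ i, ∑ j, ‖star (v i) * (Z i j * v j)‖ :=
          (norm_sum_le _ _).trans (Finset.sum_le_sum fun i _ => norm_sum_le _ _)
      _ ≤ ∑ i : Fin n, ∑ j : Fin n, t / n * ((‖v i‖^2 + ‖v j‖^2) / 2) := by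
          refine Finset.sum_le_sum fun i _ => Finset.sum_le_sum fun j _ => ?_
          rw [norm_mul, norm_mul, norm_star]
          have h1 := h i j
          calc ‖v i‖ * (‖Z i j‖ * ‖v j‖) = ‖Z i j‖ * (‖v i‖ * ‖v j‖) := by ring
            _ ≤ t / n * (‖v i‖ * ‖v j‖) := mul_le_mul_of_nonneg_right h1 (by positivity)
            _ ≤ _ := mul_le_mul_of_nonneg_left (by nlinarith [sq_nonneg (‖v i‖ - ‖v j‖)]) ht
      _ = _ := by
          simp only [← Finset.mul_sum, ← Finset.sum_div, Finset.sum_add_distrib, Finset.sum_const,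
            Finset.card_univ, Fintype.card_fin, nsmul_eq_mul]
          field_simp; ring
  have e3 : (star v ⬝ᵥ Z *ᵥ v).re ≤ t * ∑ i, ‖v i‖ ^ 2 := (Complex.re_le_norm _).trans e2
  rw [e1, smul_eq_mul, ← Complex.ofReal_mul, Complex.sub_re, Complex.ofReal_re, Complex.zero_re]
  linarith

/-- Perron-type supersolution -/
lemma leb_super {n d : ℕ} (hn : 0 < n) (w : Fin d → Matrix (Fin n) (Fin n) ℂ) {r : ℝ} (hr : 0 < r)
    (h : ∀ z ∈ (lebM w).charpoly.roots, ‖z‖ < r) :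
    ∃ X : Matrix (Fin n) (Fin n) ℂ, X.PosDef ∧ ((r:ℂ) • X - lebPhi w X).PosSemidef := by
  have hn' : (0:ℝ) < n := by exact_mod_cast hn
  have : Nonempty (Fin n) := ⟨⟨0, hn⟩⟩
  obtain ⟨k, hk, hks⟩ := leb_gelfand (lebM w) hr h (c := 1 / n) (by positivity)
  have hps : ∀ j, ((lebPhi w)^[j] 1).PosSemidef := by
    intro j
    induction j with
    | zero => exact PosSemidef.one
    | succ j ih => rw [Function.iterate_succ_apply']; exact lebPhi_psd w ih
  have hZ : (((r^k : ℝ) : ℂ) • (1 : Matrix (Fin n) (Fin n) ℂ) - (lebPhi w)^[k] 1).PosSemidef := by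
    refine leb_psd_of_entries (hps k).1 fun i j => ?_
    have h1 := congrFun (lebPhi_iter_vec w 1 k) (i, j)
    simp only at h1
    rw [← h1]
    simp only [mulVec, dotProduct]
    refine (norm_sum_le _ _).trans ?_
    refine (Finset.sum_le_sum (g := fun q => ‖(lebM w ^ k) (i, j) q‖) fun q _ => ?_).trans
      ((hks (i, j)).trans (le_of_eq (by ring)))
    rw [norm_mul]
    refine mul_le_of_le_one_right (norm_nonneg _) ?_
    rw [Matrix.one_apply]; split_ifs <;> simp
  have hrc : (r:ℂ) ≠ 0 := by exact_mod_cast hr.ne'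
  -- partial sums
  have hsum : ∀ m : ℕ, ∃ X : Matrix (Fin n) (Fin n) ℂ, X.PosDef ∧
      (r:ℂ) • X - lebPhi w X
        = ((r^m : ℝ) : ℂ)⁻¹ • (((r^(m+1) : ℝ) : ℂ) • (1 : Matrix (Fin n) (Fin n) ℂ)
          - (lebPhi w)^[m+1] 1) := by
    intro m
    induction m with
    | zero => exact ⟨1, PosDef.one, by simp⟩
    | succ m ih =>
      obtain ⟨X, hX, hXe⟩ := ih
      refine ⟨X + ((r^(m+1) : ℝ) : ℂ)⁻¹ • (lebPhi w)^[m+1] 1, ?_, ?_⟩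
      · refine hX.add_posSemidef ((hps _).smul ?_)
        have : (0:ℝ) ≤ (r^(m+1))⁻¹ := by positivity
        exact_mod_cast this
      · rw [lebPhi_add, lebPhi_smul, ← Function.iterate_succ_apply' (lebPhi w)]
        have : (r:ℂ) • (X + ((r^(m+1) : ℝ) : ℂ)⁻¹ • (lebPhi w)^[m+1] 1)
          - (lebPhi w X + ((r^(m+1) : ℝ) : ℂ)⁻¹ • (lebPhi w)^[(m+1).succ] 1)
          = ((r:ℂ) • X - lebPhi w X) + ((r:ℂ) • ((r^(m+1) : ℝ) : ℂ)⁻¹ • (lebPhi w)^[m+1] 1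
            - ((r^(m+1) : ℝ) : ℂ)⁻¹ • (lebPhi w)^[(m+1).succ] 1) := by
          rw [smul_add]; abel
        rw [this, hXe]
        simp only [smul_sub, smul_smul]
        have c1 : ((r^m : ℝ) : ℂ)⁻¹ = (r:ℂ) * ((r^(m+1) : ℝ) : ℂ)⁻¹ := by
          push_cast; rw [pow_succ]; field_simp
        have c2 : ((r^m : ℝ) : ℂ)⁻¹ * ((r^(m+1) : ℝ) : ℂ) =
            ((r^(m+1) : ℝ) : ℂ)⁻¹ * ((r^(m+1+1) : ℝ) : ℂ) := by
          push_cast; rw [pow_succ (r:ℂ) (m+1), pow_succ (r:ℂ) m]; field_simp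
        rw [c2, c1]
        abel
  obtain ⟨m, rfl⟩ : ∃ m, k = m + 1 := ⟨k - 1, by omega⟩
  obtain ⟨X, hX, hXe⟩ := hsum m
  refine ⟨X, hX, ?_⟩
  rw [hXe]
  refine hZ.smul ?_
  have : (0:ℝ) ≤ (r^m)⁻¹ := by positivity
  exact_mod_cast this

/-- normalized squared entries in a basis -/
noncomputable def lebC {n d : ℕ} (w : Fin d → Matrix (Fin n) (Fin n) ℂ)
    (U : Matrix (Fin n) (Fin n) ℂ) (a b : Fin n) : ℝ :=
  (d:ℝ)⁻¹ * ∑ s, ‖(Uᴴ * w s * U) a b‖ ^ 2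

lemma lebPhi_diag {n d : ℕ} (w : Fin d → Matrix (Fin n) (Fin n) ℂ)
    (U : Matrix (Fin n) (Fin n) ℂ) (z : Fin n → ℝ) (a : Fin n) :
    (Uᴴ * lebPhi w (U * diagonal (fun i => (z i : ℂ)) * Uᴴ) * U) a a
      = ((∑ b, lebC w U a b * z b : ℝ) : ℂ) := by
  have h1 : Uᴴ * lebPhi w (U * diagonal (fun i => (z i : ℂ)) * Uᴴ) * U
      = (d:ℂ)⁻¹ • ∑ s, (Uᴴ * w s * U) * diagonal (fun i => (z i : ℂ)) * (Uᴴ * w s * U)ᴴ := by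
    unfold lebPhi
    rw [Matrix.mul_smul, Matrix.smul_mul, Matrix.mul_sum, Matrix.sum_mul]
    refine congrArg (fun Y : Matrix (Fin n) (Fin n) ℂ => (d:ℂ)⁻¹ • Y) ?_
    refine Finset.sum_congr rfl fun s _ => ?_
    rw [conjTranspose_mul (Uᴴ * w s) U, conjTranspose_mul Uᴴ (w s), conjTranspose_conjTranspose]
    simp only [Matrix.mul_assoc]
  rw [h1, Matrix.smul_apply, Matrix.sum_apply]
  have h2 : ∀ s, ((Uᴴ * w s * U) * diagonal (fun i => (z i : ℂ)) * (Uᴴ * w s * U)ᴴ) a a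
      = ∑ b, ((‖(Uᴴ * w s * U) a b‖ ^ 2 * z b : ℝ) : ℂ) := by
    intro s
    rw [Matrix.mul_apply]
    refine Finset.sum_congr rfl fun b _ => ?_
    rw [mul_diagonal, conjTranspose_apply]
    have h := Complex.mul_conj ((Uᴴ * w s * U) a b)
    rw [Complex.normSq_eq_norm_sq] at h
    push_cast at h ⊢
    rw [← h, starRingEnd_apply]; ring
  simp only [h2, lebC, smul_eq_mul]
  push_cast
  rw [Finset.sum_comm, Finset.mul_sum]
  refine Finset.sum_congr rfl fun b _ => ?_
  rw [← Finset.sum_mul, mul_assoc]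

lemma leb_det1 {n d : ℕ} (hn : 0 < n) (w : Fin d → Matrix (Fin n) (Fin n) ℂ) {r : ℝ} (hr : 0 < r)
    (h : ∀ z ∈ (lebM w).charpoly.roots, ‖z‖ < r) :
    ∃ (U : Matrix (Fin n) (Fin n) ℂ) (x : Fin n → ℝ), U * Uᴴ = 1 ∧ Uᴴ * U = 1 ∧ (∀ a, 0 < x a) ∧
      ∑ a, ∑ b, lebC w U a b * (x b / x a) ≤ r * n := by
  obtain ⟨X, hX, hP⟩ := leb_super hn w hr h
  obtain ⟨U, x, h1, h2, rfl⟩ := leb_spec hX.1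
  have hx : ∀ a, 0 < x a := by
    have hd : (diagonal (fun i => (x i : ℂ))).PosDef := by
      have hU : IsUnit U := ⟨⟨U, Uᴴ, h1, h2⟩, rfl⟩
      have := hX
      have h3 : (Uᴴ * (U * diagonal (fun i => (x i : ℂ)) * Uᴴ) * U).PosDef := by
        refine hX.conjTranspose_mul_mul_same ?_
        exact Matrix.mulVec_injective_of_isUnit hU
      have h4 : Uᴴ * (U * diagonal (fun i => (x i : ℂ)) * Uᴴ) * U
          = diagonal (fun i => (x i : ℂ)) := by
        calc _ = (Uᴴ * U) * diagonal (fun i => (x i : ℂ)) * (Uᴴ * U) := by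
              simp only [Matrix.mul_assoc]
          _ = _ := by simp [h2]
      rwa [h4] at h3
    intro a
    have := (posDef_diagonal_iff.1 hd) a
    exact_mod_cast this
  refine ⟨U, x, h1, h2, hx, ?_⟩
  have hrow : ∀ a, ∑ b, lebC w U a b * (x b / x a) ≤ r := by
    intro a
    have h5 := (hP.conjTranspose_mul_mul_same U).diag_nonneg (i := a)
    rw [Matrix.mul_sub, Matrix.sub_mul, Matrix.sub_apply, lebPhi_diag] at h5
    have h4 : Uᴴ * ((r:ℂ) • (U * diagonal (fun i => (x i : ℂ)) * Uᴴ)) * U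
          = (r:ℂ) • diagonal (fun i => (x i : ℂ)) := by
      calc _ = (r:ℂ) • ((Uᴴ * U) * diagonal (fun i => (x i : ℂ)) * (Uᴴ * U)) := by
              simp only [Matrix.mul_assoc, Matrix.mul_smul, Matrix.smul_mul]
          _ = _ := by simp [h2]
    rw [h4, Matrix.smul_apply, diagonal_apply_eq, smul_eq_mul, ← Complex.ofReal_mul,
      ← Complex.ofReal_sub] at h5
    have h6 : 0 ≤ r * x a - ∑ b, lebC w U a b * x b := by exact_mod_cast h5
    have h7 : ∑ b, lebC w U a b * (x b / x a) = (∑ b, lebC w U a b * x b) / x a := by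
      rw [Finset.sum_div]; exact Finset.sum_congr rfl fun b _ => by ring
    rw [h7, div_le_iff₀ (hx a)]; linarith
  refine (Finset.sum_le_sum fun a _ => hrow a).trans (le_of_eq ?_)
  simp [mul_comm]
end

section
open scoped ComplexOrder
lemma leb_frob {n : ℕ} (A : Matrix (Fin n) (Fin n) ℂ) :
    ((∑ i, ∑ j, ‖A i j‖ ^ 2 : ℝ) : ℂ) = (A * Aᴴ).trace := by
  rw [Matrix.trace]
  push_cast
  refine Finset.sum_congr rfl fun i _ => ?_
  rw [Matrix.diag_apply, Matrix.mul_apply]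
  refine Finset.sum_congr rfl fun j _ => ?_
  rw [conjTranspose_apply]
  have := Complex.mul_conj' (A i j)
  simpa using this.symm

lemma leb_frob_unit {n : ℕ} {U : Matrix (Fin n) (Fin n) ℂ} (h1 : U * Uᴴ = 1)
    (A : Matrix (Fin n) (Fin n) ℂ) :
    ∑ a, ∑ b, ‖(Uᴴ * A * U) a b‖ ^ 2 = ∑ i, ∑ j, ‖A i j‖ ^ 2 := by
  have : ((∑ a, ∑ b, ‖(Uᴴ * A * U) a b‖ ^ 2 : ℝ) : ℂ) = ((∑ i, ∑ j, ‖A i j‖ ^ 2 : ℝ) : ℂ) := by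
    rw [leb_frob, leb_frob, conjTranspose_mul (Uᴴ * A) U, conjTranspose_mul Uᴴ A,
      conjTranspose_conjTranspose]
    calc _ = (Uᴴ * (A * (U * Uᴴ) * Aᴴ * U)).trace := by simp only [Matrix.mul_assoc]
      _ = ((A * (U * Uᴴ) * Aᴴ * U) * Uᴴ).trace := Matrix.trace_mul_comm _ _
      _ = (A * (U * Uᴴ) * Aᴴ * (U * Uᴴ)).trace := by simp only [Matrix.mul_assoc]
      _ = _ := by rw [h1, Matrix.mul_one, Matrix.mul_one]
  exact_mod_cast this

lemma lebC_sum {n d : ℕ} {U : Matrix (Fin n) (Fin n) ℂ} (h1 : U * Uᴴ = 1)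
    (A : Fin d → Matrix (Fin n) (Fin n) ℂ) :
    ∑ a, ∑ b, lebC A U a b = (d:ℝ)⁻¹ * ∑ s, ∑ i, ∑ j, ‖A s i j‖ ^ 2 := by
  simp only [lebC, ← Finset.mul_sum]
  congr 1
  have : ∀ s, ∑ i, ∑ j, ‖A s i j‖ ^ 2 = ∑ a, ∑ b, ‖(Uᴴ * A s * U) a b‖ ^ 2 :=
    fun s => (leb_frob_unit h1 (A s)).symm
  simp only [this]
  exact (Finset.sum_congr rfl fun a _ => Finset.sum_comm).trans Finset.sum_comm

lemma leb_sq_lower {a b : ℂ} {q : ℝ} (hq : 0 < q) :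
    (1 - 1/q) * ‖a‖^2 - q * ‖b‖^2 ≤ ‖a + b‖^2 := by
  have h1 : ‖a‖ - ‖b‖ ≤ ‖a + b‖ := by
    have := norm_sub_le (a + b) b
    simp only [add_sub_cancel_right] at this; linarith
  have h2 : ‖b‖ - ‖a‖ ≤ ‖a + b‖ := by
    have := norm_sub_le (a + b) a
    simp only [add_sub_cancel_left] at this; linarith
  have h3 : (‖a‖ - ‖b‖)^2 ≤ ‖a + b‖^2 := sq_le_sq' (by linarith) h1
  have h4 : 0 ≤ (‖a‖ / q - ‖b‖)^2 * q := by positivity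
  have h5 : (‖a‖ / q - ‖b‖)^2 * q = 1/q * ‖a‖^2 - 2 * ‖a‖ * ‖b‖ + q * ‖b‖^2 := by
    field_simp
    ring
  nlinarith [sq_nonneg ‖b‖]

lemma leb_frob_diag {n : ℕ} {U : Matrix (Fin n) (Fin n) ℂ} (h2 : Uᴴ * U = 1) (u : Fin n → ℝ) :
    ∑ p : Fin n × Fin n, ‖(U * diagonal (fun i => (u i : ℂ)) * Uᴴ) p.1 p.2‖ ^ 2 = ∑ a, u a ^ 2 := by
  rw [Fintype.sum_prod_type]
  have : ((∑ i, ∑ j, ‖(U * diagonal (fun i => (u i : ℂ)) * Uᴴ) i j‖ ^ 2 : ℝ) : ℂ)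
      = ((∑ a, u a ^ 2 : ℝ) : ℂ) := by
    rw [leb_frob, conjTranspose_mul, conjTranspose_mul, conjTranspose_conjTranspose,
      diagonal_conjTranspose]
    have e : (star fun i => (u i : ℂ)) = fun i => (u i : ℂ) := by
      funext i; simp
    rw [e]
    calc _ = (U * (diagonal (fun i => (u i : ℂ)) * (Uᴴ * U) * diagonal (fun i => (u i : ℂ))
            * Uᴴ)).trace := by simp only [Matrix.mul_assoc]
      _ = (diagonal (fun i => (u i : ℂ)) * (Uᴴ * U) * diagonal (fun i => (u i : ℂ))
            * (Uᴴ * U)).trace := by rw [Matrix.trace_mul_comm]; simp only [Matrix.mul_assoc]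
      _ = _ := by
        rw [h2, Matrix.mul_one, Matrix.mul_one, diagonal_mul_diagonal, trace_diagonal]
        push_cast
        exact Finset.sum_congr rfl fun a _ => by ring
  exact_mod_cast this

lemma leb_tr_diag {n : ℕ} {U : Matrix (Fin n) (Fin n) ℂ} (h2 : Uᴴ * U = 1) (u : Fin n → ℝ) :
    ∑ i, (U * diagonal (fun i => (u i : ℂ)) * Uᴴ) i i = ((∑ a, u a : ℝ) : ℂ) := by
  have : (U * diagonal (fun i => (u i : ℂ)) * Uᴴ).trace = ((∑ a, u a : ℝ) : ℂ) := by
    rw [Matrix.mul_assoc, Matrix.trace_mul_comm, Matrix.mul_assoc, h2, Matrix.mul_one,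
      trace_diagonal]
    push_cast; rfl
  exact this

/-- The spectral gap condition for a family, in bilinear form -/
def LebGap {n : ℕ} (M : Matrix (Fin n × Fin n) (Fin n × Fin n) ℂ) (ε : ℝ) : Prop :=
  ∀ s : ℝ, 0 < s → ∀ h1 h2 : Fin n × Fin n → ℂ,
    ‖∑ p, star (h1 p) * (M *ᵥ h2) p - (∑ i, star (h1 (i, i))) * (∑ i, h2 (i, i)) / n‖
      ≤ ε / 2 * (s * ∑ p, ‖h1 p‖ ^ 2 + (∑ p, ‖h2 p‖ ^ 2) / s)

lemma lebC_gap {n d : ℕ} {U : Matrix (Fin n) (Fin n) ℂ} (hU2 : Uᴴ * U = 1)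
    (A : Fin d → Matrix (Fin n) (Fin n) ℂ) {ε : ℝ} (hg : LebGap (lebM A) ε)
    (s : ℝ) (hs : 0 < s) (u z : Fin n → ℝ) :
    |∑ a, ∑ b, u a * lebC A U a b * z b - (∑ a, u a) * (∑ b, z b) / n|
        ≤ ε / 2 * (s * ∑ a, u a ^ 2 + (∑ b, z b ^ 2) / s) := by
  set H1 := U * diagonal (fun i => (u i : ℂ)) * Uᴴ with hH1
  set H2 := U * diagonal (fun i => (z i : ℂ)) * Uᴴ with hH2
  have h := hg s hs (fun p => H1 p.1 p.2) (fun p => H2 p.1 p.2)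
  rw [leb_frob_diag hU2, leb_frob_diag hU2, lebPhi_vec] at h
  have hherm : H1ᴴ = H1 := by
    rw [hH1, conjTranspose_mul, conjTranspose_mul, conjTranspose_conjTranspose,
      diagonal_conjTranspose, Matrix.mul_assoc]
    congr 2
    congr 1
    funext i; simp
  have e1 : ∑ i, star (H1 i i) = ((∑ a, u a : ℝ) : ℂ) := by
    rw [← leb_tr_diag hU2]
    refine Finset.sum_congr rfl fun i _ => ?_
    have := congrFun (congrFun hherm i) i
    rw [conjTranspose_apply] at this
    rw [this]
  have e2 : ∑ i, H2 i i = ((∑ a, z a : ℝ) : ℂ) := leb_tr_diag hU2 z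
  have e3 : ∑ p : Fin n × Fin n, star (H1 p.1 p.2) * lebPhi A H2 p.1 p.2
      = ((∑ a, ∑ b, u a * lebC A U a b * z b : ℝ) : ℂ) := by
    have f1 : ∑ p : Fin n × Fin n, star (H1 p.1 p.2) * lebPhi A H2 p.1 p.2
        = (H1 * lebPhi A H2).trace := by
      rw [Fintype.sum_prod_type, Finset.sum_comm, Matrix.trace]
      refine Finset.sum_congr rfl fun i _ => ?_
      rw [Matrix.diag_apply, Matrix.mul_apply]
      refine Finset.sum_congr rfl fun j _ => ?_
      have := congrFun (congrFun hherm i) j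
      rw [conjTranspose_apply] at this
      rw [this]
    have f2 : (H1 * lebPhi A H2).trace
        = (diagonal (fun i => (u i : ℂ)) * (Uᴴ * lebPhi A H2 * U)).trace := by
      rw [hH1, Matrix.mul_assoc, Matrix.mul_assoc, Matrix.trace_mul_comm]
      simp only [Matrix.mul_assoc]
    rw [f1, f2, Matrix.trace]
    push_cast
    refine Finset.sum_congr rfl fun a _ => ?_
    rw [Matrix.diag_apply, diagonal_mul, hH2, lebPhi_diag]
    push_cast
    rw [Finset.mul_sum]
    exact Finset.sum_congr rfl fun b _ => by ring
  simp only at h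
  rw [e1, e2, e3] at h
  have e4 : (((∑ a, ∑ b, u a * lebC A U a b * z b : ℝ) : ℂ) - ((∑ a, u a : ℝ) : ℂ) * ((∑ a, z a : ℝ) : ℂ) / n)
    = ((∑ a, ∑ b, u a * lebC A U a b * z b - (∑ a, u a) * (∑ b, z b) / n : ℝ) : ℂ) := by
    push_cast; rfl
  rw [e4, Complex.norm_real, Real.norm_eq_abs] at h
  exact h

lemma leb_det {n d : ℕ} (hn : 0 < n) (hd : 4 ≤ d) (w A B : Fin d → Matrix (Fin n) (Fin n) ℂ)
    (hw : ∀ s, w s = A s + B s) {r ε γ κ : ℝ} (hr : 0 < r)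
    (hε : 0 < ε) (hε' : 400 * ε ≤ 1/8) (hγ' : γ ≤ 1/8)
    (hA : n * (1 - γ) ≤ (d:ℝ)⁻¹ * ∑ s, ∑ i, ∑ j, ‖A s i j‖ ^ 2)
    (hB : ∑ s, ∑ i, ∑ j, ‖B s i j‖ ^ 2 ≤ κ * n)
    (hgap : LebGap (lebM A) ε)
    (h : ∀ z ∈ (lebM w).charpoly.roots, ‖z‖ < r) :
    (1 - 1 / Real.sqrt d) * (1 - γ - 640001 * ε^2 - 800 * κ / Real.sqrt d) ≤ r := by
  obtain ⟨U, x, hU1, hU2, hx, hle⟩ := leb_det1 hn w hr h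
  have hn' : (0:ℝ) < n := by exact_mod_cast hn
  have hd' : (4:ℝ) ≤ d := by exact_mod_cast hd
  set q := Real.sqrt d with hq
  have hqq : q * q = d := Real.mul_self_sqrt (by linarith)
  have hq2 : 2 ≤ q := by
    rw [hq]; exact Real.le_sqrt_of_sq_le (by linarith)
  have hq0 : 0 < q := by linarith
  have hC0 : ∀ (w : Fin d → Matrix (Fin n) (Fin n) ℂ) a b, 0 ≤ lebC w U a b := fun w a b => by
    unfold lebC; positivity
  set g : Fin n → Fin n → ℝ := fun a b => min (lebC A U a b) (2 * q * lebC B U a b) with hg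
  have hlow : ∀ a b, (1 - 1/q) * lebC A U a b - q * lebC B U a b ≤ lebC w U a b := by
    intro a b
    have : ∀ s, (1 - 1/q) * ‖(Uᴴ * A s * U) a b‖^2 - q * ‖(Uᴴ * B s * U) a b‖^2
        ≤ ‖(Uᴴ * w s * U) a b‖^2 := by
      intro s
      have e : (Uᴴ * w s * U) a b = (Uᴴ * A s * U) a b + (Uᴴ * B s * U) a b := by
        rw [hw, Matrix.mul_add, Matrix.add_mul, Matrix.add_apply]
      rw [e]; exact leb_sq_lower hq0
    have h2 := Finset.sum_le_sum fun s (_ : s ∈ Finset.univ) => this s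
    rw [Finset.sum_sub_distrib, ← Finset.mul_sum, ← Finset.mul_sum] at h2
    have h3 := mul_le_mul_of_nonneg_left h2 (show (0:ℝ) ≤ (d:ℝ)⁻¹ by positivity)
    unfold lebC
    linarith
  have hinv : 1/q ≤ 1/2 := one_div_le_one_div_of_le (by norm_num) hq2
  have hpt : ∀ a b, (1 - 1/q) * (lebC A U a b - g a b) ≤ lebC w U a b := by
    intro a b
    simp only [hg]
    rcases min_cases (lebC A U a b) (2 * q * lebC B U a b) with ⟨h1, h2⟩ | ⟨h1, h2⟩
    · rw [h1, sub_self, mul_zero]; exact hC0 _ _ _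
    · rw [h1]
      refine le_trans ?_ (hlow a b)
      have h4 : 1/2 * (2 * q * lebC B U a b) ≤ (1 - 1/q) * (2 * q * lebC B U a b) :=
        mul_le_mul_of_nonneg_right (by linarith) (mul_nonneg (by linarith) (hC0 _ _ _))
      linarith
  have hgs : ∑ a, ∑ b, g a b ≤ (2 * κ / q) * n := by
    have h1 : ∑ a, ∑ b, g a b ≤ 2 * q * ∑ a, ∑ b, lebC B U a b := by
      simp only [Finset.mul_sum]
      exact Finset.sum_le_sum fun a _ => Finset.sum_le_sum fun b _ => min_le_right _ _
    rw [lebC_sum hU1] at h1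
    refine h1.trans ?_
    have h2 : 2 * q * ((d:ℝ)⁻¹ * ∑ s, ∑ i, ∑ j, ‖B s i j‖ ^ 2)
        ≤ 2 * q * ((d:ℝ)⁻¹ * (κ * n)) := by
      gcongr
    refine h2.trans (le_of_eq ?_)
    rw [← hqq]; field_simp
  have hD := leb_D hn x hx (lebC A U) g ε γ (2 * κ / q) hε hε' hγ'
    (fun a b => le_min (hC0 _ _ _) (mul_nonneg (by linarith) (hC0 _ _ _)))
    (fun a b => min_le_left _ _) hgs (by rw [lebC_sum hU1]; exact hA)
    (fun s hs u z => lebC_gap hU2 A hgap s hs u z)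
  have hfin : (1 - 1/q) * ∑ a, ∑ b, (lebC A U a b - g a b) * (x b / x a)
      ≤ ∑ a, ∑ b, lebC w U a b * (x b / x a) := by
    simp only [Finset.mul_sum]
    refine Finset.sum_le_sum fun a _ => Finset.sum_le_sum fun b _ => ?_
    rw [← mul_assoc]
    exact mul_le_mul_of_nonneg_right (hpt a b) (div_pos (hx b) (hx a)).le
  have h1 := mul_le_mul_of_nonneg_left hD (show 0 ≤ 1 - 1/q by linarith)
  have h2 : n * ((1 - 1/q) * (1 - γ - 640001 * ε^2 - 800 * κ / q)) ≤ n * r := by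
    have e : 800 * κ / q = 400 * (2 * κ / q) := by ring
    rw [e]
    linarith
  exact le_of_mul_le_mul_left h2 hn'
end

section
lemma leb_op_bound {n : ℕ} (A : Matrix (Fin n) (Fin n) ℝ) {t : ℝ} (h : A.opNorm2 ≤ t)
    (v : Fin n → ℝ) : ∑ i, ((A *ᵥ v) i) ^ 2 ≤ t ^ 2 * ∑ i, v i ^ 2 := by
  have h1 := (LinearMap.toContinuousLinearMap (Matrix.toEuclideanLin A)).le_opNorm (WithLp.toLp 2 v)
  have h0 : 0 ≤ A.opNorm2 := norm_nonneg _
  have h2 : ‖LinearMap.toContinuousLinearMap (Matrix.toEuclideanLin A) (WithLp.toLp 2 v)‖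
      ≤ t * ‖WithLp.toLp 2 v‖ := h1.trans (mul_le_mul_of_nonneg_right h (norm_nonneg _))
  have h3 := pow_le_pow_left₀ (norm_nonneg _) h2 2
  rw [mul_pow, EuclideanSpace.norm_sq_eq, EuclideanSpace.norm_sq_eq] at h3
  simpa [Matrix.toLpLin_apply] using h3

lemma leb_rank_one {n : ℕ} (B : Matrix (Fin n) (Fin n) ℝ) (h : B.rank ≤ 1) (x y : Fin n → ℝ) :
    ∃ α β : ℝ, (α ≠ 0 ∨ β ≠ 0) ∧ α • (B *ᵥ x) + β • (B *ᵥ y) = 0 := by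
  rw [Matrix.rank, finrank_le_one_iff] at h
  obtain ⟨v, hv⟩ := h
  obtain ⟨a, ha⟩ := hv ⟨B *ᵥ x, ⟨x, rfl⟩⟩
  obtain ⟨b, hb⟩ := hv ⟨B *ᵥ y, ⟨y, rfl⟩⟩
  have ha' : a • (v : Fin n → ℝ) = B *ᵥ x := congrArg Subtype.val ha
  have hb' : b • (v : Fin n → ℝ) = B *ᵥ y := congrArg Subtype.val hb
  rw [← ha', ← hb']
  by_cases hh : a = 0
  · refine ⟨1, 0, Or.inl one_ne_zero, ?_⟩
    rw [hh]; simp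
  · refine ⟨b, -a, Or.inr (neg_ne_zero.mpr hh), ?_⟩
    rw [smul_smul, smul_smul, neg_mul, mul_comm b a, neg_smul, add_neg_cancel]

lemma leb_eta_alg {α β N S Y t : ℝ} (hN : 0 < N) (hY : 0 ≤ Y) (ht0 : 0 ≤ t) (ht : t < 1)
    (hab : α ≠ 0 ∨ β ≠ 0) (hS : 0 ≤ S)
    (h : α^2 * N + β^2 * S ≤ t^2 * (α^2 * N + β^2 * Y)) : S ≤ t^2 * Y := by
  have ht2 : t^2 < 1 := by nlinarith
  have h1 : 0 ≤ α^2 * N := by positivity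
  by_cases hb : β = 0
  · exfalso
    have ha : α ≠ 0 := by tauto
    have : 0 < α^2 * N := by positivity
    rw [hb] at h
    nlinarith
  · have hb2 : 0 < β^2 := by positivity
    have : β^2 * S ≤ β^2 * (t^2 * Y) := by nlinarith
    exact le_of_mul_le_mul_left this hb2

lemma leb_sq_expand {n : ℕ} (α β : ℝ) (f : Fin n → ℝ) (hf : ∑ i, f i = 0) :
    ∑ i, (α + β * f i) ^ 2 = α^2 * n + β^2 * ∑ i, f i ^ 2 := by
  have : ∀ i, (α + β * f i) ^ 2 = α^2 + 2 * α * β * f i + β^2 * f i ^ 2 := fun i => by ring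
  simp only [this, Finset.sum_add_distrib, ← Finset.mul_sum, hf]
  simp
  ring

lemma leb_eta_gap0 {n : ℕ} (hn : 0 < n) (η : Matrix (Fin n) (Fin n) ℝ)
    (hr : ∀ i, ∑ j, η i j = 1) (hc : ∀ j, ∑ i, η i j = 1) {t : ℝ} (ht : η.sval 1 < t) (ht1 : t < 1)
    (ht0 : 0 ≤ t) (y : Fin n → ℝ) (hy : ∑ i, y i = 0) :
    ∑ i, ((η *ᵥ y) i) ^ 2 ≤ t^2 * ∑ i, y i ^ 2 := by
  haveI : Nonempty {B : Matrix (Fin n) (Fin n) ℝ // B.rank ≤ 1} := ⟨⟨0, by simp⟩⟩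
  obtain ⟨⟨B, hB⟩, hBt⟩ := exists_lt_of_ciInf_lt ht
  obtain ⟨α, β, hab, hz⟩ := leb_rank_one B hB (fun _ => 1) y
  have h1 := leb_op_bound (η - B) hBt.le (fun i => α + β * y i)
  have e1 : (fun i => α + β * y i) = α • (fun _ => (1:ℝ)) + β • y := by
    funext i; simp
  have e2 : η *ᵥ (fun _ => (1:ℝ)) = fun _ => 1 := by
    funext i; simp [Matrix.mulVec, dotProduct, hr]
  have e3 : (η - B) *ᵥ (fun i => α + β * y i) = fun i => α + β * (η *ᵥ y) i := by
    rw [e1, Matrix.sub_mulVec, Matrix.mulVec_add B, Matrix.mulVec_smul, Matrix.mulVec_smul B, hz,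
      Matrix.mulVec_add, Matrix.mulVec_smul, Matrix.mulVec_smul, e2]
    funext i; simp
  have e4 : ∑ i, (η *ᵥ y) i = 0 := by
    simp only [Matrix.mulVec, dotProduct]
    rw [Finset.sum_comm]
    simp only [← Finset.sum_mul, hc, one_mul, hy]
  rw [e3] at h1
  rw [leb_sq_expand α β _ hy] at h1
  have h2 : ∑ i, (α + β * (η *ᵥ y) i)^2 = _ := leb_sq_expand α β _ e4
  rw [h2] at h1
  exact leb_eta_alg (by exact_mod_cast hn) (Finset.sum_nonneg fun _ _ => sq_nonneg _) ht0 ht1 hab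
    (Finset.sum_nonneg fun _ _ => sq_nonneg _) h1

lemma leb_eta_gap1 {n : ℕ} (hn : 0 < n) (η : Matrix (Fin n) (Fin n) ℝ)
    (hr : ∀ i, ∑ j, η i j = 1) (hc : ∀ j, ∑ i, η i j = 1) {t : ℝ} (ht : η.sval 1 < t) (ht1 : t < 1)
    (ht0 : 0 ≤ t) (x : Fin n → ℝ) :
    ∑ i, (∑ j, η i j * x j - (∑ j, x j) / n) ^ 2 ≤ t^2 * ∑ i, x i ^ 2 := by
  have hn' : (n:ℝ) ≠ 0 := by positivity
  set m := (∑ j, x j) / n with hm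
  have hmn : ∑ j, x j = m * n := by rw [hm]; field_simp
  have hy : ∑ i, (x i - m) = 0 := by
    rw [Finset.sum_sub_distrib, hmn]; simp; ring
  have h := leb_eta_gap0 hn η hr hc ht ht1 ht0 (fun i => x i - m) hy
  have e : ∀ i, (η *ᵥ (fun i => x i - m)) i = ∑ j, η i j * x j - m := by
    intro i
    simp only [Matrix.mulVec, dotProduct, mul_sub, Finset.sum_sub_distrib, ← Finset.sum_mul, hr,
      one_mul]
  simp only [e] at h
  refine h.trans (mul_le_mul_of_nonneg_left ?_ (sq_nonneg t))
  have : ∀ i, (x i - m)^2 = x i^2 - 2 * m * x i + m^2 := fun i => by ring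
  simp only [this, Finset.sum_add_distrib, Finset.sum_sub_distrib, ← Finset.mul_sum, hmn]
  simp
  nlinarith [mul_nonneg (Nat.cast_nonneg n : (0:ℝ) ≤ n) (sq_nonneg m)]

lemma leb_amgm {ι : Type*} [Fintype ι] (u v : ι → ℂ) {t s : ℝ} (ht : 0 ≤ t) (hs : 0 < s) {V : ℝ}
    (hv : ∑ i, ‖v i‖^2 ≤ t^2 * V) :
    ‖∑ i, star (u i) * v i‖ ≤ t / 2 * (s * ∑ i, ‖u i‖^2 + V / s) := by
  rcases ht.eq_or_lt with h0 | h0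
  · have : ∀ i, v i = 0 := by
      intro i
      rw [← h0] at hv
      have h1 : ‖v i‖^2 ≤ 0 := by
        refine (Finset.single_le_sum (f := fun i => ‖v i‖^2) (fun _ _ => sq_nonneg _) (Finset.mem_univ i)).trans ?_
        simpa using hv
      simpa using h1
    simp [this, ← h0]
  · have h1 : ∀ i, ‖star (u i) * v i‖ ≤ t * s / 2 * ‖u i‖^2 + 1 / (2 * t * s) * ‖v i‖^2 := by
      intro i
      rw [norm_mul, norm_star]
      have : t * s / 2 * ‖u i‖^2 + 1 / (2 * t * s) * ‖v i‖^2 - ‖u i‖ * ‖v i‖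
        = (t * s * ‖u i‖ - ‖v i‖)^2 / (2 * t * s) := by field_simp; ring
      have h2 : 0 ≤ (t * s * ‖u i‖ - ‖v i‖)^2 / (2 * t * s) := by positivity
      linarith
    refine (norm_sum_le _ _).trans ((Finset.sum_le_sum fun i _ => h1 i).trans ?_)
    rw [Finset.sum_add_distrib, ← Finset.mul_sum, ← Finset.mul_sum]
    have h3 : 1 / (2 * t * s) * ∑ i, ‖v i‖^2 ≤ 1 / (2 * t * s) * (t^2 * V) :=
      mul_le_mul_of_nonneg_left hv (by positivity)
    have h4 : 1 / (2 * t * s) * (t^2 * V) = t / 2 * (V / s) := by field_simp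
    rw [h4] at h3
    linarith

lemma leb_eta_gap {n : ℕ} (hn : 0 < n) (η : Matrix (Fin n) (Fin n) ℝ)
    (hr : ∀ i, ∑ j, η i j = 1) (hc : ∀ j, ∑ i, η i j = 1) {t : ℝ} (ht : η.sval 1 < t) (ht1 : t < 1)
    (ht0 : 0 ≤ t) (u x : Fin n → ℂ) {s : ℝ} (hs : 0 < s) :
    ‖∑ i, star (u i) * (∑ j, (η i j : ℂ) * x j) - (∑ i, star (u i)) * (∑ j, x j) / n‖
      ≤ t / 2 * (s * ∑ i, ‖u i‖^2 + (∑ i, ‖x i‖^2) / s) := by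
  have e : ∑ i, star (u i) * (∑ j, (η i j : ℂ) * x j) - (∑ i, star (u i)) * (∑ j, x j) / n
      = ∑ i, star (u i) * (∑ j, (η i j : ℂ) * x j - (∑ j, x j) / n) := by
    simp only [mul_sub, Finset.sum_sub_distrib, ← Finset.sum_mul]
    rw [mul_div_assoc]
  rw [e]
  refine leb_amgm _ _ ht0 hs ?_
  have h1 := leb_eta_gap1 hn η hr hc ht ht1 ht0 (fun i => (x i).re)
  have h2 := leb_eta_gap1 hn η hr hc ht ht1 ht0 (fun i => (x i).im)
  have e1 : ∀ i, ‖∑ j, (η i j : ℂ) * x j - (∑ j, x j) / n‖^2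
      = (∑ j, η i j * (x j).re - (∑ j, (x j).re) / n) ^ 2
        + (∑ j, η i j * (x j).im - (∑ j, (x j).im) / n) ^ 2 := by
    intro i
    rw [Complex.sq_norm, Complex.normSq_apply]
    simp only [Complex.sub_re, Complex.sub_im, Complex.re_sum, Complex.im_sum,
      Complex.div_natCast_re, Complex.div_natCast_im, Complex.re_ofReal_mul, Complex.im_ofReal_mul]
    ring
  have e2 : ∀ i, ‖x i‖^2 = (x i).re^2 + (x i).im^2 := by
    intro i
    rw [Complex.sq_norm, Complex.normSq_apply]; ring
  simp only [e1, e2, Finset.sum_add_distrib]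
  linarith
end

section
/-- truncation -/
noncomputable def lebChi (c : ℝ) (z : ℂ) : ℂ := if ‖z‖ ^ 2 ≤ c then z else 0

lemma lebChi_meas (c : ℝ) : Measurable (lebChi c) := by
  unfold lebChi
  exact Measurable.ite (measurableSet_le (by fun_prop) measurable_const) measurable_id measurable_const

lemma lebChi_sq {c : ℝ} (hc : 0 ≤ c) (z : ℂ) : ‖lebChi c z‖ ^ 2 ≤ c := by
  unfold lebChi; split_ifs with h
  · exact h
  · simpa using hc

lemma lebChi_le (c : ℝ) (z : ℂ) : ‖lebChi c z‖ ≤ ‖z‖ := by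
  unfold lebChi; split_ifs with h
  · exact le_rfl
  · simp

lemma lebChi_sub_le (c : ℝ) (z : ℂ) : ‖z - lebChi c z‖ ≤ ‖z‖ := by
  unfold lebChi; split_ifs with h
  · simp
  · simp

lemma lebChi_split (c : ℝ) (z : ℂ) : ‖z‖ ^ 2 = ‖lebChi c z‖^2 + ‖z - lebChi c z‖^2 := by
  unfold lebChi; split_ifs with h
  · simp
  · simp

lemma lebChi_tail {c : ℝ} (hc : 0 ≤ c) (z : ℂ) (q k : ℕ) :
    c ^ k * ‖z - lebChi c z‖ ^ (2 * q) ≤ ‖z‖ ^ (2 * (k + q)) ∨ q = 0 := by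
  by_cases hq : q = 0
  · exact Or.inr hq
  left
  unfold lebChi; split_ifs with h
  · rw [sub_self, norm_zero, zero_pow (by omega), mul_zero]; positivity
  · rw [sub_zero, mul_add, pow_add, pow_mul ‖z‖ 2 k]
    exact mul_le_mul_of_nonneg_right (pow_le_pow_left₀ hc (not_le.mp h).le k) (by positivity)

lemma leb_int3 {Ω : Type*} [MeasurableSpace Ω] (μ : Measure Ω) [IsProbabilityMeasure μ]
    (f g : Ω → ℝ) (hf : Integrable f μ) (hg : Integrable g μ) (a c : ℝ) :
    ∫ ω, (f ω - a * g ω + c) ∂μ = ∫ ω, f ω ∂μ - a * ∫ ω, g ω ∂μ + c := by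
  have h1 : Integrable (fun ω => f ω - a * g ω) μ := hf.sub (hg.const_mul a)
  rw [integral_add h1 (integrable_const _), integral_sub hf (hg.const_mul a), integral_const_mul]
  simp

lemma leb_jensen_sq {Ω : Type*} [MeasurableSpace Ω] (μ : Measure Ω) [IsProbabilityMeasure μ]
    (f : Ω → ℝ) (hf : Integrable f μ) (hf2 : Integrable (fun ω => f ω ^ 2) μ) :
    (∫ ω, f ω ∂μ) ^ 2 ≤ ∫ ω, f ω ^ 2 ∂μ := by
  set c := ∫ ω, f ω ∂μ with hc
  have h0 : 0 ≤ ∫ ω, (f ω - c)^2 ∂μ := integral_nonneg fun ω => sq_nonneg _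
  have e : (fun ω => (f ω - c)^2) = fun ω => f ω^2 - 2 * c * f ω + c^2 := by
    funext ω; ring
  rw [e, leb_int3 μ _ f hf2 hf, ← hc] at h0
  nlinarith

lemma leb_pow4 (x y : ℝ) : (x + y)^4 ≤ 8 * x^4 + 8 * y^4 := by
  nlinarith [sq_nonneg (x - y), sq_nonneg (x^2 - y^2), sq_nonneg (x + y), mul_nonneg (sq_nonneg (x-y)) (sq_nonneg (x+y)), sq_nonneg (x*y), mul_nonneg (sq_nonneg (x-y)) (sq_nonneg x), mul_nonneg (sq_nonneg (x-y)) (sq_nonneg y)]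

lemma leb_trunc {Ω : Type*} [MeasurableSpace Ω] (μ : Measure Ω) [IsProbabilityMeasure μ]
    (X : Ω → ℂ) (hX : ∀ p : ℕ, MemLp X p μ) (h0 : ∫ ω, X ω ∂μ = 0) {η κ θ : ℝ}
    (hη : ∫ ω, ‖X ω‖^2 ∂μ = η) (hκ : 1 ≤ κ) (h4 : ∫ ω, ‖X ω‖^4 ∂μ ≤ κ * η^2)
    (h36 : ∫ ω, ‖X ω‖^36 ∂μ ≤ κ * η^18) (hθ : 1 ≤ θ) {m : ℂ}
    (hm : m = ∫ ω, lebChi (η * θ) (X ω) ∂μ) :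
    ‖m‖^2 ≤ η * θ ∧
    ∫ ω, ‖X ω - (lebChi (η * θ) (X ω) - m)‖^2 ∂μ ≤ 4 * κ * η / θ^16 ∧
    ∫ ω, ‖X ω - (lebChi (η * θ) (X ω) - m)‖^4 ∂μ ≤ 16 * κ * η^2 / θ^16 ∧
    η - 2 * κ * η / θ^16 ≤ ∫ ω, ‖lebChi (η * θ) (X ω) - m‖^2 ∂μ ∧
    ∫ ω, ‖lebChi (η * θ) (X ω) - m‖^2 ∂μ ≤ η ∧
    ∫ ω, ‖lebChi (η * θ) (X ω) - m‖^4 ∂μ ≤ 16 * κ * η^2 := by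
  have hη0 : 0 ≤ η := by rw [← hη]; exact integral_nonneg fun ω => sq_nonneg _
  have hc0 : 0 ≤ η * θ := by positivity
  set c := η * θ with hc
  have hXm : AEMeasurable X μ := (hX 0).1.aemeasurable
  have hI : ∀ k : ℕ, Integrable (fun ω => ‖X ω‖^k) μ := fun k => (hX k).integrable_norm_pow'
  have hXi : Integrable X μ := by
    have := hX 1; simpa [memLp_one_iff_integrable] using this
  set Y : Ω → ℂ := fun ω => X ω - lebChi c (X ω) with hY
  set χ : Ω → ℂ := fun ω => lebChi c (X ω) with hχ
  have hχm : AEMeasurable χ μ := (lebChi_meas c).comp_aemeasurable hXm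
  have hYm : AEMeasurable Y μ := hXm.sub hχm
  have hdom : ∀ (Z : Ω → ℂ), AEMeasurable Z μ → (∀ ω, ‖Z ω‖ ≤ ‖X ω‖) → ∀ k : ℕ,
      Integrable (fun ω => ‖Z ω‖^k) μ := by
    intro Z hZ hle k
    refine (hI k).mono' (hZ.norm.pow_const k).aestronglyMeasurable (Filter.Eventually.of_forall fun ω => ?_)
    rw [Real.norm_of_nonneg (by positivity)]
    exact pow_le_pow_left₀ (norm_nonneg _) (hle ω) k
  have hYI := hdom Y hYm (fun ω => lebChi_sub_le _ _)
  have hχI := hdom χ hχm (fun ω => lebChi_le _ _)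
  have hχi : Integrable χ μ := (integrable_norm_iff hχm.aestronglyMeasurable).1 (by simpa using hχI 1)
  have hYi : Integrable Y μ := hXi.sub hχi
  have hmY : m = - ∫ ω, Y ω ∂μ := by
    rw [hY, integral_sub hXi hχi, h0, hm]; ring
  -- tail bounds
  have htail : ∀ q k : ℕ, q ≠ 0 → k + q = 18 → 16 ≤ k → ∫ ω, ‖Y ω‖^(2*q) ∂μ ≤ κ * η^q / θ^16 := by
    intro q k hq hkq hk
    rcases hη0.eq_or_lt with hz | hp
    · have h1 : ∫ ω, ‖Y ω‖^(2*q) ∂μ ≤ 0 := by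
        have hae : ∀ᵐ ω ∂μ, X ω = 0 := by
          have := (integral_eq_zero_iff_of_nonneg (fun ω => sq_nonneg ‖X ω‖) (hI 2)).1 (hη.trans hz.symm)
          filter_upwards [this] with ω h
          simpa using h
        refine le_of_eq ?_
        rw [integral_eq_zero_of_ae]
        filter_upwards [hae] with ω h
        have : ‖Y ω‖ ≤ 0 := by
          have := lebChi_sub_le c (X ω); rw [h, norm_zero] at this; simpa [hY, h] using this
        have h3 : ‖Y ω‖ = 0 := le_antisymm this (norm_nonneg _)
        rw [h3, zero_pow (by omega)]; rfl
      exact h1.trans (by positivity)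
    · have h1 : ∫ ω, c^k * ‖Y ω‖^(2*q) ∂μ ≤ ∫ ω, ‖X ω‖^36 ∂μ := by
        refine integral_mono ((hYI _).const_mul _) (hI 36) fun ω => ?_
        have := (lebChi_tail hc0 (X ω) q k).resolve_right hq
        rw [hkq] at this
        exact this
      rw [integral_const_mul] at h1
      have h2 := h1.trans h36
      have hck : 0 < c^k := by positivity
      have h3 : ∫ ω, ‖Y ω‖^(2*q) ∂μ ≤ κ * η^18 / c^k := by
        rw [le_div_iff₀ hck]; linarith
      refine h3.trans ?_
      have e : κ * η^18 / c^k = κ * η^q / θ^k := by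
        rw [hc, mul_pow, ← hkq, pow_add]
        field_simp
      rw [e]
      exact div_le_div_of_nonneg_left (by positivity) (by positivity) (pow_le_pow_right₀ hθ hk)
  have hY2 : ∫ ω, ‖Y ω‖^2 ∂μ ≤ κ * η / θ^16 := by simpa using htail 1 17 (by omega) (by omega) (by omega)
  have hY4 : ∫ ω, ‖Y ω‖^4 ∂μ ≤ κ * η^2 / θ^16 := by simpa using htail 2 16 (by omega) (by omega) (by omega)
  have hm1 : ‖m‖ ≤ ∫ ω, ‖Y ω‖ ∂μ := by
    rw [hmY, norm_neg]; exact norm_integral_le_integral_norm _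
  have hm2' : ‖m‖^2 ≤ ∫ ω, ‖Y ω‖^2 ∂μ :=
    (pow_le_pow_left₀ (norm_nonneg _) hm1 2).trans
      (leb_jensen_sq μ _ hYi.norm (hYI 2))
  have hm2 := hm2'.trans hY2
  have hm4' : ‖m‖^4 ≤ ∫ ω, ‖Y ω‖^4 ∂μ := by
    have e1 : ∀ x : ℝ, x^4 = (x^2)^2 := fun x => by ring
    simp only [e1]
    refine (pow_le_pow_left₀ (sq_nonneg _) hm2' 2).trans (leb_jensen_sq μ _ (hYI 2) ?_)
    simp only [← e1]; exact hYI 4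
  have hm4 := hm4'.trans hY4
  have hm0 : ‖m‖^2 ≤ c := by
    have h1 : ‖m‖ ≤ ∫ ω, ‖χ ω‖ ∂μ := by
      rw [hm]; exact norm_integral_le_integral_norm _
    refine ((pow_le_pow_left₀ (norm_nonneg _) h1 2).trans
      (leb_jensen_sq μ _ hχi.norm (hχI 2))).trans ?_
    have := integral_mono (hχI 2) (integrable_const c) fun ω => lebChi_sq hc0 (X ω)
    simpa using this
  have h1θ : 1 ≤ θ^16 := one_le_pow₀ hθ
  have hdecomp : η = ∫ ω, ‖χ ω‖^2 ∂μ + ∫ ω, ‖Y ω‖^2 ∂μ := by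
    rw [← integral_add (hχI 2) (hYI 2), ← hη]
    exact integral_congr_ae (Filter.Eventually.of_forall fun ω => lebChi_split c (X ω))
  have ha2 : ∫ ω, ‖χ ω - m‖^2 ∂μ = ∫ ω, ‖χ ω‖^2 ∂μ - ‖m‖^2 := by
    have e : ∀ ω, ‖χ ω - m‖^2 = ‖χ ω‖^2 - 2 * (χ ω * star m).re + ‖m‖^2 := by
      intro ω
      simp only [Complex.sq_norm, Complex.normSq_apply, Complex.sub_re, Complex.sub_im,
        Complex.mul_re, Complex.star_def, Complex.conj_re, Complex.conj_im]
      ring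
    have hi : Integrable (fun ω => χ ω * star m) μ := hχi.mul_const _
    simp only [e]
    rw [leb_int3 μ _ (fun ω => (χ ω * star m).re) (hχI 2) hi.re]
    have e2 : ∫ ω, (χ ω * star m).re ∂μ = ‖m‖^2 := by
      have h1 : ∫ ω, (χ ω * star m).re ∂μ = (∫ ω, χ ω * star m ∂μ).re := integral_re hi
      rw [h1, integral_mul_const, ← hm, Complex.sq_norm, Complex.normSq_apply]
      simp
    rw [e2]
    ring
  have hbY : ∀ ω, X ω - (χ ω - m) = Y ω + m := fun ω => by simp only [hY, hχ]; ring
  refine ⟨hm0, ?_, ?_, ?_, ?_, ?_⟩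
  · have : ∫ ω, ‖X ω - (χ ω - m)‖^2 ∂μ ≤ ∫ ω, (2 * ‖Y ω‖^2 + 2 * ‖m‖^2) ∂μ := by
      refine integral_mono_of_nonneg (Filter.Eventually.of_forall fun ω => sq_nonneg _)
        (((hYI 2).const_mul 2).add (integrable_const _)) (Filter.Eventually.of_forall fun ω => ?_)
      simp only [hbY]
      have h1 := norm_add_le (Y ω) m
      have h2 := pow_le_pow_left₀ (norm_nonneg _) h1 2
      nlinarith [sq_nonneg (‖Y ω‖ - ‖m‖)]
    rw [integral_add ((hYI 2).const_mul 2) (integrable_const _), integral_const_mul] at this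
    simp at this
    have e : 4 * κ * η / θ^16 = 4 * (κ * η / θ^16) := by ring
    rw [e]; linarith
  · have : ∫ ω, ‖X ω - (χ ω - m)‖^4 ∂μ ≤ ∫ ω, (8 * ‖Y ω‖^4 + 8 * ‖m‖^4) ∂μ := by
      refine integral_mono_of_nonneg (Filter.Eventually.of_forall fun ω => by positivity)
        (((hYI 4).const_mul 8).add (integrable_const _)) (Filter.Eventually.of_forall fun ω => ?_)
      simp only [hbY]
      have h1 := norm_add_le (Y ω) m
      exact (pow_le_pow_left₀ (norm_nonneg _) h1 4).trans (leb_pow4 _ _)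
    rw [integral_add ((hYI 4).const_mul 8) (integrable_const _), integral_const_mul] at this
    simp at this
    have e : 16 * κ * η^2 / θ^16 = 16 * (κ * η^2 / θ^16) := by ring
    rw [e]; linarith
  · rw [ha2]
    have e : 2 * κ * η / θ^16 = 2 * (κ * η / θ^16) := by ring
    rw [e]; linarith
  · rw [ha2]
    have : 0 ≤ ∫ ω, ‖Y ω‖^2 ∂μ := integral_nonneg fun ω => sq_nonneg _
    nlinarith [sq_nonneg ‖m‖]
  · have : ∫ ω, ‖χ ω - m‖^4 ∂μ ≤ ∫ ω, (8 * ‖X ω‖^4 + 8 * ‖m‖^4) ∂μ := by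
      refine integral_mono_of_nonneg (Filter.Eventually.of_forall fun ω => by positivity)
        (((hI 4).const_mul 8).add (integrable_const _)) (Filter.Eventually.of_forall fun ω => ?_)
      have h1 : ‖χ ω - m‖ ≤ ‖X ω‖ + ‖m‖ := (norm_sub_le _ _).trans (by gcongr; exact lebChi_le _ _)
      exact (pow_le_pow_left₀ (norm_nonneg _) h1 4).trans (leb_pow4 _ _)
    rw [integral_add ((hI 4).const_mul 8) (integrable_const _), integral_const_mul] at this
    simp at this
    have h5 : κ * η^2 / θ^16 ≤ κ * η^2 := div_le_self (by positivity) h1θ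
    linarith
end

section
lemma leb_cheb {Ω : Type*} [MeasurableSpace Ω] (μ : Measure Ω) [IsProbabilityMeasure μ] {n d : ℕ}
    (W : Ω → Matrix (Fin n) (Fin n) ℂ) (Ws : Fin d → Ω → Matrix (Fin n) (Fin n) ℂ)
    (hW : iIndepFun (fun (p : Fin n × Fin n) ω => W ω p.1 p.2) μ)
    (hi : iIndepFun Ws μ) (hid : ∀ s, IdentDistrib (Ws s) W μ μ)
    (f : Fin n × Fin n → ℂ → ℝ) (hfm : ∀ p, Measurable (f p))
    (hf : ∀ p, MemLp (fun ω => f p (W ω p.1 p.2)) 2 μ) (V : Fin n × Fin n → ℝ)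
    (hV : ∀ p, ∫ ω, (f p (W ω p.1 p.2))^2 ∂μ ≤ V p) {t : ℝ} (ht : 0 < t) :
    μ {ω | t ≤ |∑ s, ∑ p : Fin n × Fin n, f p (Ws s ω p.1 p.2) - d * ∑ p : Fin n × Fin n, ∫ ω, f p (W ω p.1 p.2) ∂μ|}
      ≤ ENNReal.ofReal (d * (∑ p, V p) / t^2) := by
  set g : Matrix (Fin n) (Fin n) ℂ → ℝ := fun M => ∑ p : Fin n × Fin n, f p (M p.1 p.2) with hg
  have hent : ∀ p : Fin n × Fin n, Measurable (fun M : Matrix (Fin n) (Fin n) ℂ => M p.1 p.2) :=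
    fun p => (measurable_pi_apply p.2).comp (measurable_pi_apply p.1)
  have hgm : Measurable g := Finset.measurable_sum _ fun p _ => (hfm p).comp (hent p)
  have hgid : ∀ s, IdentDistrib (g ∘ Ws s) (g ∘ W) μ μ := fun s => (hid s).comp hgm
  have hgW2 : MemLp (g ∘ W) 2 μ := by
    have : (g ∘ W) = fun ω => ∑ p : Fin n × Fin n, f p (W ω p.1 p.2) := rfl
    rw [this]; exact memLp_finsetSum _ fun p _ => hf p
  have hgs2 : ∀ s, MemLp (g ∘ Ws s) 2 μ := fun s => (hgid s).symm.memLp_iff.1 hgW2 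
  have hvar : Var[g ∘ W; μ] ≤ ∑ p, V p := by
    have e : (g ∘ W) = ∑ p : Fin n × Fin n, fun ω => f p (W ω p.1 p.2) := by
      funext ω; simp [hg]
    rw [e, IndepFun.variance_sum (fun p _ => hf p)]
    · refine Finset.sum_le_sum fun p _ => (variance_le_expectation_sq (hf p).1).trans (hV p)
    · intro p _ q _ hpq
      exact (hW.indepFun hpq).comp (hfm p) (hfm q)
  have hvs : Var[∑ s, g ∘ Ws s; μ] ≤ d * ∑ p, V p := by
    rw [IndepFun.variance_sum (fun s _ => hgs2 s)]
    · calc ∑ s, Var[g ∘ Ws s; μ] ≤ ∑ s : Fin d, ∑ p, V p :=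
            Finset.sum_le_sum fun s _ => by rw [(hgid s).variance_eq]; exact hvar
        _ = _ := by simp
    · intro p _ q _ hpq
      exact (hi.indepFun hpq).comp hgm hgm
  have hmean : ∫ ω, (∑ s, g ∘ Ws s) ω ∂μ = d * ∑ p : Fin n × Fin n, ∫ ω, f p (W ω p.1 p.2) ∂μ := by
    simp only [Finset.sum_apply]
    rw [integral_finsetSum _ fun s _ => (hgs2 s).integrable (by norm_num)]
    have : ∀ s, ∫ ω, (g ∘ Ws s) ω ∂μ = ∑ p : Fin n × Fin n, ∫ ω, f p (W ω p.1 p.2) ∂μ := by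
      intro s
      rw [(hgid s).integral_eq, ← integral_finsetSum _ fun p _ => (hf p).integrable (by norm_num)]
      rfl
    rw [Finset.sum_congr rfl fun s _ => this s]
    simp only [Finset.sum_const, Finset.card_univ, Fintype.card_fin, nsmul_eq_mul]
  have h := meas_ge_le_variance_div_sq (memLp_finsetSum' Finset.univ fun s _ => hgs2 s) ht
  rw [hmean] at h
  simp only [Finset.sum_apply] at h
  refine le_trans h (ENNReal.ofReal_le_ofReal ?_)
  gcongr
end

section
open scoped ComplexOrder
/-- Hermitization -/
def lebHerm {N : Type*} (Z : Matrix N N ℂ) : Matrix (N ⊕ N) (N ⊕ N) ℂ := fromBlocks 0 Z Zᴴ 0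

section
variable {N : Type*}

lemma lebHerm_isHermitian (Z : Matrix N N ℂ) : (lebHerm Z).IsHermitian := by
  unfold lebHerm Matrix.IsHermitian
  rw [fromBlocks_conjTranspose]; simp

lemma lebHerm_sub (Y Z : Matrix N N ℂ) : lebHerm Y - lebHerm Z = lebHerm (Y - Z) := by
  unfold lebHerm
  ext a b
  rcases a with a | a <;> rcases b with b | b <;> simp

lemma lebHerm_sum {I : Type*} [Fintype I] (Z : I → Matrix N N ℂ) :
    ∑ i, lebHerm (Z i) = lebHerm (∑ i, Z i) := by
  unfold lebHerm
  ext a b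
  rw [Matrix.sum_apply]
  rcases a with a | a <;> rcases b with b | b <;>
    simp [fromBlocks, Matrix.sum_apply]

lemma lebHerm_sq [Fintype N] (Z : Matrix N N ℂ) :
    lebHerm Z * lebHerm Z = fromBlocks (Z * Zᴴ) 0 0 (Zᴴ * Z) := by
  unfold lebHerm
  rw [fromBlocks_multiply]; simp

lemma leb_blocks_sub [DecidableEq N] (τ : ℂ) (A D : Matrix N N ℂ) :
    τ • (1 : Matrix (N ⊕ N) (N ⊕ N) ℂ) - fromBlocks A 0 0 D
      = fromBlocks (τ • 1 - A) 0 0 (τ • 1 - D) := by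
  rw [← fromBlocks_one, fromBlocks_smul]
  ext a b
  rcases a with a | a <;> rcases b with b | b <;> simp

lemma leb_blocks_psd [Fintype N] [DecidableEq N] {A D : Matrix N N ℂ} (hA : A.PosSemidef) (hD : D.PosSemidef) :
    (fromBlocks A 0 0 D).PosSemidef := by
  refine PosSemidef.of_dotProduct_mulVec_nonneg ?_ fun x => ?_
  · unfold Matrix.IsHermitian
    rw [fromBlocks_conjTranspose, hA.1.eq, hD.1.eq]; simp
  · rw [fromBlocks_mulVec]
    have h1 := hA.dotProduct_mulVec_nonneg (x ∘ Sum.inl)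
    have h2 := hD.dotProduct_mulVec_nonneg (x ∘ Sum.inr)
    have h3 := add_nonneg h1 h2
    simpa [dotProduct, Fintype.sum_sum_type] using h3

lemma leb_blocks_psd1 [Fintype N] {A D : Matrix N N ℂ} (h : (fromBlocks A 0 0 D).PosSemidef) : A.PosSemidef := by
  have := h.submatrix Sum.inl
  have e : (fromBlocks A 0 0 D).submatrix Sum.inl Sum.inl = A := by ext; simp
  rwa [e] at this

lemma leb_blocks_psd2 [Fintype N] {A D : Matrix N N ℂ} (h : (fromBlocks A 0 0 D).PosSemidef) : D.PosSemidef := by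
  have := h.submatrix Sum.inr
  have e : (fromBlocks A 0 0 D).submatrix Sum.inr Sum.inr = D := by ext; simp
  rwa [e] at this

lemma lebHerm_BMM {Θ : Type*} [MeasurableSpace Θ] {F : Θ → Matrix N N ℂ} (hF : LebBMM F) :
    LebBMM fun e => lebHerm (F e) := by
  intro a b
  rcases a with a | a <;> rcases b with b | b
  · exact LebBM.const 0
  · exact hF a b
  · exact (hF b a).star
  · exact LebBM.const 0

end

/-- centered truncation -/
noncomputable def lebT {n : ℕ} (η : Matrix (Fin n) (Fin n) ℝ) (θ : ℝ) (m w : Matrix (Fin n) (Fin n) ℂ) :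
    Matrix (Fin n) (Fin n) ℂ := Matrix.of fun i j => lebChi (η i j * θ) (w i j) - m i j

lemma leb_single_sum {n : ℕ} (f : Fin n × Fin n → ℂ) :
    ∑ p : Fin n × Fin n, Matrix.single p.1 p.2 (f p) = Matrix.of fun i j => f (i, j) := by
  ext i j
  rw [Matrix.sum_apply, Finset.sum_eq_single (i, j)]
  · simp
  · rintro ⟨a, b⟩ _ h
    simp only [Matrix.single_apply]
    rw [if_neg]
    rintro ⟨rfl, rfl⟩; exact h rfl
  · simp

lemma leb_first {Ω : Type*} [MeasurableSpace Ω] (μ : Measure Ω) [IsProbabilityMeasure μ] {n : ℕ}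
    (W : Ω → Matrix (Fin n) (Fin n) ℂ) (hWm : ∀ p : Fin n × Fin n, AEMeasurable (fun ω => W ω p.1 p.2) μ)
    (hW : iIndepFun (fun (p : Fin n × Fin n) ω => W ω p.1 p.2) μ)
    (η : Matrix (Fin n) (Fin n) ℝ) (hη : ∀ i j, 0 ≤ η i j) (hr : ∀ i, ∑ j, η i j = 1)
    (hc : ∀ j, ∑ i, η i j = 1) {θ : ℝ} (hθ : 0 < θ) (m : Matrix (Fin n) (Fin n) ℂ)
    (hm : ∀ i j, m i j = ∫ ω, lebChi (η i j * θ) (W ω i j) ∂μ) (p : ℕ) (hp : 1 ≤ p) :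
    μ {ω | (Real.exp 12 * (p * (4 * θ))) ^ p < ((lebHerm (lebT η θ m (W ω))) ^ (2*p)).trace.re}
      ≤ ENNReal.ofReal (2 * n * Real.exp (-(12 * p))) := by
  set f : Fin n × Fin n → ℂ → ℂ := fun q e => lebChi (η q.1 q.2 * θ) e - m q.1 q.2 with hf
  have hfB : ∀ q, LebBM (f q) := by
    intro q
    refine LebBM.sub ⟨lebChi_meas _, Real.sqrt (η q.1 q.2 * θ), fun e => ?_⟩ (LebBM.const _)
    exact Real.le_sqrt_of_sq_le (lebChi_sq (mul_nonneg (hη _ _) hθ.le) e)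
  have hdiff : ∀ q e1 e2, ‖f q e1 - f q e2‖^2 ≤ 4 * θ * η q.1 q.2 := by
    intro q e1 e2
    have e : f q e1 - f q e2 = lebChi (η q.1 q.2 * θ) e1 - lebChi (η q.1 q.2 * θ) e2 := by
      simp only [hf]; ring
    rw [e]
    have h0 := mul_nonneg (hη q.1 q.2) hθ.le
    have h1 := lebChi_sq h0 e1
    have h2 := lebChi_sq h0 e2
    have h3 := pow_le_pow_left₀ (norm_nonneg _) (norm_sub_le (lebChi (η q.1 q.2 * θ) e1) (lebChi (η q.1 q.2 * θ) e2)) 2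
    nlinarith [sq_nonneg (‖lebChi (η q.1 q.2 * θ) e1‖ - ‖lebChi (η q.1 q.2 * θ) e2‖)]
  have h := leb_K μ (fun (q : Fin n × Fin n) ω => W ω q.1 q.2) hWm hW
    (fun q e => lebHerm (Matrix.single q.1 q.2 (f q e))) ?_ (fun q e => lebHerm_isHermitian _) ?_
    (4 * θ) (by linarith) ?_ p hp
  · have e : ∀ ω, ∑ q : Fin n × Fin n, lebHerm (Matrix.single q.1 q.2 (f q (W ω q.1 q.2)))
        = lebHerm (lebT η θ m (W ω)) := by
      intro ω
      rw [lebHerm_sum, leb_single_sum]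
      rfl
    simp only [e] at h
    have ec : ((Fintype.card (Fin n ⊕ Fin n) : ℕ) : ℝ) = 2 * n := by
      simp; ring
    rw [ec] at h
    exact h
  · intro q
    refine lebHerm_BMM fun i j => ?_
    simp only [Matrix.single_apply]
    by_cases hh : q.1 = i ∧ q.2 = j
    · simp only [hh, and_self, if_true]
      exact hfB q
    · simp only [hh, if_false]
      exact LebBM.const 0
  · have hf0 : ∀ q : Fin n × Fin n, ∫ ω, f q (W ω q.1 q.2) ∂μ = 0 := by
      intro q
      have hi : Integrable (fun ω => lebChi (η q.1 q.2 * θ) (W ω q.1 q.2)) μ := by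
        refine Integrable.of_bound ((lebChi_meas _).comp_aemeasurable (hWm q)).aestronglyMeasurable
          (Real.sqrt (η q.1 q.2 * θ)) (Filter.Eventually.of_forall fun ω => ?_)
        exact Real.le_sqrt_of_sq_le (lebChi_sq (mul_nonneg (hη _ _) hθ.le) _)
      simp only [hf]
      rw [integral_sub hi (integrable_const _), ← hm]
      simp
    have hs0 : ∀ (q : Fin n × Fin n) i j, ∫ ω, Matrix.single q.1 q.2 (f q (W ω q.1 q.2)) i j ∂μ = 0 := by
      intro q i j
      simp only [Matrix.single_apply]
      by_cases hh : q.1 = i ∧ q.2 = j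
      · simp only [hh, and_self, if_true]
        rw [← hh.1, ← hh.2]; exact hf0 q
      · simp [hh]
    intro q a b
    rcases a with a | a <;> rcases b with b | b
    · simp [lebHerm]
    · simpa [lebHerm] using hs0 q a b
    · simp only [lebHerm, fromBlocks_apply₂₁, conjTranspose_apply]
      have := integral_conj (μ := μ) (f := fun ω => Matrix.single q.1 q.2 (f q (W ω q.1 q.2)) b a)
      rw [hs0, map_zero] at this
      exact this
    · simp [lebHerm]
  · intro e
    set x : Fin n × Fin n → ℝ := fun q => ‖f q (e q).1 - f q (e q).2‖^2 with hx
    have e1 : ∀ q : Fin n × Fin n, (lebHerm (Matrix.single q.1 q.2 (f q (e q).1)) - lebHerm (Matrix.single q.1 q.2 (f q (e q).2)))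
        * (lebHerm (Matrix.single q.1 q.2 (f q (e q).1)) - lebHerm (Matrix.single q.1 q.2 (f q (e q).2)))
        = diagonal (Sum.elim (fun i => if q.1 = i then (x q : ℂ) else 0) (fun j => if q.2 = j then (x q : ℂ) else 0)) := by
      intro q
      have hs : Matrix.single q.1 q.2 (f q (e q).1) - Matrix.single q.1 q.2 (f q (e q).2)
          = Matrix.single q.1 q.2 (f q (e q).1 - f q (e q).2) := by
        ext i j; simp only [Matrix.sub_apply, Matrix.single_apply]; split_ifs <;> simp
      rw [lebHerm_sub, lebHerm_sq, hs, conjTranspose_single, single_mul_single_same,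
        single_mul_single_same]
      have hz : ∀ z : ℂ, z * star z = ((‖z‖^2 : ℝ) : ℂ) := fun z => by
        push_cast; exact Complex.mul_conj' z
      rw [mul_comm (star _), hz, ← fromBlocks_diagonal]
      congr 1
      · ext i j; simp [Matrix.single_apply, diagonal_apply, hx]; grind
      · ext i j; simp [Matrix.single_apply, diagonal_apply, hx]; grind
    rw [Finset.sum_congr rfl fun q _ => e1 q]
    have e2 : ∀ g : Fin n × Fin n → (Fin n ⊕ Fin n → ℂ), ∑ q, diagonal (g q) = diagonal (fun a => ∑ q, g q a) := by
      intro g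
      ext a b
      rw [Matrix.sum_apply]
      by_cases hab : a = b
      · subst hab; simp
      · simp [diagonal_apply_ne _ hab]
    rw [e2, ← diagonal_one, ← diagonal_smul, diagonal_sub, posSemidef_diagonal_iff]
    rintro (i | j)
    · simp only [Sum.elim_inl, Pi.smul_apply, Pi.one_apply, smul_eq_mul, mul_one]
      rw [Fintype.sum_prod_type, Finset.sum_eq_single i (by
        intro b _ hb; simp [hb]) (by simp)]
      simp only [if_true]
      rw [sub_nonneg, ← Complex.ofReal_sum, Complex.real_le_real]
      calc ∑ j, x (i, j) ≤ ∑ j, 4 * θ * η i j := Finset.sum_le_sum fun j _ => hdiff (i,j) _ _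
        _ = 4 * θ := by rw [← Finset.mul_sum, hr, mul_one]
    · simp only [Sum.elim_inr, Pi.smul_apply, Pi.one_apply, smul_eq_mul, mul_one]
      rw [Fintype.sum_prod_type, Finset.sum_comm, Finset.sum_eq_single j (by
        intro b _ hb; simp [hb]) (by simp)]
      simp only [if_true]
      rw [sub_nonneg, ← Complex.ofReal_sum, Complex.real_le_real]
      calc ∑ i, x (i, j) ≤ ∑ i, 4 * θ * η i j := Finset.sum_le_sum fun i _ => hdiff (i,j) _ _
        _ = 4 * θ := by rw [← Finset.mul_sum, hc, mul_one]
end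

section
open scoped ComplexOrder
lemma leb_conj_psd {N : Type*} [Fintype N] {Q : Matrix N N ℂ} (h : Q.PosSemidef) :
    (Q.map (starRingEnd ℂ)).PosSemidef := by
  have e : Q.map (starRingEnd ℂ) = Qᵀ := by
    have := h.1.eq
    ext i j
    have h2 := congrFun (congrFun this j) i
    rw [conjTranspose_apply] at h2
    rw [Matrix.map_apply, transpose_apply, ← h2]; rfl
  rw [e]; exact h.transpose

lemma leb_kron_bound {N : Type*} [Fintype N] [DecidableEq N] {Q R : Matrix N N ℂ} {τ : ℝ} (hτ : 0 ≤ τ)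
    (hQ : Q.PosSemidef) (h : ((τ:ℂ) • 1 - Q).PosSemidef) (h' : ((τ:ℂ) • 1 - R).PosSemidef) :
    (((τ^2 : ℝ) : ℂ) • (1 : Matrix (N × N) (N × N) ℂ) - Q ⊗ₖ R).PosSemidef := by
  have e : ((τ^2 : ℝ) : ℂ) • (1 : Matrix (N × N) (N × N) ℂ) - Q ⊗ₖ R
      = ((τ:ℂ) • (1 : Matrix N N ℂ) - Q) ⊗ₖ ((τ:ℂ) • (1 : Matrix N N ℂ)) + Q ⊗ₖ ((τ:ℂ) • (1 : Matrix N N ℂ) - R) := by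
    ext ⟨i, j⟩ ⟨k, l⟩
    simp only [Matrix.sub_apply, Matrix.add_apply, Matrix.smul_apply, kroneckerMap_apply, smul_eq_mul,
      Matrix.one_apply, Prod.mk.injEq]
    push_cast
    by_cases h1 : i = k <;> by_cases h2 : j = l <;> simp [h1, h2] <;> ring
  rw [e]
  refine (h.kronecker ?_).add (hQ.kronecker h')
  exact PosSemidef.one.smul (by exact_mod_cast hτ)

lemma leb_conj_mul {n : ℕ} (A B : Matrix (Fin n) (Fin n) ℂ) :
    (A * B).map (starRingEnd ℂ) = A.map (starRingEnd ℂ) * B.map (starRingEnd ℂ) := Matrix.map_mul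

lemma leb_conj_sub {n : ℕ} (τ : ℝ) (Q : Matrix (Fin n) (Fin n) ℂ) :
    ((τ:ℂ) • 1 - Q).map (starRingEnd ℂ) = (τ:ℂ) • 1 - Q.map (starRingEnd ℂ) := by
  ext i j
  simp [Matrix.one_apply]
  split_ifs <;> simp

lemma leb_herm_kron {n : ℕ} {A : Matrix (Fin n) (Fin n) ℂ} {τ : ℝ} (hτ : 0 ≤ τ)
    (h1 : ((τ:ℂ) • 1 - A * Aᴴ).PosSemidef) (h2 : ((τ:ℂ) • 1 - Aᴴ * A).PosSemidef) :
    (((τ^2 : ℝ) : ℂ) • (1 : Matrix ((Fin n × Fin n) ⊕ (Fin n × Fin n)) _ ℂ)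
      - lebHerm (A ⊗ₖ A.map (starRingEnd ℂ)) * lebHerm (A ⊗ₖ A.map (starRingEnd ℂ))).PosSemidef := by
  have e : (A.map (starRingEnd ℂ))ᴴ = Aᴴ.map (starRingEnd ℂ) := by
    ext i j; simp
  rw [lebHerm_sq, leb_blocks_sub, conjTranspose_kronecker, ← mul_kronecker_mul, ← mul_kronecker_mul,
    e, ← leb_conj_mul, ← leb_conj_mul]
  refine leb_blocks_psd (leb_kron_bound hτ (posSemidef_self_mul_conjTranspose _) h1 ?_)
    (leb_kron_bound hτ (posSemidef_conjTranspose_mul_self _) h2 ?_)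
  · rw [← leb_conj_sub]; exact leb_conj_psd h1
  · rw [← leb_conj_sub]; exact leb_conj_psd h2

lemma leb_sq_sub {N : Type*} [Fintype N] [DecidableEq N] {X Y : Matrix N N ℂ} (hX : X.IsHermitian)
    (hY : Y.IsHermitian) {σ : ℝ} (h1 : ((σ:ℂ) • 1 - X * X).PosSemidef)
    (h2 : ((σ:ℂ) • 1 - Y * Y).PosSemidef) :
    (((4 * σ : ℝ) : ℂ) • 1 - (X - Y) * (X - Y)).PosSemidef := by
  have h3 : ((X + Y) * (X + Y)).PosSemidef := by
    have := posSemidef_conjTranspose_mul_self (X + Y)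
    rwa [(hX.add hY).eq] at this
  have e : ((4 * σ : ℝ) : ℂ) • 1 - (X - Y) * (X - Y)
      = (((σ:ℂ) • 1 - X * X) + ((σ:ℂ) • 1 - X * X)) + (((σ:ℂ) • 1 - Y * Y) + ((σ:ℂ) • 1 - Y * Y))
        + (X + Y) * (X + Y) := by
    have : ((4 * σ : ℝ) : ℂ) • (1 : Matrix N N ℂ) = (σ:ℂ) • 1 + (σ:ℂ) • 1 + (σ:ℂ) • 1 + (σ:ℂ) • 1 := by
      rw [← add_smul, ← add_smul, ← add_smul]; congr 1; push_cast; ring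
    rw [this]; noncomm_ring
  rw [e]
  exact ((h1.add h1).add (h2.add h2)).add h3

lemma lebHerm_smul {N : Type*} (c : ℝ) (Z : Matrix N N ℂ) :
    lebHerm ((c:ℂ) • Z) = (c:ℂ) • lebHerm Z := by
  unfold lebHerm
  rw [fromBlocks_smul, conjTranspose_smul]
  simp

lemma leb_scale {N : Type*} [Fintype N] [DecidableEq N] {d : ℕ} (hd : 0 < d) (D : Fin d → Matrix N N ℂ)
    {σ : ℝ} (h : ∀ s, ((σ : ℂ) • 1 - D s * D s).PosSemidef) :
    (((σ / d : ℝ) : ℂ) • (1 : Matrix N N ℂ)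
      - ∑ s, ((((d:ℝ)⁻¹ : ℝ) : ℂ) • D s) * ((((d:ℝ)⁻¹ : ℝ) : ℂ) • D s)).PosSemidef := by
  have hd' : (d:ℂ) ≠ 0 := by exact_mod_cast hd.ne'
  have e : (((σ / d : ℝ) : ℂ) • (1 : Matrix N N ℂ)
      - ∑ s, ((((d:ℝ)⁻¹ : ℝ) : ℂ) • D s) * ((((d:ℝ)⁻¹ : ℝ) : ℂ) • D s))
      = ∑ s, ((((d:ℝ)⁻¹)^2 : ℝ) : ℂ) • ((σ : ℂ) • 1 - D s * D s) := by
    simp only [smul_sub, Finset.sum_sub_distrib, smul_mul_smul_comm, smul_smul]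
    refine congrArg₂ (fun Y Z => Y - Z) ?_ ?_
    · rw [Finset.sum_const, Finset.card_univ, Fintype.card_fin, ← Nat.cast_smul_eq_nsmul ℂ, smul_smul]
      refine congrArg (fun c : ℂ => c • (1 : Matrix N N ℂ)) ?_
      push_cast; field_simp
    · refine Finset.sum_congr rfl fun s _ => ?_
      refine congrArg (fun c : ℂ => c • (D s * D s)) ?_
      push_cast; ring
  rw [e]
  refine posSemidef_sum _ fun s _ => (h s).smul ?_
  have : (0:ℝ) ≤ ((d:ℝ)⁻¹)^2 := by positivity
  exact_mod_cast this

lemma leb_second {Ω : Type*} [MeasurableSpace Ω] (μ : Measure Ω) [IsProbabilityMeasure μ] {n d : ℕ}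
    (hd : 0 < d) (Ws : Fin d → Ω → Matrix (Fin n) (Fin n) ℂ) (hWm : ∀ s, AEMeasurable (Ws s) μ)
    (hi : iIndepFun Ws μ) (A : Matrix (Fin n) (Fin n) ℂ → Matrix (Fin n) (Fin n) ℂ) (hA : LebBMM A)
    {τ : ℝ} (hτ : 0 < τ) (hA1 : ∀ w, ((τ:ℂ) • 1 - A w * (A w)ᴴ).PosSemidef)
    (hA2 : ∀ w, ((τ:ℂ) • 1 - (A w)ᴴ * A w).PosSemidef)
    (Mb : Matrix (Fin n × Fin n) (Fin n × Fin n) ℂ)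
    (hMb : ∀ s a b, ∫ ω, (A (Ws s ω) ⊗ₖ (A (Ws s ω)).map (starRingEnd ℂ)) a b ∂μ = Mb a b)
    (p : ℕ) (hp : 1 ≤ p) :
    μ {ω | (Real.exp 12 * (p * (4 * τ^2 / d))) ^ p
        < ((lebHerm (lebM (fun s => A (Ws s ω)) - Mb)) ^ (2*p)).trace.re}
      ≤ ENNReal.ofReal (2 * n^2 * Real.exp (-(12 * p))) := by
  have hd' : (d:ℂ) ≠ 0 := by exact_mod_cast hd.ne'
  have hd'' : (0:ℝ) < d := by exact_mod_cast hd
  set P : Matrix (Fin n) (Fin n) ℂ → Matrix (Fin n × Fin n) (Fin n × Fin n) ℂ :=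
    fun w => A w ⊗ₖ (A w).map (starRingEnd ℂ) with hP
  have hPB : LebBMM P := by
    rintro ⟨i, j⟩ ⟨k, l⟩
    exact (hA i k).mul (hA j l).star
  have hFB : LebBMM fun w => (((d:ℝ)⁻¹ : ℝ) : ℂ) • (P w - Mb) := by
    intro a b
    exact (LebBM.const (((d:ℝ)⁻¹ : ℝ) : ℂ)).mul ((hPB a b).sub (LebBM.const (Mb a b)))
  have hmean0 : ∀ s a b, ∫ ω, ((((d:ℝ)⁻¹ : ℝ) : ℂ) • (P (Ws s ω) - Mb)) a b ∂μ = 0 := by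
    intro s a b
    simp only [Matrix.smul_apply, Matrix.sub_apply, smul_eq_mul]
    have hint : Integrable (fun ω => P (Ws s ω) a b) μ := by
      obtain ⟨h1, C, hC⟩ := hPB a b
      exact Integrable.of_bound (h1.comp_aemeasurable (hWm s)).aestronglyMeasurable C
        (Filter.Eventually.of_forall fun ω => hC _)
    rw [integral_const_mul, integral_sub hint (integrable_const _), hMb s a b]
    simp
  have h := leb_K μ Ws hWm hi (fun _ w => lebHerm ((((d:ℝ)⁻¹ : ℝ) : ℂ) • (P w - Mb)))
    (fun _ => lebHerm_BMM hFB) (fun _ w => lebHerm_isHermitian _) ?_ (4 * τ^2 / d) (by positivity) ?_ p hp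
  · have e : ∀ ω, ∑ s, lebHerm ((((d:ℝ)⁻¹ : ℝ) : ℂ) • (P (Ws s ω) - Mb))
        = lebHerm (lebM (fun s => A (Ws s ω)) - Mb) := by
      intro ω
      rw [lebHerm_sum]
      refine congrArg lebHerm ?_
      unfold lebM
      rw [← Finset.smul_sum, Finset.sum_sub_distrib, smul_sub, Finset.sum_const, Finset.card_univ,
        Fintype.card_fin, ← Nat.cast_smul_eq_nsmul ℂ, smul_smul]
      have : (((d:ℝ)⁻¹ : ℝ) : ℂ) = (d:ℂ)⁻¹ := by push_cast; rfl
      rw [this, inv_mul_cancel₀ hd', one_smul]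
    simp only [e] at h
    have ec : ((Fintype.card ((Fin n × Fin n) ⊕ (Fin n × Fin n)) : ℕ) : ℝ) = 2 * n^2 := by
      simp; ring
    rw [ec] at h
    exact h
  · intro s a b
    rcases a with a | a <;> rcases b with b | b
    · simp [lebHerm]
    · simp only [lebHerm, fromBlocks_apply₁₂]
      exact hmean0 s a b
    · simp only [lebHerm, fromBlocks_apply₂₁, conjTranspose_apply]
      have := integral_conj (μ := μ) (f := fun ω => ((((d:ℝ)⁻¹ : ℝ) : ℂ) • (P (Ws s ω) - Mb)) b a)
      rw [hmean0, map_zero] at this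
      exact this
    · simp [lebHerm]
  · intro e
    have e1 : ∀ s : Fin d, lebHerm ((((d:ℝ)⁻¹ : ℝ) : ℂ) • (P (e s).1 - Mb))
        - lebHerm ((((d:ℝ)⁻¹ : ℝ) : ℂ) • (P (e s).2 - Mb))
        = (((d:ℝ)⁻¹ : ℝ) : ℂ) • (lebHerm (P (e s).1) - lebHerm (P (e s).2)) := by
      intro s
      rw [lebHerm_sub, ← smul_sub, lebHerm_smul, lebHerm_sub]
      refine congrArg (fun Y => (((d:ℝ)⁻¹ : ℝ) : ℂ) • lebHerm Y) ?_
      abel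
    simp only [e1]
    exact leb_scale hd (fun s => lebHerm (P (e s).1) - lebHerm (P (e s).2)) fun s =>
      leb_sq_sub (lebHerm_isHermitian _) (lebHerm_isHermitian _)
        (leb_herm_kron hτ.le (hA1 _) (hA2 _)) (leb_herm_kron hτ.le (hA1 _) (hA2 _))
end

section
open scoped ComplexOrder
/-- small bilinear form -/
def LebBil {n : ℕ} (Z : Matrix (Fin n × Fin n) (Fin n × Fin n) ℂ) (t : ℝ) : Prop :=
  ∀ s : ℝ, 0 < s → ∀ h1 h2 : Fin n × Fin n → ℂ,
    ‖∑ p, star (h1 p) * (Z *ᵥ h2) p‖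
      ≤ t / 2 * (s * ∑ p, ‖h1 p‖ ^ 2 + (∑ p, ‖h2 p‖ ^ 2) / s)

lemma LebGap.add {n : ℕ} {M Z : Matrix (Fin n × Fin n) (Fin n × Fin n) ℂ} {ε t : ℝ}
    (hM : LebGap M ε) (hZ : LebBil Z t) : LebGap (M + Z) (ε + t) := by
  intro s hs h1 h2
  have a := hM s hs h1 h2
  have b := hZ s hs h1 h2
  have e : ∑ p, star (h1 p) * ((M + Z) *ᵥ h2) p = ∑ p, star (h1 p) * (M *ᵥ h2) p + ∑ p, star (h1 p) * (Z *ᵥ h2) p := by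
    rw [← Finset.sum_add_distrib, Matrix.add_mulVec]
    exact Finset.sum_congr rfl fun p _ => by rw [Pi.add_apply, mul_add]
  rw [e, add_sub_right_comm]
  refine (norm_add_le _ _).trans ((add_le_add a b).trans (le_of_eq ?_))
  ring

lemma LebGap.mono {n : ℕ} {M : Matrix (Fin n × Fin n) (Fin n × Fin n) ℂ} {ε ε' : ℝ}
    (hM : LebGap M ε) (h : ε ≤ ε') : LebGap M ε' := by
  intro s hs h1 h2
  refine (hM s hs h1 h2).trans ?_
  gcongr

lemma leb_young {a b s : ℝ} (hs : 0 < s) : a * b ≤ (s * a^2 + b^2 / s) / 2 := by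
  have e : (s * a^2 + b^2 / s) / 2 - a * b = (s * a - b)^2 / (2 * s) := by field_simp; ring
  have : 0 ≤ (s * a - b)^2 / (2 * s) := by positivity
  linarith

lemma leb_bil_sum {ι : Type*} [Fintype ι] (c : ι → ι → ℝ) (hc : ∀ i j, 0 ≤ c i j) {ρ : ℝ}
    (hr : ∀ i, ∑ j, c i j ≤ ρ) (hcol : ∀ j, ∑ i, c i j ≤ ρ) (Z : ι → ι → ℂ) (hZ : ∀ i j, ‖Z i j‖ ≤ c i j)
    {s : ℝ} (hs : 0 < s) (u x : ι → ℂ) :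
    ‖∑ i, star (u i) * ∑ j, Z i j * x j‖ ≤ ρ / 2 * (s * ∑ i, ‖u i‖^2 + (∑ i, ‖x i‖^2) / s) := by
  have h1 : ∀ i, ‖star (u i) * ∑ j, Z i j * x j‖ ≤ ∑ j, c i j * ((s * ‖u i‖^2 + ‖x j‖^2 / s) / 2) := by
    intro i
    rw [Finset.mul_sum]
    refine (norm_sum_le _ _).trans (Finset.sum_le_sum fun j _ => ?_)
    rw [norm_mul, norm_mul, norm_star]
    calc ‖u i‖ * (‖Z i j‖ * ‖x j‖) = ‖Z i j‖ * (‖u i‖ * ‖x j‖) := by ring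
      _ ≤ c i j * ((s * ‖u i‖^2 + ‖x j‖^2 / s) / 2) :=
        mul_le_mul (hZ i j) (leb_young hs) (by positivity) (hc i j)
  refine (norm_sum_le _ _).trans ((Finset.sum_le_sum fun i _ => h1 i).trans ?_)
  have e : ∑ i, ∑ j, c i j * ((s * ‖u i‖^2 + ‖x j‖^2 / s) / 2)
      = ∑ i, (∑ j, c i j) * (s * ‖u i‖^2 / 2) + ∑ j, (∑ i, c i j) * (‖x j‖^2 / s / 2) := by
    simp only [Finset.sum_mul]
    rw [Finset.sum_comm (f := fun j i => c i j * (‖x j‖^2 / s / 2)), ← Finset.sum_add_distrib]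
    refine Finset.sum_congr rfl fun i _ => ?_
    rw [← Finset.sum_add_distrib]
    exact Finset.sum_congr rfl fun j _ => by ring
  rw [e]
  have a1 : ∑ i, (∑ j, c i j) * (s * ‖u i‖^2 / 2) ≤ ∑ i, ρ * (s * ‖u i‖^2 / 2) :=
    Finset.sum_le_sum fun i _ => mul_le_mul_of_nonneg_right (hr i) (by positivity)
  have a2 : ∑ j, (∑ i, c i j) * (‖x j‖^2 / s / 2) ≤ ∑ j, ρ * (‖x j‖^2 / s / 2) :=
    Finset.sum_le_sum fun i _ => mul_le_mul_of_nonneg_right (hcol i) (by positivity)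
  refine (add_le_add a1 a2).trans (le_of_eq ?_)
  rw [← Finset.mul_sum, ← Finset.mul_sum, ← Finset.sum_div, ← Finset.sum_div, ← Finset.sum_div, ← Finset.mul_sum]
  ring

lemma LebBil.of_entries {n : ℕ} (Z : Matrix (Fin n × Fin n) (Fin n × Fin n) ℂ) {δ : ℝ} (hδ : 0 ≤ δ)
    (h : ∀ p q, ‖Z p q‖ ≤ δ) : LebBil Z (n^2 * δ) := by
  intro s hs h1 h2
  refine leb_bil_sum (fun _ _ => δ) (fun _ _ => hδ) ?_ ?_ Z h hs h1 h2
  · intro i; simp; rw [sq]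
  · intro i; simp; rw [sq]

lemma LebBil.of_psd {n : ℕ} (Z : Matrix (Fin n × Fin n) (Fin n × Fin n) ℂ) {t : ℝ} (ht : 0 ≤ t)
    (h : (((t^2 : ℝ) : ℂ) • 1 - Zᴴ * Z).PosSemidef) : LebBil Z t := by
  intro s hs h1 h2
  refine leb_amgm h1 (Z *ᵥ h2) ht hs ?_
  have h3 := h.dotProduct_mulVec_nonneg h2
  have hz : ∀ v : Fin n × Fin n → ℂ, star v ⬝ᵥ v = ((∑ p, ‖v p‖^2 : ℝ) : ℂ) := by
    intro v
    rw [dotProduct]; push_cast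
    refine Finset.sum_congr rfl fun p _ => ?_
    rw [Pi.star_apply, mul_comm]
    exact Complex.mul_conj' _
  rw [Matrix.sub_mulVec, dotProduct_sub, Matrix.smul_mulVec, Matrix.one_mulVec, dotProduct_smul,
    ← Matrix.mulVec_mulVec, dotProduct_mulVec, ← star_mulVec, hz, hz, smul_eq_mul, sub_nonneg,
    ← Complex.ofReal_mul, Complex.real_le_real] at h3
  exact h3

lemma leb_diag_le {n : ℕ} (h : Fin n × Fin n → ℂ) : ∑ i, ‖h (i, i)‖^2 ≤ ∑ p, ‖h p‖^2 := by
  rw [Fintype.sum_prod_type]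
  exact Finset.sum_le_sum fun i _ =>
    Finset.single_le_sum (f := fun j => ‖h (i, j)‖^2) (fun _ _ => sq_nonneg _) (Finset.mem_univ i)

lemma leb_mean_gap {n : ℕ} (hn : 0 < n) (η η' : Matrix (Fin n) (Fin n) ℝ) (hη : ∀ i j, 0 ≤ η i j)
    (hr : ∀ i, ∑ j, η i j = 1) (hc : ∀ j, ∑ i, η i j = 1) {t : ℝ} (ht : η.sval 1 < t) (ht1 : t < 1)
    (ht0 : 0 ≤ t) {ρ : ℝ} (hρ : 0 ≤ ρ) (h' : ∀ i j, |η' i j - η i j| ≤ ρ * η i j) :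
    LebGap (Matrix.of fun (p q : Fin n × Fin n) => if p.1 = p.2 ∧ q.1 = q.2 then ((η' p.1 q.1 : ℝ) : ℂ) else 0)
      (t + ρ) := by
  intro s hs h1 h2
  set M : Matrix (Fin n × Fin n) (Fin n × Fin n) ℂ :=
    Matrix.of fun (p q : Fin n × Fin n) => if p.1 = p.2 ∧ q.1 = q.2 then ((η' p.1 q.1 : ℝ) : ℂ) else 0 with hM
  have e1 : ∀ i k, (M *ᵥ h2) (i, k) = if i = k then ∑ j, (η' i j : ℂ) * h2 (j, j) else 0 := by
    intro i k
    simp only [hM, Matrix.mulVec, dotProduct, Matrix.of_apply]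
    by_cases hik : i = k
    · simp only [hik, true_and, if_true, Fintype.sum_prod_type, ite_mul, zero_mul]
      refine Finset.sum_congr rfl fun j _ => ?_
      simp
    · simp [hik]
  have e2 : ∑ p, star (h1 p) * (M *ᵥ h2) p = ∑ i, star (h1 (i,i)) * ∑ j, (η' i j : ℂ) * h2 (j, j) := by
    rw [Fintype.sum_prod_type]
    refine Finset.sum_congr rfl fun i _ => ?_
    simp only [e1, mul_ite, mul_zero]
    simp
  have e3 : ∑ i, star (h1 (i,i)) * ∑ j, (η' i j : ℂ) * h2 (j, j)
      = ∑ i, star (h1 (i,i)) * ∑ j, (η i j : ℂ) * h2 (j, j)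
        + ∑ i, star (h1 (i,i)) * ∑ j, ((η' i j - η i j : ℝ) : ℂ) * h2 (j, j) := by
    rw [← Finset.sum_add_distrib]
    refine Finset.sum_congr rfl fun i _ => ?_
    rw [← mul_add, ← Finset.sum_add_distrib]
    refine congrArg _ (Finset.sum_congr rfl fun j _ => ?_)
    push_cast; ring
  have a := leb_eta_gap hn η hr hc ht ht1 ht0 (fun i => h1 (i,i)) (fun i => h2 (i,i)) hs
  have b := leb_bil_sum (fun i j => ρ * η i j) (fun i j => mul_nonneg hρ (hη i j)) (ρ := ρ)
    (fun i => by rw [← Finset.mul_sum, hr, mul_one]) (fun i => by rw [← Finset.mul_sum, hc, mul_one])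
    (fun i j => ((η' i j - η i j : ℝ) : ℂ)) (fun i j => by
      rw [Complex.norm_real, Real.norm_eq_abs]; exact h' i j) hs (fun i => h1 (i,i)) (fun i => h2 (i,i))
  rw [e2, e3, add_sub_right_comm]
  refine (norm_add_le _ _).trans ((add_le_add a b).trans ?_)
  rw [← add_mul, ← add_div]
  have c1 := leb_diag_le h1
  have c2 := leb_diag_le h2
  gcongr
end

section
open scoped ComplexOrder
open Classical in
/-- truncation to the good set -/
noncomputable def lebA {n : ℕ} (η : Matrix (Fin n) (Fin n) ℝ) (θ : ℝ) (m : Matrix (Fin n) (Fin n) ℂ)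
    (τ : ℝ) (p : ℕ) (w : Matrix (Fin n) (Fin n) ℂ) : Matrix (Fin n) (Fin n) ℂ :=
  if τ ^ p < ((lebHerm (lebT η θ m w)) ^ (2*p)).trace.re then 0 else lebT η θ m w

section
variable {n : ℕ} {η : Matrix (Fin n) (Fin n) ℝ} {θ : ℝ} {m : Matrix (Fin n) (Fin n) ℂ}

lemma leb_ent (i j : Fin n) : Measurable (fun M : Matrix (Fin n) (Fin n) ℂ => M i j) :=
  (measurable_pi_apply j).comp (measurable_pi_apply i)

lemma lebT_BMM (h : ∀ i j, 0 ≤ η i j * θ) : LebBMM (lebT η θ m) := by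
  intro i j
  refine LebBM.sub (f := fun w : Matrix (Fin n) (Fin n) ℂ => lebChi (η i j * θ) (w i j))
    ⟨(lebChi_meas _).comp (leb_ent i j), Real.sqrt (η i j * θ), fun e => ?_⟩ (LebBM.const _)
  exact Real.le_sqrt_of_sq_le (lebChi_sq (h i j) _)

lemma leb_bad_meas (h : ∀ i j, 0 ≤ η i j * θ) (τ : ℝ) (p : ℕ) :
    MeasurableSet {w | τ ^ p < ((lebHerm (lebT η θ m w)) ^ (2*p)).trace.re} := by
  have h1 : LebBM fun w => ((lebHerm (lebT η θ m w)) ^ (2*p)).trace :=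
    ((lebHerm_BMM (lebT_BMM h)).pow (2*p)).trace
  exact measurableSet_lt measurable_const (Complex.measurable_re.comp h1.1)

lemma lebA_BMM (h : ∀ i j, 0 ≤ η i j * θ) (τ : ℝ) (p : ℕ) : LebBMM (lebA η θ m τ p) := by
  classical
  intro i j
  obtain ⟨h1, C, hC⟩ := lebT_BMM (m := m) h i j
  have e : (fun w => lebA η θ m τ p w i j)
      = fun w => if τ ^ p < ((lebHerm (lebT η θ m w)) ^ (2*p)).trace.re then 0 else lebT η θ m w i j := by
    funext w; unfold lebA; split_ifs <;> rfl
  rw [e]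
  refine ⟨Measurable.ite (leb_bad_meas h τ p) measurable_const h1, max C 0, fun w => ?_⟩
  beta_reduce
  split_ifs
  · simp
  · exact (hC w).trans (le_max_left _ _)

lemma lebA_psd {τ : ℝ} (hτ : 0 ≤ τ) {p : ℕ} (hp : 1 ≤ p) (w : Matrix (Fin n) (Fin n) ℂ) :
    (((τ:ℂ) • 1 - lebA η θ m τ p w * (lebA η θ m τ p w)ᴴ).PosSemidef)
      ∧ (((τ:ℂ) • 1 - (lebA η θ m τ p w)ᴴ * lebA η θ m τ p w).PosSemidef) := by
  unfold lebA
  split_ifs with h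
  · have : ((τ:ℂ) • (1 : Matrix (Fin n) (Fin n) ℂ)).PosSemidef :=
      PosSemidef.one.smul (by exact_mod_cast hτ)
    simpa using this
  · have h1 := leb_psd_of_trace (lebHerm_isHermitian _) hp hτ (not_lt.1 h)
    rw [lebHerm_sq, leb_blocks_sub] at h1
    exact ⟨leb_blocks_psd1 h1, leb_blocks_psd2 h1⟩

lemma lebT_norm (hη : ∀ i j, 0 ≤ η i j) (hη1 : ∀ i j, η i j ≤ 1) (hθ : 0 ≤ θ)
    (hm : ∀ i j, ‖m i j‖^2 ≤ η i j * θ) (w : Matrix (Fin n) (Fin n) ℂ) (i j : Fin n) :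
    ‖lebT η θ m w i j‖ ≤ 2 * Real.sqrt θ := by
  have h1 : η i j * θ ≤ θ := by nlinarith [hη1 i j]
  have h2 : ‖lebChi (η i j * θ) (w i j)‖ ≤ Real.sqrt θ :=
    Real.le_sqrt_of_sq_le ((lebChi_sq (mul_nonneg (hη i j) hθ) _).trans h1)
  have h3 : ‖m i j‖ ≤ Real.sqrt θ := Real.le_sqrt_of_sq_le ((hm i j).trans h1)
  have := norm_sub_le (lebChi (η i j * θ) (w i j)) (m i j)
  simp only [lebT, Matrix.of_apply]
  linarith

lemma leb_A_mean {Ω : Type*} [MeasurableSpace Ω] (μ : Measure Ω) [IsProbabilityMeasure μ]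
    (W : Ω → Matrix (Fin n) (Fin n) ℂ) (hWm : AEMeasurable W μ)
    (hη : ∀ i j, 0 ≤ η i j) (hη1 : ∀ i j, η i j ≤ 1) (hθ : 0 ≤ θ)
    (hm : ∀ i j, ‖m i j‖^2 ≤ η i j * θ) (τ : ℝ) (p : ℕ) {b : ℝ} (hb : 0 ≤ b)
    (hbad : μ {ω | τ ^ p < ((lebHerm (lebT η θ m (W ω))) ^ (2*p)).trace.re} ≤ ENNReal.ofReal b)
    (x y : Fin n × Fin n) :
    ‖∫ ω, (lebA η θ m τ p (W ω) ⊗ₖ (lebA η θ m τ p (W ω)).map (starRingEnd ℂ)) x y ∂μ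
      - ∫ ω, (lebT η θ m (W ω) ⊗ₖ (lebT η θ m (W ω)).map (starRingEnd ℂ)) x y ∂μ‖ ≤ 4 * θ * b := by
  classical
  have h : ∀ i j, 0 ≤ η i j * θ := fun i j => mul_nonneg (hη i j) hθ
  obtain ⟨i, k⟩ := x
  obtain ⟨j, l⟩ := y
  have hT : LebBM fun w => lebT η θ m w i j * star (lebT η θ m w k l) :=
    (lebT_BMM h i j).mul (lebT_BMM h k l).star
  have hA : LebBM fun w => lebA η θ m τ p w i j * star (lebA η θ m τ p w k l) :=
    (lebA_BMM h τ p i j).mul (lebA_BMM h τ p k l).star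
  have hint : ∀ f : Matrix (Fin n) (Fin n) ℂ → ℂ, LebBM f → Integrable (fun ω => f (W ω)) μ := by
    rintro f ⟨h1, C, hC⟩
    exact Integrable.of_bound (h1.comp_aemeasurable hWm).aestronglyMeasurable C
        (Filter.Eventually.of_forall fun ω => hC _)
  have e : ∫ ω, (lebA η θ m τ p (W ω) ⊗ₖ (lebA η θ m τ p (W ω)).map (starRingEnd ℂ)) (i,k) (j,l) ∂μ
      - ∫ ω, (lebT η θ m (W ω) ⊗ₖ (lebT η θ m (W ω)).map (starRingEnd ℂ)) (i,k) (j,l) ∂μ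
      = ∫ ω, (lebA η θ m τ p (W ω) i j * star (lebA η θ m τ p (W ω) k l)
        - lebT η θ m (W ω) i j * star (lebT η θ m (W ω) k l)) ∂μ :=
    (integral_sub (hint _ hA) (hint _ hT)).symm
  rw [e]
  set S := {ω | τ ^ p < ((lebHerm (lebT η θ m (W ω))) ^ (2*p)).trace.re} with hS
  have hSm : NullMeasurableSet S μ := hWm.nullMeasurableSet_preimage (leb_bad_meas h τ p)
  refine (norm_integral_le_integral_norm _).trans ?_
  have hpt : ∀ ω, ‖lebA η θ m τ p (W ω) i j * star (lebA η θ m τ p (W ω) k l)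
        - lebT η θ m (W ω) i j * star (lebT η θ m (W ω) k l)‖ ≤ S.indicator (fun _ => 4 * θ) ω := by
    intro ω
    by_cases hω : ω ∈ S
    · rw [Set.indicator_of_mem hω]
      have e0 : lebA η θ m τ p (W ω) = 0 := if_pos hω
      rw [e0]
      simp only [Matrix.zero_apply, zero_mul, zero_sub, norm_neg, norm_mul, norm_star]
      calc _ ≤ (2 * Real.sqrt θ) * (2 * Real.sqrt θ) :=
            mul_le_mul (lebT_norm hη hη1 hθ hm _ _ _) (lebT_norm hη hη1 hθ hm _ _ _) (norm_nonneg _)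
              (by positivity)
        _ = 4 * (Real.sqrt θ * Real.sqrt θ) := by ring
        _ = 4 * θ := by rw [Real.mul_self_sqrt hθ]
    · rw [Set.indicator_of_notMem hω]
      have e0 : lebA η θ m τ p (W ω) = lebT η θ m (W ω) := if_neg hω
      rw [e0, sub_self, norm_zero]
  have hi : Integrable (S.indicator (fun _ => 4 * θ)) μ :=
    (integrable_const (4 * θ)).indicator₀ hSm
  refine (integral_mono_of_nonneg (Filter.Eventually.of_forall fun ω => norm_nonneg _) hi
    (Filter.Eventually.of_forall hpt)).trans ?_
  rw [integral_indicator₀ hSm, integral_const, smul_eq_mul, mul_comm]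
  have : (μ.restrict S).real Set.univ ≤ b := by
    rw [Measure.real, Measure.restrict_apply_univ]
    exact ENNReal.toReal_le_of_le_ofReal hb hbad
  exact mul_le_mul_of_nonneg_left this (by positivity)

lemma leb_T_mean {Ω : Type*} [MeasurableSpace Ω] (μ : Measure Ω) [IsProbabilityMeasure μ]
    (W : Ω → Matrix (Fin n) (Fin n) ℂ) (hWm : AEMeasurable W μ)
    (hW : iIndepFun (fun (p : Fin n × Fin n) ω => W ω p.1 p.2) μ)
    (h : ∀ i j, 0 ≤ η i j * θ)
    (hm : ∀ i j, m i j = ∫ ω, lebChi (η i j * θ) (W ω i j) ∂μ) (x y : Fin n × Fin n) :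
    ∫ ω, (lebT η θ m (W ω) ⊗ₖ (lebT η θ m (W ω)).map (starRingEnd ℂ)) x y ∂μ
      = if x.1 = x.2 ∧ y.1 = y.2 then ((∫ ω, ‖lebT η θ m (W ω) x.1 y.1‖^2 ∂μ : ℝ) : ℂ) else 0 := by
  obtain ⟨i, k⟩ := x
  obtain ⟨j, l⟩ := y
  have e : ∫ ω, (lebT η θ m (W ω) ⊗ₖ (lebT η θ m (W ω)).map (starRingEnd ℂ)) (i,k) (j,l) ∂μ
      = ∫ ω, lebT η θ m (W ω) i j * star (lebT η θ m (W ω) k l) ∂μ := rfl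
  rw [e]
  simp only
  have hint : ∀ f : Matrix (Fin n) (Fin n) ℂ → ℂ, LebBM f → Integrable (fun ω => f (W ω)) μ := by
    rintro f ⟨h1, C, hC⟩
    exact Integrable.of_bound (h1.comp_aemeasurable hWm).aestronglyMeasurable C
        (Filter.Eventually.of_forall fun ω => hC _)
  split_ifs with hh
  · obtain ⟨rfl, rfl⟩ := hh
    rw [← integral_complex_ofReal]
    refine integral_congr_ae (Filter.Eventually.of_forall fun ω => ?_)
    simp only
    push_cast
    exact Complex.mul_conj' _
  · have hne : ((i, j) : Fin n × Fin n) ≠ (k, l) := by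
      intro h'; apply hh; simpa using h'
    have hmeas : ∀ a b, Measurable fun z : ℂ => lebChi (η a b * θ) z - m a b :=
      fun a b => (lebChi_meas _).sub_const _
    have hind : IndepFun (fun ω => lebT η θ m (W ω) i j) (fun ω => star (lebT η θ m (W ω) k l)) μ := by
      have := (hW.indepFun hne).comp (hmeas i j) (continuous_star.measurable.comp (hmeas k l))
      exact this
    have hTi := hint _ (lebT_BMM (m := m) h i j)
    have hTk := hint _ (lebT_BMM (m := m) h k l).star
    rw [hind.integral_fun_mul_eq_mul_integral hTi.aestronglyMeasurable hTk.aestronglyMeasurable]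
    have h0 : ∫ ω, lebT η θ m (W ω) i j ∂μ = 0 := by
      have hc : Integrable (fun ω => lebChi (η i j * θ) (W ω i j)) μ :=
        hint (fun w => lebChi (η i j * θ) (w i j)) ⟨(lebChi_meas _).comp (leb_ent i j),
          Real.sqrt (η i j * θ), fun e => Real.le_sqrt_of_sq_le (lebChi_sq (h i j) _)⟩
      simp only [lebT, Matrix.of_apply]
      rw [integral_sub hc (integrable_const _), ← hm]
      simp
    rw [h0, zero_mul]

end
end

section
lemma leb_n1 {n p : ℕ} (hn : 2 ≤ n) (hp : Real.log n ≤ p) : Real.exp (-(12 * p)) ≤ 1 / (n:ℝ)^12 := by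
  have hn0 : (0:ℝ) < n := by positivity
  have h1 : (n:ℝ)^12 = Real.exp (12 * Real.log n) := by
    have := Real.exp_nat_mul (Real.log n) 12
    rw [Real.exp_log hn0] at this
    rw [← this]; norm_num
  rw [h1, Real.exp_neg, one_div]
  exact inv_anti₀ (Real.exp_pos _) (Real.exp_le_exp.2 (by linarith))

lemma leb_n2 {a b x y θ : ℝ} (hθ : 0 < θ) (hx : 0 ≤ x) (hy : 0 ≤ y) (ha : a = x / θ) (hb : b = y / θ) {C r : ℝ}
    (hC : x + y < C) (hr : r = 1 - C / θ) : ¬ ((1 - a) * (1 - b) ≤ r) := by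
  intro h
  have h0 : 0 ≤ a * b := by rw [ha, hb]; positivity
  have h1 : a + b < C / θ := by
    rw [ha, hb, ← add_div]; exact div_lt_div_of_pos_right hC hθ
  nlinarith

/-- epsilon bound -/
lemma leb_n3 {n d p : ℕ} {θ K3 κ : ℝ} (hn : 2 ≤ n) (hθ : 1 ≤ θ) (hd : θ^16 = d) (hdn : d ≤ n^2)
    (hK3 : 0 ≤ K3) (hκ : 0 ≤ κ) (hp : Real.log n ≤ p) (hp2 : (p:ℝ) ≤ 2 * θ^2) :
    K3 / θ^8 + 2 * κ / θ^16 + n^2 * (4 * θ * (2 * n * Real.exp (-(12 * p))))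
      + Real.sqrt (Real.exp 12 * (p * (4 * (Real.exp 12 * (p * (4 * θ)))^2 / d)))
      ≤ (K3 + 2 * κ + 8 + 32 * Real.exp 18) / θ^4 := by
  have hn0 : (0:ℝ) < n := by positivity
  have hn1 : (1:ℝ) ≤ n := by exact_mod_cast (by omega : 1 ≤ n)
  have hθ0 : 0 < θ := by linarith
  have a1 : K3 / θ^8 ≤ K3 / θ^4 :=
    div_le_div_of_nonneg_left hK3 (by positivity) (pow_le_pow_right₀ hθ (by norm_num))
  have a2 : 2 * κ / θ^16 ≤ 2 * κ / θ^4 :=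
    div_le_div_of_nonneg_left (by positivity) (by positivity) (pow_le_pow_right₀ hθ (by norm_num))
  have a3 : n^2 * (4 * θ * (2 * n * Real.exp (-(12 * p)))) ≤ 8 / θ^4 := by
    have h1 := leb_n1 hn hp
    have h2 : (n:ℝ)^2 * (4 * θ * (2 * n * Real.exp (-(12 * p)))) ≤ (n:ℝ)^2 * (4 * θ * (2 * n * (1 / (n:ℝ)^12))) := by
      gcongr
    refine h2.trans ?_
    have e : (n:ℝ)^2 * (4 * θ * (2 * n * (1 / (n:ℝ)^12))) = 8 * θ / (n:ℝ)^9 := by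
      field_simp; norm_num
    rw [e, div_le_div_iff₀ (by positivity) (by positivity)]
    have h3 : θ^5 ≤ (n:ℝ)^9 := by
      calc θ^5 ≤ θ^16 := pow_le_pow_right₀ hθ (by norm_num)
        _ = d := hd
        _ ≤ (n:ℝ)^2 := by exact_mod_cast hdn
        _ ≤ (n:ℝ)^9 := pow_le_pow_right₀ hn1 (by norm_num)
    nlinarith
  have a4 : Real.sqrt (Real.exp 12 * (p * (4 * (Real.exp 12 * (p * (4 * θ)))^2 / d))) ≤ 32 * Real.exp 18 / θ^4 := by
    refine Real.sqrt_le_iff.2 ⟨by positivity, ?_⟩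
    rw [← hd]
    have e18 : Real.exp 18 ^ 2 = Real.exp 12 * Real.exp 12 ^ 2 := by
      rw [← Real.exp_nat_mul, ← Real.exp_nat_mul, ← Real.exp_add]; norm_num
    have e : (32 * Real.exp 18 / θ^4)^2 = 1024 * (Real.exp 12 * Real.exp 12 ^ 2) / θ^8 := by
      rw [div_pow, mul_pow, e18]; ring
    rw [e]
    calc Real.exp 12 * (p * (4 * (Real.exp 12 * (p * (4 * θ)))^2 / θ^16))
        ≤ Real.exp 12 * ((2 * θ^2) * (4 * (Real.exp 12 * ((2 * θ^2) * (4 * θ)))^2 / θ^16)) := by gcongr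
      _ = 512 * (Real.exp 12 * Real.exp 12 ^ 2) / θ^8 := by field_simp; norm_num
      _ ≤ _ := by gcongr; norm_num
  have e : (K3 + 2 * κ + 8 + 32 * Real.exp 18) / θ^4 = K3 / θ^4 + 2 * κ / θ^4 + 8 / θ^4 + 32 * Real.exp 18 / θ^4 := by
    ring
  rw [e]; linarith

lemma leb_n4 {n d : ℕ} (hn : 2 ≤ n) (h : Real.log n ^ 8 ≤ (d:ℝ)) : ∃ (θ : ℝ) (p : ℕ), 1 ≤ θ ∧ θ^16 = d ∧ Real.log n ≤ p
    ∧ (p:ℝ) ≤ 2 * θ^2 ∧ 1 ≤ p ∧ Real.sqrt d = θ^8 := by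
  have hl : 0 < Real.log n := Real.log_pos (by exact_mod_cast (by omega : 1 < n))
  have hd0 : (0:ℝ) < d := lt_of_lt_of_le (by positivity) h
  have hd1 : (1:ℝ) ≤ d := by
    have : 0 < d := by exact_mod_cast hd0
    exact_mod_cast this
  set θ : ℝ := (d:ℝ) ^ ((1:ℝ)/16) with hθ
  have hθ1 : 1 ≤ θ := Real.one_le_rpow hd1 (by norm_num)
  have hθ16 : θ^16 = d := by
    rw [hθ, ← Real.rpow_natCast, ← Real.rpow_mul hd0.le]; norm_num
  have hlog : Real.log n ≤ θ^2 := by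
    refine le_of_pow_le_pow_left₀ (n := 8) (by norm_num) (by positivity) ?_
    rw [← pow_mul]; rw [hθ16]; exact h
  refine ⟨θ, ⌈Real.log n⌉₊, hθ1, hθ16, Nat.le_ceil _, ?_, Nat.ceil_pos.2 hl, ?_⟩
  · have := Nat.ceil_lt_add_one hl.le
    nlinarith
  · rw [← hθ16, show θ^16 = (θ^8)^2 by ring, Real.sqrt_sq (by positivity)]

lemma leb_moment {I K β η : ℝ} (q : ℕ) (hq : 1 ≤ q) (hI : 0 ≤ I)
    (h : I ^ ((1:ℝ)/q) ≤ K * (q:ℝ)^β * η) : I ≤ (K * (q:ℝ)^β)^q * η^q := by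
  have h1 := pow_le_pow_left₀ (Real.rpow_nonneg hI _) h q
  have e : (I ^ ((1:ℝ)/q))^q = I := by
    rw [← Real.rpow_natCast, ← Real.rpow_mul hI, one_div, inv_mul_cancel₀ (by positivity), Real.rpow_one]
  rw [e, mul_pow] at h1
  exact h1
end

section
open scoped ComplexOrder
lemma leb_sum_eta {n : ℕ} {η : Matrix (Fin n) (Fin n) ℝ} (hr : ∀ i, ∑ j, η i j = 1) :
    ∑ p : Fin n × Fin n, η p.1 p.2 = n := by
  rw [Fintype.sum_prod_type]; simp [hr]

lemma leb_eta_le {n : ℕ} {η : Matrix (Fin n) (Fin n) ℝ} (hη : ∀ i j, 0 ≤ η i j)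
    (hr : ∀ i, ∑ j, η i j = 1) (i j : Fin n) : η i j ≤ 1 := by
  rw [← hr i]; exact Finset.single_le_sum (fun k _ => hη i k) (Finset.mem_univ j)

lemma leb_sum_eta2 {n : ℕ} {η : Matrix (Fin n) (Fin n) ℝ} (hη : ∀ i j, 0 ≤ η i j)
    (hr : ∀ i, ∑ j, η i j = 1) :
    ∑ p : Fin n × Fin n, η p.1 p.2 ^ 2 ≤ n := by
  rw [← leb_sum_eta hr]
  refine Finset.sum_le_sum fun p _ => ?_
  have h1 := leb_eta_le hη hr p.1 p.2
  have h0 := hη p.1 p.2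
  calc η p.1 p.2 ^ 2 = η p.1 p.2 * η p.1 p.2 := sq _
    _ ≤ η p.1 p.2 * 1 := mul_le_mul_of_nonneg_left h1 h0
    _ = _ := mul_one _

lemma leb_B3 {Ω : Type*} [MeasurableSpace Ω] (μ : Measure Ω) [IsProbabilityMeasure μ] {n d : ℕ}
    (hn : 0 < n)
    (W : Ω → Matrix (Fin n) (Fin n) ℂ) (Ws : Fin d → Ω → Matrix (Fin n) (Fin n) ℂ)
    (hWm : ∀ p : Fin n × Fin n, AEMeasurable (fun ω => W ω p.1 p.2) μ)
    (hW : iIndepFun (fun (p : Fin n × Fin n) ω => W ω p.1 p.2) μ)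
    (hi : iIndepFun Ws μ) (hid : ∀ s, IdentDistrib (Ws s) W μ μ)
    {η : Matrix (Fin n) (Fin n) ℝ} (hη : ∀ i j, 0 ≤ η i j) (hr : ∀ i, ∑ j, η i j = 1)
    {θ κ : ℝ} (hθ : 1 ≤ θ) (hd : θ ^ 16 = (d:ℝ)) (hκ : 0 ≤ κ) (m : Matrix (Fin n) (Fin n) ℂ)
    (h4 : ∀ i j, ∫ ω, ‖lebChi (η i j * θ) (W ω i j) - m i j‖ ^ 4 ∂μ ≤ 16 * κ * η i j ^ 2) :
    μ {ω | n * θ ^ 8 ≤ |∑ s, ∑ p : Fin n × Fin n,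
        ‖lebT η θ m (Ws s ω) p.1 p.2‖ ^ 2
        - d * ∑ p : Fin n × Fin n, ∫ ω, ‖lebT η θ m (W ω) p.1 p.2‖ ^ 2 ∂μ|}
      ≤ ENNReal.ofReal (16 * κ / n) := by
  have hn' : (0:ℝ) < n := by exact_mod_cast hn
  have hθ0 : 0 < θ := by linarith
  refine (leb_cheb μ W Ws hW hi hid
    (fun p z => ‖lebChi (η p.1 p.2 * θ) z - m p.1 p.2‖ ^ 2) ?_ ?_
    (fun p => 16 * κ * η p.1 p.2 ^ 2) ?_ (t := n * θ ^ 8) (by positivity)).trans ?_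
  · intro p
    exact (((lebChi_meas _).sub_const _).norm.pow_const 2)
  · intro p
    refine MemLp.of_bound ?_ ((Real.sqrt (η p.1 p.2 * θ) + ‖m p.1 p.2‖) ^ 2)
      (ae_of_all _ fun ω => ?_)
    · exact ((((lebChi_meas _).sub_const _).norm.pow_const 2).comp_aemeasurable
        (hWm p)).aestronglyMeasurable
    · rw [Real.norm_of_nonneg (by positivity)]
      refine pow_le_pow_left₀ (norm_nonneg _) ((norm_sub_le _ _).trans ?_) 2
      refine add_le_add_left (Real.le_sqrt_of_sq_le (lebChi_sq ?_ _)) _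
      exact mul_nonneg (hη _ _) hθ0.le
  · intro p
    refine le_trans (le_of_eq ?_) (h4 p.1 p.2)
    refine integral_congr_ae (ae_of_all _ fun ω => ?_)
    change (_ ^ 2) ^ 2 = _ ^ 4
    rw [← pow_mul]
  · refine ENNReal.ofReal_le_ofReal ?_
    rw [← Finset.mul_sum, ← hd]
    have h1 := leb_sum_eta2 hη hr
    have e : (n * θ ^ 8) ^ 2 = n * n * θ ^ 16 := by ring
    rw [e, div_le_div_iff₀ (by positivity) hn']
    calc θ ^ 16 * (16 * κ * ∑ p : Fin n × Fin n, η p.1 p.2 ^ 2) * n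
        ≤ θ ^ 16 * (16 * κ * n) * n := by gcongr
      _ = _ := by ring

lemma leb_B4 {Ω : Type*} [MeasurableSpace Ω] (μ : Measure Ω) [IsProbabilityMeasure μ] {n d : ℕ}
    (hn : 0 < n)
    (W : Ω → Matrix (Fin n) (Fin n) ℂ) (Ws : Fin d → Ω → Matrix (Fin n) (Fin n) ℂ)
    (hX : ∀ i j (p : ℕ), MemLp (fun ω => W ω i j) p μ)
    (hW : iIndepFun (fun (p : Fin n × Fin n) ω => W ω p.1 p.2) μ)
    (hi : iIndepFun Ws μ) (hid : ∀ s, IdentDistrib (Ws s) W μ μ)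
    {η : Matrix (Fin n) (Fin n) ℝ} (hη : ∀ i j, 0 ≤ η i j) (hr : ∀ i, ∑ j, η i j = 1)
    {θ κ : ℝ} (hθ : 1 ≤ θ) (hd : θ ^ 16 = (d:ℝ)) (hκ : 0 ≤ κ) (m : Matrix (Fin n) (Fin n) ℂ)
    (h4 : ∀ i j, ∫ ω, ‖W ω i j - (lebChi (η i j * θ) (W ω i j) - m i j)‖ ^ 4 ∂μ
      ≤ 16 * κ * η i j ^ 2 / θ ^ 16) :
    μ {ω | (n:ℝ) ≤ |∑ s, ∑ p : Fin n × Fin n,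
        ‖Ws s ω p.1 p.2 - lebT η θ m (Ws s ω) p.1 p.2‖ ^ 2
        - d * ∑ p : Fin n × Fin n, ∫ ω, ‖W ω p.1 p.2 - lebT η θ m (W ω) p.1 p.2‖ ^ 2 ∂μ|}
      ≤ ENNReal.ofReal (16 * κ / n) := by
  have hn' : (0:ℝ) < n := by exact_mod_cast hn
  have hθ0 : 0 < θ := by linarith
  refine (leb_cheb μ W Ws hW hi hid
    (fun p z => ‖z - (lebChi (η p.1 p.2 * θ) z - m p.1 p.2)‖ ^ 2) ?_ ?_
    (fun p => 16 * κ * η p.1 p.2 ^ 2 / θ ^ 16) ?_ (t := n) hn').trans ?_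
  · intro p
    exact ((measurable_id.sub ((lebChi_meas _).sub_const _)).norm.pow_const 2)
  · intro p
    have hm := (hX p.1 p.2 4)
    have h1 : MemLp (fun ω => lebChi (η p.1 p.2 * θ) (W ω p.1 p.2) - m p.1 p.2) (4:ℕ) μ := by
      refine MemLp.of_bound ?_ (Real.sqrt (η p.1 p.2 * θ) + ‖m p.1 p.2‖)
        (ae_of_all _ fun ω => ?_)
      · exact (((lebChi_meas _).sub_const _).comp_aemeasurable
          hm.aestronglyMeasurable.aemeasurable).aestronglyMeasurable
      · refine ((norm_sub_le _ _).trans ?_)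
        refine add_le_add_left (Real.le_sqrt_of_sq_le (lebChi_sq ?_ _)) _
        exact mul_nonneg (hη _ _) hθ0.le
    have h2 := hm.sub h1
    have h3 := h2.integrable_norm_pow (by norm_num)
    refine (memLp_two_iff_integrable_sq ?_).2 ?_
    · exact h2.aestronglyMeasurable.norm.pow 2
    · refine h3.congr (ae_of_all _ fun ω => ?_)
      change _ ^ 4 = (_ ^ 2) ^ 2
      rw [← pow_mul]; rfl
  · intro p
    refine le_trans (le_of_eq ?_) (h4 p.1 p.2)
    refine integral_congr_ae (ae_of_all _ fun ω => ?_)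
    change (_ ^ 2) ^ 2 = _ ^ 4
    rw [← pow_mul]
  · refine ENNReal.ofReal_le_ofReal ?_
    rw [← Finset.sum_div, ← Finset.mul_sum, ← hd]
    have h1 := leb_sum_eta2 hη hr
    rw [mul_div_cancel₀ _ (by positivity), div_le_div_iff₀ (by positivity) hn']
    calc (16 * κ * ∑ p : Fin n × Fin n, η p.1 p.2 ^ 2) * n
        ≤ (16 * κ * n) * n := by gcongr
      _ = _ := by ring

lemma leb_B1 {Ω : Type*} [MeasurableSpace Ω] (μ : Measure Ω) [IsProbabilityMeasure μ] {n d p : ℕ}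
    (hn : 2 ≤ n) (hdn : d ≤ n ^ 2) (hp : Real.log n ≤ p)
    (W : Ω → Matrix (Fin n) (Fin n) ℂ) (Ws : Fin d → Ω → Matrix (Fin n) (Fin n) ℂ)
    (hid : ∀ s, IdentDistrib (Ws s) W μ μ)
    {η : Matrix (Fin n) (Fin n) ℝ} {θ τ : ℝ} {m : Matrix (Fin n) (Fin n) ℂ}
    (h : ∀ i j, 0 ≤ η i j * θ)
    (hb : μ {ω | τ ^ p < ((lebHerm (lebT η θ m (W ω))) ^ (2 * p)).trace.re}
      ≤ ENNReal.ofReal (2 * n * Real.exp (-(12 * p)))) :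
    μ (⋃ s, {ω | τ ^ p < ((lebHerm (lebT η θ m (Ws s ω))) ^ (2 * p)).trace.re})
      ≤ ENNReal.ofReal (2 / n) := by
  have hn' : (1:ℝ) ≤ n := by exact_mod_cast (by omega : 1 ≤ n)
  have hdn' : (d:ℝ) ≤ n ^ 2 := by exact_mod_cast hdn
  refine (measure_iUnion_fintype_le _ _).trans ?_
  have h1 : ∀ s, μ {ω | τ ^ p < ((lebHerm (lebT η θ m (Ws s ω))) ^ (2 * p)).trace.re}
      ≤ ENNReal.ofReal (2 * n * Real.exp (-(12 * p))) := fun s => by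
    have := (hid s).measure_mem_eq (leb_bad_meas (m := m) h τ p)
    exact this.le.trans hb
  refine (Finset.sum_le_sum fun s _ => h1 s).trans ?_
  rw [Finset.sum_const, Finset.card_univ, Fintype.card_fin, nsmul_eq_mul,
    ← ENNReal.ofReal_natCast, ← ENNReal.ofReal_mul (by positivity)]
  refine ENNReal.ofReal_le_ofReal ?_
  have h2 := leb_n1 hn hp
  calc (d:ℝ) * (2 * n * Real.exp (-(12 * p))) ≤ n ^ 2 * (2 * n * (1 / (n:ℝ) ^ 12)) := by gcongr
    _ = 2 / n ^ 9 := by field_simp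
    _ ≤ 2 / n := by
      have : (n:ℝ) ≤ n ^ 9 := le_self_pow₀ hn' (by norm_num)
      gcongr

lemma leb_B2 {n p : ℕ} (hn : 2 ≤ n) (hp : Real.log n ≤ p) :
    ENNReal.ofReal (2 * n ^ 2 * Real.exp (-(12 * p))) ≤ ENNReal.ofReal (2 / n) := by
  have hn' : (1:ℝ) ≤ n := by exact_mod_cast (by omega : 1 ≤ n)
  refine ENNReal.ofReal_le_ofReal ?_
  have h2 := leb_n1 hn hp
  calc 2 * (n:ℝ) ^ 2 * Real.exp (-(12 * p)) ≤ 2 * (n:ℝ) ^ 2 * (1 / (n:ℝ) ^ 12) := by gcongr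
    _ = 2 / (n:ℝ) ^ 10 := by field_simp
    _ ≤ 2 / (n:ℝ) := by
      have : (n:ℝ) ≤ n ^ 10 := le_self_pow₀ hn' (by norm_num)
      gcongr

lemma leb_bil_of_trace {n p : ℕ} (Z : Matrix (Fin n × Fin n) (Fin n × Fin n) ℂ) {v : ℝ}
    (hv : 0 ≤ v) (hp : 1 ≤ p) (h : ((lebHerm Z) ^ (2 * p)).trace.re ≤ v ^ p) :
    LebBil Z (Real.sqrt v) := by
  have h1 := leb_psd_of_trace (lebHerm_isHermitian Z) hp hv h
  rw [lebHerm_sq, leb_blocks_sub] at h1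
  refine LebBil.of_psd Z (Real.sqrt_nonneg _) ?_
  rw [Real.sq_sqrt hv]
  exact leb_blocks_psd2 h1

lemma leb_det_final {n d p : ℕ} (hn : 2 ≤ n) (hdn : d ≤ n ^ 2) {θ κ K3 Cβ : ℝ} (hθ : 1 ≤ θ)
    (hd : θ ^ 16 = (d:ℝ)) (hsq : Real.sqrt d = θ ^ 8) (hκ : 1 ≤ κ) (hK3 : 1 ≤ K3)
    (hp : Real.log n ≤ p) (hp2 : (p:ℝ) ≤ 2 * θ ^ 2) (hp1 : 1 ≤ p)
    {E0 : ℝ} (hE0 : E0 = K3 + 2 * κ + 8 + 32 * Real.exp 18)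
    (hbig : 3200 * E0 ≤ θ ^ 4)
    (hC : 1 + ((2 * κ + 1) + 640001 * E0 ^ 2 + 800 * (4 * κ + 1)) < Cβ)
    (hpos : 0 < 1 - Cβ / θ ^ 8)
    (η : Matrix (Fin n) (Fin n) ℝ) (hη : ∀ i j, 0 ≤ η i j) (hr : ∀ i, ∑ j, η i j = 1)
    (hc : ∀ j, ∑ i, η i j = 1) (hs : η.sval 1 < K3 / Real.sqrt d)
    (w A : Fin d → Matrix (Fin n) (Fin n) ℂ)
    (η' : Matrix (Fin n) (Fin n) ℝ) (h' : ∀ i j, |η' i j - η i j| ≤ 2 * κ / θ ^ 16 * η i j)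
    (Mb : Matrix (Fin n × Fin n) (Fin n × Fin n) ℂ)
    (hMb : ∀ x y, ‖Mb x y - if x.1 = x.2 ∧ y.1 = y.2 then ((η' x.1 y.1 : ℝ) : ℂ) else 0‖
      ≤ 4 * θ * (2 * n * Real.exp (-(12 * p))))
    (hZ : ((lebHerm (lebM A - Mb)) ^ (2 * p)).trace.re
      ≤ (Real.exp 12 * (p * (4 * (Real.exp 12 * (p * (4 * θ))) ^ 2 / d))) ^ p)
    (hA : n * (1 - (2 * κ + 1) / θ ^ 8) ≤ (d:ℝ)⁻¹ * ∑ s, ∑ i, ∑ j, ‖A s i j‖ ^ 2)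
    (hB : ∑ s, ∑ i, ∑ j, ‖(w s - A s) i j‖ ^ 2 ≤ (4 * κ + 1) * n) :
    ∃ z ∈ (lebM w).charpoly.roots, 1 - Cβ / Real.sqrt d ≤ ‖z‖ := by
  by_contra hcon
  push Not at hcon
  have hθ0 : 0 < θ := by linarith
  have hn0 : 0 < n := by omega
  have he := Real.exp_pos 18
  have hE1 : 11 ≤ E0 := by rw [hE0]; linarith
  have h48 : θ ^ 4 ≤ θ ^ 8 := pow_le_pow_right₀ hθ (by norm_num)
  have h816 : θ ^ 8 ≤ θ ^ 16 := pow_le_pow_right₀ hθ (by norm_num)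
  have hd4 : 4 ≤ d := by
    have : (4:ℝ) ≤ d := by rw [← hd]; linarith
    exact_mod_cast this
  have g1 : LebGap (Matrix.of fun (x y : Fin n × Fin n) =>
      if x.1 = x.2 ∧ y.1 = y.2 then ((η' x.1 y.1 : ℝ) : ℂ) else 0)
      (K3 / θ ^ 8 + 2 * κ / θ ^ 16) := by
    refine leb_mean_gap hn0 η η' hη hr hc (by rw [← hsq]; exact hs) ?_ (by positivity)
      (by positivity) h'
    rw [div_lt_one (by positivity)]
    linarith
  set Mt := (Matrix.of fun (x y : Fin n × Fin n) =>
      if x.1 = x.2 ∧ y.1 = y.2 then ((η' x.1 y.1 : ℝ) : ℂ) else 0) with hMt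
  have b1 : LebBil (Mb - Mt) (n ^ 2 * (4 * θ * (2 * n * Real.exp (-(12 * p))))) :=
    LebBil.of_entries _ (by positivity) fun x y => hMb x y
  have b2 := leb_bil_of_trace (lebM A - Mb) (by positivity) hp1 hZ
  have g2 := (g1.add b1).add b2
  have e : Mt + (Mb - Mt) + (lebM A - Mb) = lebM A := by abel
  rw [e] at g2
  have g3 := g2.mono (leb_n3 hn hθ hd hdn (by linarith) (by linarith) hp hp2)
  rw [← hE0] at g3
  have hfin := leb_det hn0 hd4 w A (fun s => w s - A s) (fun s => by abel)
    (r := 1 - Cβ / θ ^ 8) (ε := E0 / θ ^ 4) (γ := (2 * κ + 1) / θ ^ 8) (κ := 4 * κ + 1)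
    hpos (by positivity)
    (by
      rw [← mul_div_assoc, div_le_iff₀ (by positivity)]; linarith)
    (by
      rw [div_le_iff₀ (by positivity)]
      linarith)
    hA hB g3 (by rw [← hsq]; exact hcon)
  rw [hsq] at hfin
  refine leb_n2 (θ := θ ^ 8) (x := 1)
    (y := (2 * κ + 1) + 640001 * E0 ^ 2 + 800 * (4 * κ + 1)) (by positivity) (by norm_num)
    (by positivity) rfl rfl hC rfl (le_trans (le_of_eq ?_) hfin)
  have e4 : (E0 / θ ^ 4) ^ 2 = E0 ^ 2 / θ ^ 8 := by rw [div_pow, ← pow_mul]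
  rw [e4]; ring
end

section
open scoped ComplexOrder
lemma leb_triv {n d : ℕ} (hn : 0 < n) (w : Fin d → Matrix (Fin n) (Fin n) ℂ) {r : ℝ} (hr : r ≤ 0) :
    ∃ z ∈ (lebM w).charpoly.roots, r ≤ ‖z‖ := by
  have : NeZero n := ⟨hn.ne'⟩
  have hdeg : (lebM w).charpoly.degree ≠ 0 := by
    rw [Matrix.charpoly_degree_eq_dim]
    simp [hn.ne']
  obtain ⟨z, hz⟩ := IsAlgClosed.exists_root _ hdeg
  exact ⟨z, (Polynomial.mem_roots (Matrix.charpoly_monic _).ne_zero).2 hz,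
    hr.trans (norm_nonneg _)⟩

lemma leb_prob {Ω : Type*} [MeasurableSpace Ω] (μ : Measure Ω) [IsProbabilityMeasure μ]
    {S B1 B2 B3 B4 : Set Ω} {n : ℕ} {a C : ℝ} (ha : 0 ≤ a) (hC : 4 + 2 * a ≤ C)
    (h1 : μ B1 ≤ ENNReal.ofReal (2 / n)) (h2 : μ B2 ≤ ENNReal.ofReal (2 / n))
    (h3 : μ B3 ≤ ENNReal.ofReal (a / n)) (h4 : μ B4 ≤ ENNReal.ofReal (a / n))
    (h : ∀ ω, ω ∉ B1 → ω ∉ B2 → ω ∉ B3 → ω ∉ B4 → ω ∈ S) :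
    1 - ENNReal.ofReal (C / n) ≤ μ S := by
  rw [tsub_le_iff_right]
  have hsub : (Set.univ : Set Ω) ⊆ S ∪ (B1 ∪ B2 ∪ (B3 ∪ B4)) := by
    intro ω _
    by_contra hh
    simp only [Set.mem_union, not_or] at hh
    exact hh.1 (h ω hh.2.1.1 hh.2.1.2 hh.2.2.1 hh.2.2.2)
  calc (1:ℝ≥0∞) = μ Set.univ := measure_univ.symm
    _ ≤ μ (S ∪ (B1 ∪ B2 ∪ (B3 ∪ B4))) := measure_mono hsub
    _ ≤ μ S + (μ B1 + μ B2 + (μ B3 + μ B4)) := by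
      refine (measure_union_le _ _).trans (add_le_add le_rfl ?_)
      refine (measure_union_le _ _).trans ?_
      exact add_le_add (measure_union_le _ _) (measure_union_le _ _)
    _ ≤ μ S + (ENNReal.ofReal (2 / n) + ENNReal.ofReal (2 / n)
        + (ENNReal.ofReal (a / n) + ENNReal.ofReal (a / n))) := by gcongr
    _ = μ S + ENNReal.ofReal ((4 + 2 * a) / n) := by
      rw [← ENNReal.ofReal_add (by positivity) (by positivity),
        ← ENNReal.ofReal_add (by positivity) (by positivity),
        ← ENNReal.ofReal_add (by positivity) (by positivity)]
      congr 2; ring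
    _ ≤ μ S + ENNReal.ofReal (C / n) := by gcongr

lemma leb_A_good {n d : ℕ} (hn : 0 < n) {η : Matrix (Fin n) (Fin n) ℝ}
    (hr : ∀ i, ∑ j, η i j = 1) {θ κ : ℝ} (hθ : 1 ≤ θ) (hd : θ ^ 16 = (d:ℝ)) (hκ : 0 ≤ κ)
    (A : Fin d → Matrix (Fin n) (Fin n) ℂ) (q : Fin n × Fin n → ℝ)
    (hq : ∀ i j, η i j - 2 * κ * η i j / θ ^ 16 ≤ q (i, j))
    (h : ¬ (n * θ ^ 8 ≤ |∑ s, ∑ p : Fin n × Fin n, ‖A s p.1 p.2‖ ^ 2 - d * ∑ p, q p|)) :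
    n * (1 - (2 * κ + 1) / θ ^ 8) ≤ (d:ℝ)⁻¹ * ∑ s, ∑ i, ∑ j, ‖A s i j‖ ^ 2 := by
  have hθ0 : 0 < θ := by linarith
  rw [not_le, abs_lt] at h
  have h1 := h.1
  have e1 : ∑ s, ∑ p : Fin n × Fin n, ‖A s p.1 p.2‖ ^ 2 = ∑ s, ∑ i, ∑ j, ‖A s i j‖ ^ 2 :=
    Finset.sum_congr rfl fun s _ => Fintype.sum_prod_type _
  rw [e1] at h1
  have hq2 : (n:ℝ) * (1 - 2 * κ / θ ^ 16) ≤ ∑ p, q p := by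
    rw [← leb_sum_eta hr, Finset.sum_mul]
    refine Finset.sum_le_sum fun p _ => le_trans (le_of_eq ?_) (hq p.1 p.2)
    ring
  rw [← hd] at h1 ⊢
  rw [inv_mul_eq_div, le_div_iff₀ (by positivity)]
  have h2 : θ ^ 16 * ((n:ℝ) * (1 - 2 * κ / θ ^ 16)) ≤ θ ^ 16 * ∑ p, q p :=
    mul_le_mul_of_nonneg_left hq2 (by positivity)
  have e2 : θ ^ 16 * ((n:ℝ) * (1 - 2 * κ / θ ^ 16)) = n * θ ^ 16 - n * (2 * κ) := by
    field_simp
  have e3 : (n:ℝ) * (1 - (2 * κ + 1) / θ ^ 8) * θ ^ 16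
      = n * θ ^ 16 - n * (2 * κ) * θ ^ 8 - n * θ ^ 8 := by
    field_simp; ring
  have h3 : (n:ℝ) * (2 * κ) * 1 ≤ n * (2 * κ) * θ ^ 8 :=
    mul_le_mul_of_nonneg_left (one_le_pow₀ hθ) (by positivity)
  rw [e3]; rw [e2] at h2
  linarith

lemma leb_B_good {n d : ℕ} {η : Matrix (Fin n) (Fin n) ℝ}
    (hr : ∀ i, ∑ j, η i j = 1) {θ κ : ℝ} (hθ : 1 ≤ θ) (hd : θ ^ 16 = (d:ℝ))
    (B : Fin d → Matrix (Fin n) (Fin n) ℂ) (q : Fin n × Fin n → ℝ)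
    (hq : ∀ i j, q (i, j) ≤ 4 * κ * η i j / θ ^ 16)
    (h : ¬ ((n:ℝ) ≤ |∑ s, ∑ p : Fin n × Fin n, ‖B s p.1 p.2‖ ^ 2 - d * ∑ p, q p|)) :
    ∑ s, ∑ i, ∑ j, ‖B s i j‖ ^ 2 ≤ (4 * κ + 1) * n := by
  have hθ0 : 0 < θ := by linarith
  rw [not_le, abs_lt] at h
  have h1 := h.2
  have e1 : ∑ s, ∑ p : Fin n × Fin n, ‖B s p.1 p.2‖ ^ 2 = ∑ s, ∑ i, ∑ j, ‖B s i j‖ ^ 2 :=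
    Finset.sum_congr rfl fun s _ => Fintype.sum_prod_type _
  rw [e1, ← hd] at h1
  have hq2 : ∑ p, q p ≤ (n:ℝ) * (4 * κ / θ ^ 16) := by
    rw [← leb_sum_eta hr, Finset.sum_mul]
    refine Finset.sum_le_sum fun p _ => le_trans (hq p.1 p.2) (le_of_eq ?_)
    ring
  have h2 : θ ^ 16 * ∑ p, q p ≤ θ ^ 16 * ((n:ℝ) * (4 * κ / θ ^ 16)) :=
    mul_le_mul_of_nonneg_left hq2 (by positivity)
  have e2 : θ ^ 16 * ((n:ℝ) * (4 * κ / θ ^ 16)) = 4 * κ * n := by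
    field_simp
  rw [e2] at h2
  linarith

lemma leb_core {K K' β κ K3 E0 Cβ : ℝ} (hK : 0 < K)
    (hκ : κ = 1 + (K * (2:ℝ) ^ β) ^ 2 + (K * (18:ℝ) ^ β) ^ 18) (hK3 : 1 ≤ K3)
    (hE0 : E0 = K3 + 2 * κ + 8 + 32 * Real.exp 18)
    (hC : 1 + ((2 * κ + 1) + 640001 * E0 ^ 2 + 800 * (4 * κ + 1)) < Cβ)
    (hC2 : (3200 * E0) ^ 2 ≤ Cβ) (hC3 : 4 + 2 * (16 * κ) ≤ Cβ)
    {n d : ℕ} (hn : 2 ≤ n) (hdn : d ≤ n ^ 2) (hlog : Real.log n ^ 8 ≤ (d:ℝ))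
    {Ω : Type} [MeasurableSpace Ω] (μ : Measure Ω) [IsProbabilityMeasure μ]
    (η : Matrix (Fin n) (Fin n) ℝ) (W : Ω → Matrix (Fin n) (Fin n) ℂ)
    (Ws : Fin d → Ω → Matrix (Fin n) (Fin n) ℂ)
    (hP : PaperAssumptions μ n K K' β η W)
    (hη : ∀ i j, 0 ≤ η i j) (hr : ∀ i, ∑ j, η i j = 1) (hc : ∀ j, ∑ i, η i j = 1)
    (hs : Matrix.sval η 1 < K3 / Real.sqrt d)
    (hi : iIndepFun Ws μ) (hid : ∀ s, IdentDistrib (Ws s) W μ μ) :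
    1 - ENNReal.ofReal (Cβ / n) ≤
      μ {ω | ∃ z ∈ (lebM (fun s => Ws s ω)).charpoly.roots, 1 - Cβ / Real.sqrt d ≤ ‖z‖} := by
  obtain ⟨θ, p, hθ, hd, hp, hp2, hp1, hsq⟩ := leb_n4 hn hlog
  have hθ0 : 0 < θ := by linarith
  have hn0 : 0 < n := by omega
  have hκ1 : 1 ≤ κ := by
    have h1 : 0 ≤ (K * (2:ℝ) ^ β) ^ 2 := by positivity
    have h2 : 0 ≤ (K * (18:ℝ) ^ β) ^ 18 := by positivity
    rw [hκ]; linarith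
  by_cases hpos : 1 - Cβ / θ ^ 8 ≤ 0
  · have : {ω | ∃ z ∈ (lebM (fun s => Ws s ω)).charpoly.roots, 1 - Cβ / Real.sqrt d ≤ ‖z‖}
        = Set.univ := by
      refine Set.eq_univ_of_forall fun ω => leb_triv hn0 _ ?_
      rw [hsq]; exact hpos
    rw [this, measure_univ]
    exact tsub_le_self
  rw [not_le] at hpos
  have hbig : 3200 * E0 ≤ θ ^ 4 := by
    have h1 : Cβ < θ ^ 8 := by
      have := (div_lt_one (by positivity : 0 < θ ^ 8)).1 (by linarith : Cβ / θ ^ 8 < 1)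
      exact this
    have h2 : (3200 * E0) ^ 2 ≤ (θ ^ 4) ^ 2 := by
      have e : (θ ^ 4) ^ 2 = θ ^ 8 := by rw [← pow_mul]
      rw [e]; linarith
    exact (abs_le_of_sq_le_sq' h2 (by positivity)).2
  have hd0 : 0 < d := by
    have : (0:ℝ) < d := by rw [← hd]; positivity
    exact_mod_cast this
  have hWm : AEMeasurable W μ := (hid ⟨0, hd0⟩).aemeasurable_snd
  have hWe : ∀ q : Fin n × Fin n, AEMeasurable (fun ω => W ω q.1 q.2) μ := fun q =>
    (hP.entries_memLp q.1 q.2 1).aestronglyMeasurable.aemeasurable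
  have hηθ : ∀ i j, 0 ≤ η i j * θ := fun i j => mul_nonneg (hη i j) hθ0.le
  set m : Matrix (Fin n) (Fin n) ℂ :=
    Matrix.of fun i j => ∫ ω, lebChi (η i j * θ) (W ω i j) ∂μ with hm
  have hm' : ∀ i j, m i j = ∫ ω, lebChi (η i j * θ) (W ω i j) ∂μ := fun i j => rfl
  have htr := fun i j => leb_trunc μ (fun ω => W ω i j) (hP.entries_memLp i j)
    (hP.entries_centered i j) (κ := κ) (hP.entries_variance i j) hκ1
    (by
      have h1 := leb_moment 2 (by norm_num) (integral_nonneg fun ω => by positivity)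
        (hP.moment_growth 2 (by norm_num) i j)
      refine h1.trans (mul_le_mul_of_nonneg_right ?_ (sq_nonneg _))
      have h2 : 0 ≤ (K * (18:ℝ) ^ β) ^ 18 := by positivity
      rw [hκ]; push_cast; linarith)
    (by
      have h1 := leb_moment 18 (by norm_num) (integral_nonneg fun ω => by positivity)
        (hP.moment_growth 18 (by norm_num) i j)
      refine h1.trans (mul_le_mul_of_nonneg_right ?_ (pow_nonneg (hη i j) _))
      have h2 : 0 ≤ (K * (2:ℝ) ^ β) ^ 2 := by positivity
      rw [hκ]; push_cast; linarith)
    hθ (hm' i j)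
  have hfirst := leb_first μ W hWe hP.entries_indep η hη hr hc hθ0 m hm' p hp1
  have hτ0 : (0:ℝ) < Real.exp 12 * (p * (4 * θ)) := by
    have : (1:ℝ) ≤ p := by exact_mod_cast hp1
    positivity
  have hdet := fun ω (A : Fin d → Matrix (Fin n) (Fin n) ℂ) η' h' Mb hMb hZ hA hB =>
    leb_det_final (p := p) hn hdn hθ hd hsq hκ1 hK3 hp hp2 hp1 hE0 hbig hC hpos η hη hr hc hs
      (fun s => Ws s ω) A η' h' Mb hMb hZ hA hB
  set τ : ℝ := Real.exp 12 * (p * (4 * θ)) with hτ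
  set Mb : Matrix (Fin n × Fin n) (Fin n × Fin n) ℂ := Matrix.of fun x y =>
    ∫ ω, (lebA η θ m τ p (W ω) ⊗ₖ (lebA η θ m τ p (W ω)).map (starRingEnd ℂ)) x y ∂μ with hMb
  have hsecond := leb_second μ hd0 Ws (fun s => (hid s).aemeasurable_fst) hi
    (lebA η θ m τ p) (lebA_BMM hηθ τ p) hτ0
    (fun w => (lebA_psd hτ0.le hp1 w).1) (fun w => (lebA_psd hτ0.le hp1 w).2) Mb
    (by
      intro s a b
      have hmeas : Measurable fun w : Matrix (Fin n) (Fin n) ℂ =>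
          (lebA η θ m τ p w ⊗ₖ (lebA η θ m τ p w).map (starRingEnd ℂ)) a b := by
        have h1 := (lebA_BMM (m := m) hηθ τ p a.1 b.1).1
        have h2 := (lebA_BMM (m := m) hηθ τ p a.2 b.2).1
        exact h1.mul (Complex.continuous_conj.measurable.comp h2)
      exact ((hid s).comp hmeas).integral_eq)
    p hp1
  refine leb_prob μ (a := 16 * κ) (by positivity) hC3
    (leb_B1 μ hn hdn hp W Ws hid hηθ hfirst) (hsecond.trans (leb_B2 hn hp))
    (leb_B3 μ hn0 W Ws hWe hP.entries_indep hi hid hη hr hθ hd (by linarith) m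
      (fun i j => (htr i j).2.2.2.2.2))
    (leb_B4 μ hn0 W Ws hP.entries_memLp hP.entries_indep hi hid hη hr hθ hd (by linarith) m
      (fun i j => (htr i j).2.2.1)) ?_
  intro ω h1 h2 h3 h4
  have hAT : (fun s => lebA η θ m τ p (Ws s ω)) = fun s => lebT η θ m (Ws s ω) := by
    funext s
    unfold lebA
    rw [if_neg]
    exact fun hh => h1 (Set.mem_iUnion.2 ⟨s, hh⟩)
  refine hdet ω (fun s => lebT η θ m (Ws s ω))
    (Matrix.of fun i j => ∫ ω, ‖lebT η θ m (W ω) i j‖ ^ 2 ∂μ) ?_ Mb ?_ ?_ ?_ ?_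
  · intro i j
    have a1 : η i j - 2 * κ * η i j / θ ^ 16 ≤ ∫ ω, ‖lebT η θ m (W ω) i j‖ ^ 2 ∂μ :=
      (htr i j).2.2.2.1
    have a2 : ∫ ω, ‖lebT η θ m (W ω) i j‖ ^ 2 ∂μ ≤ η i j := (htr i j).2.2.2.2.1
    have e : 2 * κ * η i j / θ ^ 16 = 2 * κ / θ ^ 16 * η i j := by ring
    rw [e] at a1
    rw [Matrix.of_apply, abs_le]
    have a3 : 0 ≤ 2 * κ / θ ^ 16 * η i j := mul_nonneg (by positivity) (hη i j)
    constructor <;> linarith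
  · intro x y
    have a1 := leb_A_mean μ W hWm hη (leb_eta_le hη hr) hθ0.le (fun i j => (htr i j).1) τ p
      (by positivity) hfirst x y
    rw [leb_T_mean μ W hWm hP.entries_indep hηθ hm' x y] at a1
    exact a1
  · rw [Set.mem_setOf_eq, not_lt] at h2
    have := h2
    rw [hAT] at this
    exact this
  · exact leb_A_good hn0 hr hθ hd (by linarith) _ _ (fun i j => (htr i j).2.2.2.1) h3
  · exact leb_B_good hr hθ hd _ _ (fun i j => (htr i j).2.1) h4
end

/-- Largest eigenvalue bound (Section 3 of the paper): under Assumptions 1–4 with `η` doubly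
stochastic, `s_2(η) ≤ K''/√d` and `d ≥ (log n)^8`, with probability at least `1 − C_β/n`,
the matrix `M_Φ = (1/d) ∑_s W_s ⊗ conj(W_s)` has an eigenvalue (a root of its characteristic
polynomial) of modulus at least `1 − C_β/√d`. -/
theorem largest_eigenvalue_bound :
    ∀ K K' K'' β : ℝ, 0 < K → 0 < K' → 0 < K'' → 0 ≤ β →
    ∃ Cβ : ℝ, 0 < Cβ ∧
    ∀ n d : ℕ, 2 ≤ n → d ≤ n ^ 2 → Real.log n ^ 8 ≤ (d : ℝ) →
    ∀ (Ω : Type) (_ : MeasurableSpace Ω) (μ : Measure Ω), IsProbabilityMeasure μ →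
    ∀ (η : Matrix (Fin n) (Fin n) ℝ) (W : Ω → Matrix (Fin n) (Fin n) ℂ)
      (Ws : Fin d → Ω → Matrix (Fin n) (Fin n) ℂ),
      PaperAssumptions μ n K K' β η W →
      (∀ i j, 0 ≤ η i j) →
      (∀ i, ∑ j, η i j = 1) →
      (∀ j, ∑ i, η i j = 1) →
      Matrix.sval η 1 ≤ K'' / Real.sqrt d →
      iIndepFun Ws μ →
      (∀ s, IdentDistrib (Ws s) W μ μ) →
      1 - ENNReal.ofReal (Cβ / n) ≤
        μ {ω | ∃ z ∈ ((d : ℂ)⁻¹ • ∑ s,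
              (Ws s ω ⊗ₖ (Ws s ω).map (starRingEnd ℂ))).charpoly.roots,
            1 - Cβ / Real.sqrt d ≤ ‖z‖} := by
  intro K K' K'' β hK hK' hK'' hβ
  obtain ⟨κ, hκ⟩ : ∃ κ : ℝ, κ = 1 + (K * (2:ℝ) ^ β) ^ 2 + (K * (18:ℝ) ^ β) ^ 18 := ⟨_, rfl⟩
  obtain ⟨E0, hE0⟩ : ∃ E0 : ℝ, E0 = (K'' + 1) + 2 * κ + 8 + 32 * Real.exp 18 := ⟨_, rfl⟩
  have hκ0 : 0 < κ := by rw [hκ]; positivity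
  have e0 := sq_nonneg E0
  have hCe : (3200 * E0) ^ 2 = 10240000 * E0 ^ 2 := by ring
  refine ⟨1 + ((2 * κ + 1) + 640001 * E0 ^ 2 + 800 * (4 * κ + 1)) + 1 + (3200 * E0) ^ 2
    + 4 + 32 * κ, by positivity, ?_⟩
  intro n d hn hdn hlog Ω _ μ _ η W Ws hP hη hr hc hs hi hid
  have hsd : 0 < Real.sqrt d := by
    refine Real.sqrt_pos.2 (lt_of_lt_of_le ?_ hlog)
    exact pow_pos (Real.log_pos (by exact_mod_cast (by omega : 1 < n))) _
  exact leb_core (K3 := K'' + 1) hK hκ (by linarith) hE0 (by rw [hCe]; linarith)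
    (by rw [hCe]; linarith)
    (by rw [hCe]; linarith) hn hdn hlog μ η W Ws hP hη hr hc
    (hs.trans_lt (div_lt_div_of_pos_right (by linarith) hsd)) hi hid
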